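/- For all integers m ≥ 1 and n ≥ 0, the number of rooted simple 2-connected triangulations of an (m+2)-gon with n interior vertices equals φ_{m,n} = 2(2m+1)!(4n+2m−1)! / ((m−1)!(m+1)!n!(3n+2m+1)!). -/

import Mathlib

/-! **Statement 3.** Brown's formula: for all `m ≥ 1` and `n ≥ 0`, the number of rooted simple
2-connected triangulations of an `(m+2)`-gon with `n` interior vertices equals
`φ_{m,n} = 2(2m+1)!(4n+2m−1)! / ((m−1)!(m+1)!n!(3n+2m+1)!)`.

Triangulations are encoded as rooted combinatorial maps on darts: `σ` is the rotation of the
darts around each vertex (recording the planar embedding), `α` is the fixed-point-free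
involution pairing the two darts of each edge, and `root` is the root dart.  Vertices are the
orbits of `σ`, edges the orbits of `α`, and faces the orbits of `φ = σ * α`.  A triangulation
of the `(m+2)`-gon with `n` interior vertices has `n + m + 2` vertices and (by Euler's formula)
`3n + 2m + 1` edges; requiring one face of degree `m + 2` and all other faces of degree `3`
forces genus `0`, i.e. planarity.  Rooted triangulations are counted up to root-preserving
isomorphism of maps. -/

/-- `d'` lies on the `g`-orbit of `d`. -/
def SameOrbit {X : Type} (g : Equiv.Perm X) (d d' : X) : Prop := ∃ k : ℤ, (g ^ k) d = d'

/-- The number of orbits of a permutation. -/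
noncomputable def numOrbits {X : Type} (g : Equiv.Perm X) : ℕ :=
  Set.ncard (Set.range fun d : X => {x | SameOrbit g d x})

/-- The data of a rooted combinatorial map on `2 * (3n + 2m + 1)` darts. -/
structure RootedMapData (m n : ℕ) where
  /-- rotation of the darts around each vertex -/
  σ : Equiv.Perm (Fin (2 * (3 * n + 2 * m + 1)))
  /-- pairing of the two darts of each edge -/
  α : Equiv.Perm (Fin (2 * (3 * n + 2 * m + 1)))
  /-- the root dart -/
  root : Fin (2 * (3 * n + 2 * m + 1))

/-- The face permutation of a combinatorial map. -/
def RootedMapData.φ {m n : ℕ} (T : RootedMapData m n) :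
    Equiv.Perm (Fin (2 * (3 * n + 2 * m + 1))) := T.σ * T.α

/-- `T` is a rooted simple 2-connected triangulation of an `(m+2)`-gon with `n` interior
vertices. -/
def IsRootedTriangulation {m n : ℕ} (T : RootedMapData m n) : Prop :=
  -- `α` is a fixed-point-free involution: darts pair up into edges
  (∀ d, T.α d ≠ d) ∧ (∀ d, T.α (T.α d) = d) ∧
  -- the map is connected
  (∀ d d', ∃ g ∈ Subgroup.closure ({T.σ, T.α} : Set (Equiv.Perm (Fin (2 * (3 * n + 2 * m + 1))))),
      g d = d') ∧
  -- there are `n + m + 2` vertices (`n` interior ones and `m + 2` on the boundary)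
  numOrbits T.σ = n + m + 2 ∧
  -- one face of degree `m + 2`, and `2n + m` triangular faces (forcing genus 0)
  T.φ.cycleType = (m + 2) ::ₘ Multiset.replicate (2 * n + m) 3 ∧
  -- the root dart lies on the distinguished outer face of degree `m + 2`
  (T.φ.cycleOf T.root).support.card = m + 2 ∧
  -- simple: no loops
  (∀ d, ¬ SameOrbit T.σ d (T.α d)) ∧
  -- simple: no parallel edges
  (∀ d d', SameOrbit T.σ d d' → SameOrbit T.σ (T.α d) (T.α d') → d' = d ∨ d' = T.α d) ∧
  -- 2-connected: deleting the vertex (σ-orbit) of any dart `v` leaves the map connected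
  (∀ v d d' : Fin (2 * (3 * n + 2 * m + 1)), ¬ SameOrbit T.σ v d → ¬ SameOrbit T.σ v d' →
    Relation.ReflTransGen
      (fun a b => ¬ SameOrbit T.σ v a ∧ ¬ SameOrbit T.σ v b ∧ (b = T.σ a ∨ b = T.α a)) d d')

/-- Root-preserving isomorphism of rooted maps. -/
def MapIso {m n : ℕ} (T T' : RootedMapData m n) : Prop :=
  ∃ π : Equiv.Perm (Fin (2 * (3 * n + 2 * m + 1))),
    (∀ d, π (T.σ d) = T'.σ (π d)) ∧ (∀ d, π (T.α d) = T'.α (π d)) ∧ π T.root = T'.root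

namespace Brown
open Equiv Equiv.Perm

section orbits
variable {X : Type}

/-- invariant predicates -/
def Inv (s a : Perm X) (S : X → Prop) : Prop := (∀ d, S (s d) ↔ S d) ∧ (∀ d, S (a d) ↔ S d)

def Jrel (s a : Perm X) (x y : X) : Prop := ∀ S : X → Prop, Inv s a S → (S x ↔ S y)

def J (s a : Perm X) : Setoid X where
  r := Jrel s a
  iseqv := ⟨fun _ _ _ => Iff.rfl, fun h S hS => (h S hS).symm,
    fun h h' S hS => (h S hS).trans (h' S hS)⟩

theorem Jrel.refl (s a : Perm X) (x : X) : Jrel s a x x := fun _ _ => Iff.rfl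
theorem Jrel.symm {s a : Perm X} {x y : X} (h : Jrel s a x y) : Jrel s a y x :=
  fun S hS => (h S hS).symm
theorem Jrel.trans {s a : Perm X} {x y z : X} (h : Jrel s a x y) (h' : Jrel s a y z) :
    Jrel s a x z := fun S hS => (h S hS).trans (h' S hS)

noncomputable def K (s a : Perm X) : ℕ := Nat.card (Quotient (J s a))
noncomputable def cyc (g : Perm X) : ℕ := K g 1

theorem inv_sc (g : Perm X) (x : X) : Inv g 1 (fun d => g.SameCycle x d) :=
  ⟨fun d => sameCycle_apply_right, fun _ => Iff.rfl⟩

theorem inv_J (s a : Perm X) (x : X) : Inv s a (fun d => Jrel s a x d) := by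
  constructor
  · intro d
    refine forall_congr' fun S => forall_congr' fun hS => ?_
    rw [hS.1]
  · intro d
    refine forall_congr' fun S => forall_congr' fun hS => ?_
    rw [hS.2]

theorem inv_zpow {g : Perm X} {S : X → Prop} (hS : ∀ d, S (g d) ↔ S d) (k : ℤ) (x : X) :
    S ((g ^ k) x) ↔ S x := by
  induction k using Int.induction_on with
  | zero => simp
  | succ k ih => rw [add_comm, zpow_add, zpow_one, Perm.mul_apply, hS, ih]
  | pred k ih =>
    rw [← ih, ← hS, ← Perm.mul_apply, ← zpow_one_add]
    congr! 3
    ring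

theorem sc_iff {g : Perm X} {x y : X} : g.SameCycle x y ↔ Jrel g 1 x y := by
  constructor
  · rintro ⟨k, rfl⟩ S hS
    exact (inv_zpow hS.1 k x).symm
  · intro h
    exact (h _ (inv_sc g x)).1 (SameCycle.refl _ _)

theorem sc_J {s a : Perm X} {x y : X} (h : s.SameCycle x y) : Jrel s a x y := by
  intro S hS
  exact sc_iff.1 h S ⟨hS.1, fun _ => Iff.rfl⟩

theorem J_σ (s a : Perm X) (x : X) : Jrel s a x (s x) := fun _ hS => (hS.1 x).symm
theorem J_α (s a : Perm X) (x : X) : Jrel s a x (a x) := fun _ hS => (hS.2 x).symm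

theorem inv_of_forward [Finite X] {g : Perm X} {S : X → Prop} (h : ∀ d, S d → S (g d)) :
    ∀ d, S (g d) ↔ S d := by
  intro d
  refine ⟨fun hd => ?_, h d⟩
  have h2 : ∀ k : ℕ, ∀ d, S d → S ((g ^ k) d) := by
    intro k
    induction k with
    | zero => intro d hd; simpa using hd
    | succ k ih => intro d hd; rw [pow_succ]; exact ih _ (h _ hd)
  obtain ⟨k, hk, hk2⟩ := (isOfFinOrder_of_finite g).exists_pow_eq_one
  have := h2 (k-1) _ hd
  rw [← Perm.mul_apply, ← pow_succ, Nat.sub_add_cancel hk, hk2] at this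
  exact this

theorem sc_forward [Finite X] {g : Perm X} {x y : X} (h : g.SameCycle x y) (S : X → Prop)
    (hS : ∀ d, S d → S (g d)) (hx : S x) : S y :=
  (sc_iff.1 h S ⟨inv_of_forward hS, fun _ => Iff.rfl⟩).1 hx

/-- generic merging -/
def MergeAt (s a s' a' : Perm X) (p q : X) : Prop :=
  ∀ S, Inv s' a' S ↔ (Inv s a S ∧ (S p ↔ S q))

theorem MergeAt.iff {s a s' a' : Perm X} {p q : X} (h : MergeAt s a s' a' p q) (x y : X) :
    Jrel s' a' x y ↔ Jrel s a x y ∨ (Jrel s a x p ∧ Jrel s a q y) ∨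
      (Jrel s a x q ∧ Jrel s a p y) := by
  constructor
  · intro hxy
    have hI : Inv s a (fun z => Jrel s a x z ∨ (Jrel s a x p ∧ Jrel s a q z) ∨
      (Jrel s a x q ∧ Jrel s a p z)) := by
      have h1 := inv_J s a x
      have h2 := inv_J s a p
      have h3 := inv_J s a q
      constructor
      · intro d; simp only [h1.1 d, h2.1 d, h3.1 d]
      · intro d; simp only [h1.2 d, h2.2 d, h3.2 d]
    have hI' := (h _).2 ⟨hI, ?_⟩
    · exact (hxy _ hI').1 (Or.inl (Jrel.refl _ _ _))
    · constructor
      · rintro (h1 | ⟨h1, h2⟩ | ⟨h1, h2⟩)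
        · exact Or.inr (Or.inl ⟨h1, Jrel.refl _ _ _⟩)
        · exact Or.inr (Or.inl ⟨h1, Jrel.refl _ _ _⟩)
        · exact Or.inl h1
      · rintro (h1 | ⟨h1, h2⟩ | ⟨h1, h2⟩)
        · exact Or.inr (Or.inr ⟨h1, Jrel.refl _ _ _⟩)
        · exact Or.inl h1
        · exact Or.inr (Or.inr ⟨h1, Jrel.refl _ _ _⟩)
  · intro hxy S hS
    obtain ⟨h1, h2⟩ := (h S).1 hS
    rcases hxy with h3 | ⟨h3, h4⟩ | ⟨h3, h4⟩
    · exact h3 S h1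
    · rw [h3 S h1, h2, h4 S h1]
    · rw [h3 S h1, ← h2, h4 S h1]

theorem card_merge [Finite X] (R R' : Setoid X) (a b : X) (h : ¬ R a b)
    (hm : ∀ x y, R' x y ↔ R x y ∨ (R x a ∧ R b y) ∨ (R x b ∧ R a y)) :
    Nat.card (Quotient R') + 1 = Nat.card (Quotient R) := by
  classical
  have hle : ∀ x y, R x y → R' x y := fun x y hxy => (hm x y).2 (Or.inl hxy)
  let f : Quotient R → Quotient R' := Quotient.map id (fun x y hxy => hle x y hxy)
  have hinj : Set.InjOn f {Quotient.mk R b}ᶜ := by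
    intro q hq q' hq' hqq
    induction q using Quotient.inductionOn with | _ x
    induction q' using Quotient.inductionOn with | _ y
    have hx : ¬ R x b := fun hh => hq (Quotient.sound hh)
    have hy : ¬ R y b := fun hh => hq' (Quotient.sound hh)
    have : R' x y := Quotient.exact hqq
    rcases (hm x y).1 this with h1 | ⟨h1, h2⟩ | ⟨h1, h2⟩
    · exact Quotient.sound h1
    · exact absurd (R.symm h2) hy
    · exact absurd h1 hx
  have himg : f '' {Quotient.mk R b}ᶜ = Set.univ := by
    ext q
    simp only [Set.mem_univ, iff_true]
    induction q using Quotient.inductionOn with | _ x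
    by_cases hx : R x b
    · refine ⟨Quotient.mk R a, ?_, ?_⟩
      · intro hh
        exact h (Quotient.exact hh)
      · apply Quotient.sound
        exact (hm a x).2 (Or.inr (Or.inl ⟨R.refl _, R.symm hx⟩))
    · exact ⟨Quotient.mk R x, fun hh => hx (Quotient.exact hh), rfl⟩
  have h1 := Set.ncard_image_of_injOn hinj
  rw [himg, Set.ncard_univ] at h1
  have h2 := Set.ncard_add_ncard_compl ({Quotient.mk R b} : Set (Quotient R))
  rw [Set.ncard_singleton] at h2
  omega

theorem MergeAt.K_eq [Finite X] {s a s' a' : Perm X} {p q : X} (h : MergeAt s a s' a' p q)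
    (hn : ¬ Jrel s a p q) : K s' a' + 1 = K s a :=
  card_merge (J s a) (J s' a') p q hn h.iff

theorem K_congr {s a s' a' : Perm X} (h : ∀ x y, Jrel s a x y ↔ Jrel s' a' x y) :
    K s a = K s' a' := by
  have : J s a = J s' a' := Setoid.ext h
  unfold K; rw [this]

theorem MergeAt.K_eq_same {s a s' a' : Perm X} {p q : X} (h : MergeAt s a s' a' p q)
    (hn : Jrel s a p q) : K s' a' = K s a := by
  apply K_congr
  intro x y
  rw [h.iff]
  constructor
  · rintro (h1 | ⟨h1, h2⟩ | ⟨h1, h2⟩)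
    · exact h1
    · exact (h1.trans hn).trans h2
    · exact (h1.trans hn.symm).trans h2
  · exact Or.inl

theorem MergeAt.mono {g g' : Perm X} {p q : X} (h : MergeAt g 1 g' 1 p q) (a : Perm X) :
    MergeAt g a g' a p q := by
  intro S
  have := h S
  simp only [Inv, Perm.one_apply, iff_self, implies_true, and_true] at this ⊢
  rw [this]; tauto

variable [DecidableEq X]

theorem sc_swap_of_not [Finite X] {g : Perm X} {a b : X} (h : ¬ g.SameCycle a b) :
    (swap a b * g).SameCycle a b := by
  -- minimal period
  have hex : ∃ k : ℕ, 0 < k ∧ (g ^ k) a = a := by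
    obtain ⟨k, hk, hk2⟩ := (isOfFinOrder_of_finite g).exists_pow_eq_one
    exact ⟨k, hk, by rw [hk2]; rfl⟩
  classical
  obtain ⟨hk, hk2⟩ := Nat.find_spec hex
  have hmin := fun j => @Nat.find_min _ _ hex j
  set k := Nat.find hex
  have key : ∀ j, j < k → ((swap a b * g) ^ j) a = (g ^ j) a := by
    intro j
    induction j with
    | zero => simp
    | succ j ih =>
      intro hj
      rw [pow_succ', Perm.mul_apply, ih (by omega), Perm.mul_apply, ← Perm.mul_apply g, ← pow_succ']
      apply swap_apply_of_ne_of_ne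
      · intro hh; exact hmin (j+1) hj ⟨by omega, hh⟩
      · intro hh; exact h ⟨(j+1 : ℕ), by rw [zpow_natCast]; exact hh⟩
  refine ⟨(k : ℕ), ?_⟩
  rw [zpow_natCast]
  obtain ⟨j, hj⟩ : ∃ j, k = j + 1 := ⟨k - 1, by omega⟩
  rw [hj, pow_succ', Perm.mul_apply, key j (by omega), Perm.mul_apply, ← Perm.mul_apply g,
    ← pow_succ', ← hj, hk2, swap_apply_left]

theorem not_sc_swap [Finite X] {g : Perm X} {a b : X} (hne : a ≠ b) (h : g.SameCycle a b) :
    ¬ (swap a b * g).SameCycle a b := by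
  classical
  have hex : ∃ k : ℕ, (g ^ k) a = b := by
    obtain ⟨k, hk⟩ := h.exists_nat_pow_eq
    exact ⟨k, hk⟩
  have hk := Nat.find_spec hex
  have hmin := fun j => @Nat.find_min _ _ hex j
  set k := Nat.find hex
  have hk0 : k ≠ 0 := by
    intro h0; rw [h0] at hk; exact hne (by simpa using hk)
  intro hs
  have := sc_forward hs (fun d => ∃ j < k, (g ^ j) a = d) ?_ ⟨0, by omega, rfl⟩
  · obtain ⟨j, hj, hj2⟩ := this
    exact hmin j hj hj2
  · rintro d ⟨j, hj, rfl⟩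
    rw [Perm.mul_apply, ← Perm.mul_apply g, ← pow_succ']
    by_cases hjk : j + 1 = k
    · refine ⟨0, by omega, ?_⟩
      rw [hjk, hk, swap_apply_right]; rfl
    · by_cases hja : (g ^ (j+1)) a = a
      · exfalso
        -- then period j+1 < k, so g^(k-(j+1)) a = b
        have : (g ^ (k - (j+1))) a = b := by
          conv_rhs => rw [← hk, ← Nat.sub_add_cancel (show j + 1 ≤ k by omega), pow_add,
            Perm.mul_apply, hja]
        exact hmin _ (by omega) this
      · refine ⟨j+1, by omega, ?_⟩
        rw [swap_apply_of_ne_of_ne hja]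
        intro hh; exact hmin (j+1) (by omega) hh

theorem inv_swap_mul {g : Perm X} {a b : X} {S : X → Prop} (hab : S a ↔ S b) (d : X) :
    S ((swap a b * g) d) ↔ S (g d) := by
  rw [Perm.mul_apply]
  by_cases h1 : g d = a
  · rw [h1, swap_apply_left, hab]
  by_cases h2 : g d = b
  · rw [h2, swap_apply_right, hab]
  rw [swap_apply_of_ne_of_ne h1 h2]

theorem mergeAt_swap [Finite X] {g : Perm X} {a b : X} (h : ¬ g.SameCycle a b) :
    MergeAt g 1 (swap a b * g) 1 a b := by
  intro S
  constructor
  · intro hS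
    have hab : S a ↔ S b := sc_iff.1 (sc_swap_of_not h) S hS
    refine ⟨⟨fun d => ?_, fun _ => Iff.rfl⟩, hab⟩
    rw [← inv_swap_mul hab, hS.1]
  · rintro ⟨hS, hab⟩
    exact ⟨fun d => by rw [inv_swap_mul hab, hS.1], fun _ => Iff.rfl⟩

theorem mergeAt_swap' [Finite X] {g : Perm X} {a b : X} (hne : a ≠ b) (h : g.SameCycle a b) :
    MergeAt (swap a b * g) 1 g 1 a b := by
  have := mergeAt_swap (not_sc_swap hne h)
  rwa [← mul_assoc, swap_mul_self, one_mul] at this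

theorem cyc_swap [Finite X] {g : Perm X} {a b : X} (h : ¬ g.SameCycle a b) :
    cyc (swap a b * g) + 1 = cyc g :=
  (mergeAt_swap h).K_eq (fun hh => h (sc_iff.2 hh))

theorem cyc_swap' [Finite X] {g : Perm X} {a b : X} (hne : a ≠ b) (h : g.SameCycle a b) :
    cyc (swap a b * g) = cyc g + 1 :=
  ((mergeAt_swap' hne h).K_eq (fun hh => not_sc_swap hne h (sc_iff.2 hh))).symm

theorem cyc_one [Finite X] : cyc (1 : Perm X) = Nat.card X := by
  unfold cyc K
  apply Nat.card_congr
  refine (Equiv.ofBijective (Quotient.mk (J 1 1)) ⟨fun x y h => ?_, Quotient.mk_surjective⟩).symm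
  have : Jrel 1 1 x y := Quotient.exact h
  exact ((this (fun d => x = d) ⟨fun _ => Iff.rfl, fun _ => Iff.rfl⟩).1 rfl)

theorem mergeAt_edge {s a : Perm X} {x y : X} (hx : a x = x) (hy : a y = y) :
    MergeAt s a s (swap x y * a) x y := by
  intro S
  constructor
  · intro hS
    have hxy : S x ↔ S y := by
      have := hS.2 x
      rw [Perm.mul_apply, hx, swap_apply_left] at this
      exact this.symm
    exact ⟨⟨hS.1, fun d => by rw [← inv_swap_mul hxy, hS.2]⟩, hxy⟩
  · rintro ⟨hS, hxy⟩
    exact ⟨hS.1, fun d => by rw [inv_swap_mul hxy, hS.2]⟩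

theorem swap_fix_not_sc {g : Perm X} {x y : X} (hx : g x = x) (hne : x ≠ y) :
    ¬ g.SameCycle x y := by
  intro h
  exact hne ((sc_iff.1 h (fun d => x = d) ⟨fun d => by
    constructor
    · intro hh; apply g.injective; rw [hx]; exact hh
    · rintro rfl; exact hx.symm, fun _ => Iff.rfl⟩).1 rfl)

/-- the genus inequality -/
theorem genus [Finite X] (s a : Perm X) (ha : ∀ d, a (a d) = d) :
    cyc s + cyc a + cyc (s * a) ≤ Nat.card X + 2 * K s a := by
  induction hN : Nat.card {d // a d ≠ d} using Nat.strong_induction_on generalizing a with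
  | _ N ih =>
  by_cases h1 : a = 1
  · subst h1
    rw [cyc_one, mul_one]
    unfold cyc; omega
  obtain ⟨x, hx⟩ : ∃ x, a x ≠ x := by
    by_contra! hh; exact h1 (Equiv.ext hh)
  set y := a x with hy
  have hyx : a y = x := ha x
  set a0 := swap x y * a with ha0
  have ha0x : a0 x = x := by rw [ha0, Perm.mul_apply, ← hy, swap_apply_right]
  have ha0y : a0 y = y := by rw [ha0, Perm.mul_apply, hyx, swap_apply_left]
  have ha0d : ∀ d, d ≠ x → d ≠ y → a0 d = a d := by
    intro d h1 h2
    rw [ha0, Perm.mul_apply, swap_apply_of_ne_of_ne]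
    · intro h; apply h2; rw [← ha d, h]
    · intro h; apply h1; exact a.injective (h.trans hy)
  have ha0i : ∀ d, a0 (a0 d) = d := by
    intro d
    by_cases h1 : d = x
    · rw [h1, ha0x, ha0x]
    by_cases h2 : d = y
    · rw [h2, ha0y, ha0y]
    rw [ha0d d h1 h2, ha0d, ha]
    · intro h; apply h2; rw [← ha d, h]
    · intro h; apply h1; exact a.injective (h.trans hy)
  have haa : a = swap x y * a0 := by rw [ha0, ← mul_assoc, swap_mul_self, one_mul]
  have hcard : Nat.card {d // a0 d ≠ d} < N := by
    rw [← hN]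
    have h3 : {d | a0 d ≠ d} ⊂ {d | a d ≠ d} := by
      constructor
      · intro d hd
        have h1 : d ≠ x := by rintro rfl; exact hd ha0x
        have h2 : d ≠ y := by rintro rfl; exact hd ha0y
        show a d ≠ d
        rw [← ha0d d h1 h2]; exact hd
      · intro hh
        exact (hh (show a x ≠ x from hx)) ha0x
    exact Set.ncard_lt_ncard h3
  have IH := ih _ hcard a0 ha0i rfl
  have hne : x ≠ y := fun h => hx h.symm
  have c1 : cyc a + 1 = cyc a0 := by
    conv_lhs => rw [haa]
    exact cyc_swap (swap_fix_not_sc ha0x hne)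
  have hφ : s * a = swap (s x) (s y) * (s * a0) := by
    have : swap (s x) (s y) * s = s * swap x y := by rw [Equiv.mul_swap_eq_swap_mul]
    rw [← mul_assoc, this, mul_assoc, ← haa]
  have hM : MergeAt s a0 s a x y := by
    have := mergeAt_edge (s := s) ha0x ha0y
    rwa [← haa] at this
  by_cases hJ : Jrel s a0 x y
  · have c2 := hM.K_eq_same hJ
    have c3 : cyc (s * a) ≤ cyc (s * a0) + 1 := by
      rw [hφ]
      by_cases hh : (s * a0).SameCycle (s x) (s y)
      · rw [cyc_swap' (fun h => hne (s.injective h)) hh]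
      · have := cyc_swap hh; omega
    omega
  · have c2 := hM.K_eq hJ
    have c3 : cyc (s * a) + 1 = cyc (s * a0) := by
      rw [hφ]
      apply cyc_swap
      intro hh
      apply hJ
      have h4 : Jrel s a0 (s x) (s y) := by
        intro S hS
        refine sc_iff.1 hh S ⟨fun d => ?_, fun _ => Iff.rfl⟩
        rw [Perm.mul_apply, hS.1, hS.2]
      exact ((J_σ s a0 x).trans h4).trans (J_σ s a0 y).symm
    omega

end orbits

section count
variable {X : Type} [Fintype X]

theorem card_quot_sum (R : Setoid X) :
    (Nat.card (Quotient R) : ℚ) = ∑ x : X, 1 / (Nat.card {y // R x y} : ℚ) := by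
  classical
  rw [← Finset.sum_fiberwise (s := Finset.univ) (g := fun x => Quotient.mk R x)]
  rw [Nat.card_eq_fintype_card, Fintype.card_eq_sum_ones]
  push_cast
  apply Finset.sum_congr rfl
  intro q _
  induction q using Quotient.inductionOn with | _ z
  have h1 : ∀ x ∈ Finset.univ.filter (fun x => Quotient.mk R x = Quotient.mk R z),
      1 / (Nat.card {y // R x y} : ℚ) = 1 / (Nat.card {y // R z y} : ℚ) := by
    intro x hx
    have hx' : R x z := Quotient.exact (Finset.mem_filter.1 hx).2
    have : (fun y => R x y) = (fun y => R z y) := by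
      ext y; exact ⟨fun h => R.trans (R.symm hx') h, fun h => R.trans hx' h⟩
    have h2 : Nat.card {y // R x y} = Nat.card {y // R z y} := by
      show Nat.card {y // (fun y => R x y) y} = _
      rw [this]
    rw [h2]
  rw [Finset.sum_congr rfl h1, Finset.sum_const, nsmul_eq_mul]
  have h3 : (Finset.univ.filter (fun x => Quotient.mk R x = Quotient.mk R z)).card
      = Nat.card {y // R z y} := by
    rw [Nat.card_eq_fintype_card, Fintype.card_subtype]
    congr 1
    ext x
    simp only [Finset.mem_filter, Finset.mem_univ, true_and]
    exact ⟨fun h => R.symm (Quotient.exact h), fun h => Quotient.sound (R.symm h)⟩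
  rw [h3]
  have h4 : 0 < Nat.card {y // R z y} := by
    have : Nonempty {y // R z y} := ⟨⟨z, R.refl z⟩⟩
    exact Nat.card_pos
  field_simp

theorem card_disj (R RA RB : Setoid X) (h : ∀ x y, R x y ↔ RA x y ∨ RB x y)
    (hd : ∀ x, (∀ y, RA x y → y = x) ∨ (∀ y, RB x y → y = x)) :
    Nat.card (Quotient R) + Nat.card X = Nat.card (Quotient RA) + Nat.card (Quotient RB) := by
  have : (Nat.card (Quotient R) + Nat.card X : ℚ)
      = Nat.card (Quotient RA) + Nat.card (Quotient RB) := by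
    rw [card_quot_sum, card_quot_sum, card_quot_sum, ← Finset.sum_add_distrib]
    rw [Nat.card_eq_fintype_card, Fintype.card_eq_sum_ones]
    push_cast
    rw [← Finset.sum_add_distrib]
    apply Finset.sum_congr rfl
    intro x _
    have aux : ∀ (Q : Setoid X), (∀ y, Q x y → y = x) → Nat.card {y // Q x y} = 1 := by
      intro Q hQ
      rw [Nat.card_eq_one_iff_unique]
      exact ⟨⟨fun a b => Subtype.ext ((hQ _ a.2).trans (hQ _ b.2).symm)⟩, ⟨⟨x, Q.refl x⟩⟩⟩
    rcases hd x with h1 | h1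
    · have h2 : (fun y => R x y) = (fun y => RB x y) := by
        ext y; rw [h]
        constructor
        · rintro (h3 | h3)
          · rw [h1 y h3]
          · exact h3
        · exact Or.inr
      have h3 : Nat.card {y // R x y} = Nat.card {y // RB x y} := by
        show Nat.card {y // (fun y => R x y) y} = _
        rw [h2]
      rw [aux RA h1, h3]; norm_num; ring
    · have h2 : (fun y => R x y) = (fun y => RA x y) := by
        ext y; rw [h]
        constructor
        · rintro (h3 | h3)
          · exact h3
          · rw [h1 y h3]
        · exact Or.inl
      have h3 : Nat.card {y // R x y} = Nat.card {y // RA x y} := by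
        show Nat.card {y // (fun y => R x y) y} = _
        rw [h2]
      rw [aux RB h1, h3]; norm_num
  exact_mod_cast this

end count
end Brown

set_option linter.unusedSectionVars false
namespace Brown
open Equiv Equiv.Perm

/-- partial maps: darts fixed by `α` are ghosts -/
structure PMap (X : Type) where
  σ : Perm X
  α : Perm X
  r : X

section pmap
variable {X : Type}

def PMap.φ (M : PMap X) : Perm X := M.σ * M.α
def PMap.O (M : PMap X) (d : X) : Prop := M.φ.SameCycle M.r d
def PMap.Adj (M : PMap X) (x y : X) : Prop :=
  ∃ e, M.α e ≠ e ∧ M.σ.SameCycle x e ∧ M.σ.SameCycle y (M.α e)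

theorem PMap.φ_apply (M : PMap X) (d : X) : M.φ d = M.σ (M.α d) := rfl

structure PMap.Pre (M : PMap X) : Prop where
  inv : ∀ d, M.α (M.α d) = d
  ghost : ∀ d, M.α d = d → M.σ d = d
  rlive : M.α M.r ≠ M.r
  conn : ∀ d, M.α d ≠ d → Jrel M.σ M.α M.r d
  tri : ∀ d, M.α d ≠ d → ¬ M.O d → M.φ (M.φ (M.φ d)) = d
  noloop : ∀ d, M.α d ≠ d → ¬ M.σ.SameCycle d (M.α d)
  simp : ∀ d d', M.α d ≠ d → M.α d' ≠ d' → M.σ.SameCycle d d' →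
    M.σ.SameCycle (M.α d) (M.α d') → d = d'
  planar : cyc M.σ + cyc M.α + cyc M.φ = Nat.card X + 2 * K M.σ M.α
  bdry' : ∀ d d', M.O d → M.O d' → M.σ.SameCycle d d' → d ≠ M.φ M.r → d' ≠ M.φ M.r → d = d'

def PMap.Bdry (M : PMap X) : Prop := ∀ d d', M.O d → M.O d' → M.σ.SameCycle d d' → d = d'

def PMap.Good (M : PMap X) : Prop := M.Pre ∧ M.Bdry

def PMap.Addable (M : PMap X) : Prop :=
  ¬ M.σ.SameCycle M.r (M.φ (M.φ M.r)) ∧ ¬ M.Adj M.r (M.φ (M.φ M.r))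

theorem PMap.O_r (M : PMap X) : M.O M.r := SameCycle.refl _ _
theorem PMap.O_φ {M : PMap X} {d : X} : M.O (M.φ d) ↔ M.O d := by
  unfold PMap.O; exact sameCycle_apply_right

theorem σ_live {M : PMap X} (g : ∀ d, M.α d = d → M.σ d = d) {d : X} (h : M.α d ≠ d) :
    M.α (M.σ d) ≠ M.σ d := fun e => h (by
      have := g _ e
      have h2 := M.σ.injective this
      rw [h2] at e; exact e)
theorem α_live {M : PMap X} {d : X} (h : M.α d ≠ d) :
    M.α (M.α d) ≠ M.α d := fun e => h (M.α.injective e)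
theorem φ_live {M : PMap X} (g : ∀ d, M.α d = d → M.σ d = d) {d : X} (h : M.α d ≠ d) :
    M.α (M.φ d) ≠ M.φ d := σ_live g (α_live h)
theorem live_sc [Finite X] {M : PMap X} (g : ∀ d, M.α d = d → M.σ d = d) {d e : X} (h : M.α d ≠ d)
    (hs : M.σ.SameCycle d e) : M.α e ≠ e :=
  sc_forward hs (fun d => M.α d ≠ d) (fun _ => σ_live g) h
theorem live_O [Finite X] {M : PMap X} (h : M.Pre) {d : X} (hd : M.O d) : M.α d ≠ d :=
  sc_forward hd (fun d => M.α d ≠ d) (fun _ => φ_live h.ghost) h.rlive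

theorem sc_one (g : Perm X) (x : X) : g.SameCycle x (g x) := sameCycle_apply_right.2 (SameCycle.refl _ _)

theorem φ_ne {M : PMap X} (nl : ∀ d, M.α d ≠ d → ¬ M.σ.SameCycle d (M.α d)) {d : X}
    (h : M.α d ≠ d) : M.φ d ≠ d := fun e => nl d h (by
      have : M.σ.SameCycle (M.α d) (M.φ d) := sc_one _ _
      rw [e] at this; exact this.symm)

variable [DecidableEq X]

/-- configuration: `M` is `N` plus the edge `x y` closing the triangle `y b t`. -/
structure Conf (N M : PMap X) (x y b t s : X) : Prop where
  xy : x ≠ y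
  xb : x ≠ b
  xt : x ≠ t
  xs : x ≠ s
  yb : y ≠ b
  yt : y ≠ t
  ys : y ≠ s
  bt : b ≠ t
  bs : b ≠ s
  ts : t ≠ s
  σx : N.σ x = x
  σy : N.σ y = y
  αx : N.α x = x
  αy : N.α y = y
  φb : N.φ b = t
  φt : N.φ t = s
  σM : M.σ = swap x b * swap y s * N.σ
  αM : M.α = swap x y * N.α
  rN : N.r = b
  rM : M.r = x

namespace Conf
variable {N M : PMap X} {x y b t s : X} (c : Conf N M x y b t s)
include c

theorem φx' : N.φ x = x := by rw [PMap.φ_apply, c.αx, c.σx]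
theorem φy' : N.φ y = y := by rw [PMap.φ_apply, c.αy, c.σy]
theorem Mαx : M.α x = y := by rw [c.αM]; simp [c.αx]
theorem Mαy : M.α y = x := by rw [c.αM]; simp [c.αy]
theorem α_ne_x {d : X} (h : d ≠ x) : N.α d ≠ x := fun e => h (N.α.injective (e.trans c.αx.symm))
theorem α_ne_y {d : X} (h : d ≠ y) : N.α d ≠ y := fun e => h (N.α.injective (e.trans c.αy.symm))
theorem σ_ne_x {d : X} (h : d ≠ x) : N.σ d ≠ x := fun e => h (N.σ.injective (e.trans c.σx.symm))
theorem σ_ne_y {d : X} (h : d ≠ y) : N.σ d ≠ y := fun e => h (N.σ.injective (e.trans c.σy.symm))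
theorem Mα {d : X} (h1 : d ≠ x) (h2 : d ≠ y) : M.α d = N.α d := by
  rw [c.αM, mul_apply, swap_apply_of_ne_of_ne (c.α_ne_x h1) (c.α_ne_y h2)]
theorem Mσx : M.σ x = b := by
  rw [c.σM, mul_apply, mul_apply, c.σx, swap_apply_of_ne_of_ne c.xy c.xs, swap_apply_left]
theorem Mσy : M.σ y = s := by
  rw [c.σM, mul_apply, mul_apply, c.σy, swap_apply_left, swap_apply_of_ne_of_ne c.xs.symm c.bs.symm]
theorem Mφx : M.φ x = s := by rw [PMap.φ_apply, c.Mαx, c.Mσy]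
theorem Mφy : M.φ y = b := by rw [PMap.φ_apply, c.Mαy, c.Mσx]
theorem Mφ' {d : X} (h1 : d ≠ x) (h2 : d ≠ y) : M.φ d = swap x b (swap y s (N.φ d)) := by
  rw [PMap.φ_apply, c.Mα h1 h2, c.σM]; rfl
theorem Mφb : M.φ b = t := by
  rw [c.Mφ' c.xb.symm c.yb.symm, c.φb, swap_apply_of_ne_of_ne c.yt.symm c.ts,
    swap_apply_of_ne_of_ne c.xt.symm c.bt.symm]
theorem Mφt : M.φ t = y := by
  rw [c.Mφ' c.xt.symm c.yt.symm, c.φt, swap_apply_right, swap_apply_of_ne_of_ne c.xy.symm c.yb]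
theorem Mφq {d : X} (h : N.φ d = b) : M.φ d = x := by
  have h1 : d ≠ x := fun e => by rw [e, c.φx'] at h; exact c.xb h
  have h2 : d ≠ y := fun e => by rw [e, c.φy'] at h; exact c.yb h
  rw [c.Mφ' h1 h2, h, swap_apply_of_ne_of_ne c.yb.symm c.bs, swap_apply_right]
theorem φ_ne_x {d : X} (h : d ≠ x) : N.φ d ≠ x := fun e => h (N.φ.injective (e.trans c.φx'.symm))
theorem φ_ne_y {d : X} (h : d ≠ y) : N.φ d ≠ y := fun e => h (N.φ.injective (e.trans c.φy'.symm))
theorem Mφ {d : X} (h1 : d ≠ x) (h2 : d ≠ y) (h3 : d ≠ t) (h4 : N.φ d ≠ b) : M.φ d = N.φ d := by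
  have h5 : N.φ d ≠ s := fun e => h3 (N.φ.injective (e.trans c.φt.symm))
  rw [c.Mφ' h1 h2, swap_apply_of_ne_of_ne (c.φ_ne_y h2) h5,
    swap_apply_of_ne_of_ne (c.φ_ne_x h1) h4]

theorem Ob : N.O b := by rw [← c.rN]; exact N.O_r
theorem Ot : N.O t := by rw [← c.φb, PMap.O_φ]; exact c.Ob
theorem Os : N.O s := by rw [← c.φt, PMap.O_φ]; exact c.Ot
theorem Mφ_inner {d : X} (h1 : d ≠ x) (h2 : d ≠ y) (h : ¬ N.O d) : M.φ d = N.φ d :=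
  c.Mφ h1 h2 (fun e => h (e ▸ c.Ot)) (fun e => h (by rw [← PMap.O_φ, e]; exact c.Ob))

theorem liveM {d : X} : M.α d ≠ d ↔ d = x ∨ d = y ∨ N.α d ≠ d := by
  by_cases h1 : d = x
  · subst h1; simp [c.Mαx, c.xy.symm]
  by_cases h2 : d = y
  · subst h2; simp [c.Mαy, c.xy]
  simp [h1, h2, c.Mα h1 h2]

theorem liveN_ne {d : X} (h : N.α d ≠ d) : d ≠ x ∧ d ≠ y :=
  ⟨fun e => h (e ▸ c.αx), fun e => h (e ▸ c.αy)⟩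

variable [Finite X]

theorem nsc1 : ¬ N.σ.SameCycle y s := swap_fix_not_sc c.σy c.ys
theorem nsc2 : ¬ (swap y s * N.σ).SameCycle x b :=
  swap_fix_not_sc (by rw [mul_apply, c.σx, swap_apply_of_ne_of_ne c.xy c.xs]) c.xb

theorem mσ1 : MergeAt N.σ 1 (swap y s * N.σ) 1 y s := mergeAt_swap c.nsc1
theorem mσ2 : MergeAt (swap y s * N.σ) 1 M.σ 1 x b := by
  rw [c.σM, mul_assoc]; exact mergeAt_swap c.nsc2
theorem mα : MergeAt M.σ N.α M.σ M.α x y := by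
  rw [c.αM]; exact mergeAt_edge c.αx c.αy

theorem invσ (S : X → Prop) : Inv M.σ 1 S ↔ (Inv N.σ 1 S ∧ (S y ↔ S s)) ∧ (S x ↔ S b) := by
  rw [c.mσ2 S, c.mσ1 S]
theorem invJ (S : X → Prop) : Inv M.σ M.α S ↔
    ((Inv N.σ N.α S ∧ (S y ↔ S s)) ∧ (S x ↔ S b)) ∧ (S x ↔ S y) := by
  rw [c.mα S, c.mσ2.mono N.α S, c.mσ1.mono N.α S]

theorem inv_bs {S : X → Prop} (h : Inv N.σ N.α S) : S b ↔ S s := by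
  rw [← c.φt, ← c.φb]
  simp only [PMap.φ_apply, h.1, h.2]

end Conf
/-- contraction of the new darts -/
def hx (x y b s d : X) : X := if d = x then b else if d = y then s else d

namespace Conf
variable {N M : PMap X} {x y b t s : X} (c : Conf N M x y b t s)

theorem hx_of {x y b s d : X} (h1 : d ≠ x) (h2 : d ≠ y) : hx x y b s d = d := by
  simp [hx, h1, h2]
include c
theorem hx_x : hx x y b s x = b := by simp [hx]
theorem hx_y : hx x y b s y = s := by simp [hx, c.xy.symm]

theorem hxσ (d : X) (S : X → Prop) (hS : ∀ d, S (N.σ d) ↔ S d) :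
    S (hx x y b s (N.σ d)) ↔ S (hx x y b s d) := by
  by_cases h1 : d = x
  · rw [h1, c.σx]
  by_cases h2 : d = y
  · rw [h2, c.σy]
  rw [hx_of h1 h2, hx_of (c.σ_ne_x h1) (c.σ_ne_y h2), hS]
theorem hxα (d : X) (S : X → Prop) (hS : ∀ d, S (N.α d) ↔ S d) :
    S (hx x y b s (N.α d)) ↔ S (hx x y b s d) := by
  by_cases h1 : d = x
  · rw [h1, c.αx]
  by_cases h2 : d = y
  · rw [h2, c.αy]
  rw [hx_of h1 h2, hx_of (c.α_ne_x h1) (c.α_ne_y h2), hS]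
theorem S_hx {S : X → Prop} (h1 : S y ↔ S s) (h2 : S x ↔ S b) (d : X) :
    S d ↔ S (hx x y b s d) := by
  by_cases h1' : d = x
  · rw [h1', c.hx_x, h2]
  by_cases h2' : d = y
  · rw [h2', c.hx_y, h1]
  rw [hx_of h1' h2']

variable [Finite X]

theorem sc (d e : X) : M.σ.SameCycle d e ↔ N.σ.SameCycle (hx x y b s d) (hx x y b s e) := by
  rw [sc_iff, sc_iff]
  constructor
  · intro h S hS
    refine h (fun d => S (hx x y b s d)) ((c.invσ _).2 ⟨⟨⟨fun d => c.hxσ d S hS.1, fun d => Iff.rfl⟩, ?_⟩, ?_⟩)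
    · rw [c.hx_y, hx_of c.xs.symm c.ys.symm]
    · rw [c.hx_x, hx_of c.xb.symm c.yb.symm]
  · intro h S hS
    obtain ⟨⟨h1, h2⟩, h3⟩ := (c.invσ S).1 hS
    rw [c.S_hx h2 h3 d, c.S_hx h2 h3 e]
    exact h S h1

theorem jr (d e : X) : Jrel M.σ M.α d e ↔ Jrel N.σ N.α (hx x y b s d) (hx x y b s e) := by
  constructor
  · intro h S hS
    refine h (fun d => S (hx x y b s d)) ((c.invJ _).2 ⟨⟨⟨⟨fun d => c.hxσ d S hS.1,
      fun d => c.hxα d S hS.2⟩, ?_⟩, ?_⟩, ?_⟩)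
    · rw [c.hx_y, hx_of c.xs.symm c.ys.symm]
    · rw [c.hx_x, hx_of c.xb.symm c.yb.symm]
    · rw [c.hx_x, c.hx_y, c.inv_bs hS]
  · intro h S hS
    obtain ⟨⟨⟨h1, h2⟩, h3⟩, -⟩ := (c.invJ S).1 hS
    rw [c.S_hx h2 h3 d, c.S_hx h2 h3 e]
    exact h S h1

theorem sc' {d e : X} (h1 : d ≠ x) (h2 : d ≠ y) (h3 : e ≠ x) (h4 : e ≠ y) :
    M.σ.SameCycle d e ↔ N.σ.SameCycle d e := by
  rw [c.sc, hx_of h1 h2, hx_of h3 h4]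
theorem scx {e : X} (h3 : e ≠ x) (h4 : e ≠ y) :
    M.σ.SameCycle x e ↔ N.σ.SameCycle b e := by
  rw [c.sc, c.hx_x, hx_of h3 h4]
theorem scy {e : X} (h3 : e ≠ x) (h4 : e ≠ y) :
    M.σ.SameCycle y e ↔ N.σ.SameCycle s e := by
  rw [c.sc, c.hx_y, hx_of h3 h4]
theorem scxy : M.σ.SameCycle x y ↔ N.σ.SameCycle b s := by
  rw [c.sc, c.hx_y, c.hx_x]

theorem nOx : ¬ N.O x := fun h => by
  unfold PMap.O at h; rw [c.rN] at h
  exact swap_fix_not_sc c.φx' c.xb h.symm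
theorem nOy : ¬ N.O y := fun h => by
  unfold PMap.O at h; rw [c.rN] at h
  exact swap_fix_not_sc c.φy' c.yb h.symm

theorem O_iff (d : X) : M.O d ↔ d = x ∨ (N.O d ∧ d ≠ b ∧ d ≠ t) := by
  constructor
  · intro h
    unfold PMap.O at h; rw [c.rM] at h
    refine sc_forward h (fun d => d = x ∨ (N.O d ∧ d ≠ b ∧ d ≠ t)) ?_ (Or.inl rfl)
    rintro e (rfl | ⟨h1, h2, h3⟩)
    · rw [c.Mφx]; exact Or.inr ⟨c.Os, c.bs.symm, c.ts.symm⟩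
    · by_cases h4 : N.φ e = b
      · exact Or.inl (c.Mφq h4)
      · rw [c.Mφ (fun h => c.nOx (h ▸ h1)) (fun h => c.nOy (h ▸ h1)) h3 h4]
        exact Or.inr ⟨PMap.O_φ.2 h1, h4, fun h => h2 (N.φ.injective (h.trans c.φb.symm))⟩
  · have hx : M.O x := by rw [← c.rM]; exact M.O_r
    rintro (rfl | ⟨h1, h2, h3⟩)
    · exact hx
    · unfold PMap.O at h1; rw [c.rN] at h1
      have := sc_forward h1 (fun d => d = b ∨ d = t ∨ M.O d) ?_ (Or.inl rfl)
      · tauto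
      · rintro e (rfl | rfl | h)
        · exact Or.inr (Or.inl c.φb)
        · rw [c.φt, ← c.Mφx]; exact Or.inr (Or.inr (PMap.O_φ.2 hx))
        · by_cases h1 : e = x
          · rw [h1, c.φx']; exact Or.inr (Or.inr hx)
          by_cases h2 : e = y
          · rw [h2, c.φy', ← h2]; exact Or.inr (Or.inr h)
          by_cases h3 : e = t
          · rw [h3, c.φt, ← c.Mφx]; exact Or.inr (Or.inr (PMap.O_φ.2 hx))
          by_cases h4 : N.φ e = b
          · exact Or.inl h4
          · rw [← c.Mφ h1 h2 h3 h4]; exact Or.inr (Or.inr (PMap.O_φ.2 h))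

theorem cycσ : cyc M.σ + 2 = cyc N.σ := by
  have h1 := cyc_swap c.nsc1
  have h2 := cyc_swap c.nsc2
  rw [c.σM, mul_assoc]; omega
theorem cycα : cyc M.α + 1 = cyc N.α := by
  rw [c.αM]; exact cyc_swap (swap_fix_not_sc c.αx c.xy)

theorem φM : M.φ = swap x b * (swap y s * (swap x y * N.φ)) := by
  ext d
  by_cases h1 : d = x
  · rw [h1, c.Mφx]
    simp only [mul_apply]
    rw [c.φx', swap_apply_left, swap_apply_left, swap_apply_of_ne_of_ne c.xs.symm c.bs.symm]
  by_cases h2 : d = y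
  · rw [h2, c.Mφy]
    simp only [mul_apply]
    rw [c.φy', swap_apply_right, swap_apply_of_ne_of_ne c.xy c.xs, swap_apply_left]
  rw [c.Mφ' h1 h2]
  simp only [mul_apply]
  rw [swap_apply_of_ne_of_ne (c.φ_ne_x h1) (c.φ_ne_y h2)]

theorem cycφ : cyc M.φ + 1 = cyc N.φ := by
  have n1 : ¬ N.φ.SameCycle x y := swap_fix_not_sc c.φx' c.xy
  have m1 := mergeAt_swap n1
  have n2 : ¬ (swap x y * N.φ).SameCycle y s := by
    intro h
    have := sc_forward h (fun d => d = x ∨ d = y) ?_ (Or.inr rfl)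
    · rcases this with h | h
      · exact c.xs h.symm
      · exact c.ys h.symm
    · rintro e (rfl | rfl)
      · right; rw [mul_apply, c.φx', swap_apply_left]
      · left; rw [mul_apply, c.φy', swap_apply_right]
  have m2 := mergeAt_swap n2
  have n3 : (swap y s * (swap x y * N.φ)).SameCycle x b := by
    rw [sc_iff]
    intro S hS
    obtain ⟨h1, h2⟩ := (m2 S).1 hS
    obtain ⟨h3, h4⟩ := (m1 S).1 h1
    rw [h4, h2, ← c.φt, h3.1, ← c.φb, h3.1]
  have e1 := cyc_swap n1
  have e2 := cyc_swap n2
  have e3 := cyc_swap' c.xb n3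
  rw [c.φM]; omega

theorem K_eq : K M.σ M.α + 2 = K N.σ N.α := by
  have h1 : ¬ Jrel N.σ N.α y s := fun h => by
    have := h (fun d => d = y) ⟨fun d => ⟨fun e => by_contra fun h => c.σ_ne_y h e, fun e => e ▸ c.σy⟩,
      fun d => ⟨fun e => by_contra fun h => c.α_ne_y h e, fun e => e ▸ c.αy⟩⟩
    exact c.ys (this.1 rfl).symm
  have h2 : ¬ Jrel (swap y s * N.σ) N.α x b := fun h => by
    have := h (fun d => d = x) (((c.mσ1.mono N.α) _).2 ⟨⟨fun d => ⟨fun e => by_contra fun h => c.σ_ne_x h e, fun e => e ▸ c.σx⟩,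
      fun d => ⟨fun e => by_contra fun h => c.α_ne_x h e, fun e => e ▸ c.αx⟩⟩, ?_⟩)
    exact c.xb (this.1 rfl).symm
    simp [c.xy.symm, c.xs.symm]
  have h3 : Jrel M.σ N.α x y := by
    intro S hS
    rw [c.mσ2.mono N.α S, c.mσ1.mono N.α S] at hS
    rw [hS.2, hS.1.2, c.inv_bs hS.1.1]
  have e1 := (c.mσ1.mono N.α).K_eq h1
  have e2 := (c.mσ2.mono N.α).K_eq h2
  have e3 := c.mα.K_eq_same h3
  omega

theorem planar_iff : cyc M.σ + cyc M.α + cyc M.φ = Nat.card X + 2 * K M.σ M.α ↔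
    cyc N.σ + cyc N.α + cyc N.φ = Nat.card X + 2 * K N.σ N.α := by
  have := c.K_eq; have := c.cycσ; have := c.cycα; have := c.cycφ
  omega

end Conf
end pmap
end Brown

set_option linter.unusedSectionVars false
namespace Brown
open Equiv Equiv.Perm
section adddel
variable {X : Type} [DecidableEq X] [Finite X]

def PMap.add (N : PMap X) (x y : X) : PMap X where
  σ := swap x N.r * swap y (N.φ (N.φ N.r)) * N.σ
  α := swap x y * N.α
  r := x

def PMap.del (M : PMap X) : PMap X where
  σ := swap (M.α M.r) (M.φ M.r) * (swap M.r (M.σ M.r) * M.σ)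
  α := swap M.r (M.α M.r) * M.α
  r := M.σ M.r

theorem conf_add {N : PMap X} (h : N.Pre) (ha : N.Addable) {x y : X} (hxy : x ≠ y)
    (hx : N.α x = x) (hy : N.α y = y) :
    Conf N (N.add x y) x y N.r (N.φ N.r) (N.φ (N.φ N.r)) := by
  have lt : N.α (N.φ N.r) ≠ N.φ N.r := φ_live h.ghost h.rlive
  have ls : N.α (N.φ (N.φ N.r)) ≠ N.φ (N.φ N.r) := φ_live h.ghost lt
  have ne : ∀ {u v : X}, N.α u = u → N.α v ≠ v → u ≠ v := fun h1 h2 e => h2 (e ▸ h1)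
  exact
  { xy := hxy
    xb := ne hx h.rlive
    xt := ne hx lt
    xs := ne hx ls
    yb := ne hy h.rlive
    yt := ne hy lt
    ys := ne hy ls
    bt := (φ_ne h.noloop h.rlive).symm
    bs := fun e => ha.1 (e ▸ SameCycle.refl _ _)
    ts := (φ_ne h.noloop lt).symm
    σx := h.ghost _ hx
    σy := h.ghost _ hy
    αx := hx
    αy := hy
    φb := rfl
    φt := rfl
    σM := rfl
    αM := rfl
    rN := rfl
    rM := rfl }

theorem Conf.eq_add {N M : PMap X} {x y b t s : X} (c : Conf N M x y b t s) : M = N.add x y := by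
  have h1 := c.σM
  have h2 := c.αM
  have h3 := c.rM
  have h4 : N.φ (N.φ N.r) = s := by rw [c.rN, c.φb, c.φt]
  unfold PMap.add
  rw [h4, c.rN, ← h1, ← h2, ← h3]

theorem Conf.good {N M : PMap X} {x y b t s : X} (c : Conf N M x y b t s) (h : N.Pre)
    (ha : N.Addable) : M.Good := by
  have hsN : N.φ (N.φ N.r) = s := by rw [c.rN, c.φb, c.φt]
  have ha1 : ¬ N.σ.SameCycle b s := by have := ha.1; rwa [hsN, c.rN] at this
  have ha2 : ¬ N.Adj b s := by have := ha.2; rwa [hsN, c.rN] at this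
  have live' : ∀ {d : X}, d ≠ x → d ≠ y → M.α d ≠ d → N.α d ≠ d := by
    intro d h1 h2 h3; rw [c.liveM] at h3; tauto
  refine ⟨⟨?_, ?_, ?_, ?_, ?_, ?_, ?_, c.planar_iff.2 h.planar, ?_⟩, ?_⟩
  · intro d
    by_cases h1 : d = x
    · rw [h1, c.Mαx, c.Mαy]
    by_cases h2 : d = y
    · rw [h2, c.Mαy, c.Mαx]
    rw [c.Mα h1 h2, c.Mα (c.α_ne_x h1) (c.α_ne_y h2), h.inv]
  · intro d hd
    have h1 : d ≠ x := fun e => by rw [e, c.Mαx] at hd; exact c.xy hd.symm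
    have h2 : d ≠ y := fun e => by rw [e, c.Mαy] at hd; exact c.xy hd
    have hd' : N.α d = d := by rw [c.Mα h1 h2] at hd; exact hd
    have lb := live_O h c.Ob
    have ls := live_O h c.Os
    rw [c.σM, mul_apply, mul_apply, h.ghost d hd', swap_apply_of_ne_of_ne h2 (fun e : d = s => ls (e ▸ hd')),
      swap_apply_of_ne_of_ne h1 (fun e : d = b => lb (e ▸ hd'))]
  · rw [c.rM, c.Mαx]; exact c.xy.symm
  · intro d hd
    rw [c.rM, c.jr, c.hx_x]
    have hbs : Jrel N.σ N.α b s := h.conn s (live_O h c.Os) |> fun e => by rwa [c.rN] at e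
    by_cases h1 : d = x
    · rw [h1, c.hx_x]; exact Jrel.refl _ _ _
    by_cases h2 : d = y
    · rw [h2, c.hx_y]; exact hbs
    rw [Conf.hx_of h1 h2]
    have := h.conn d (live' h1 h2 hd)
    rwa [c.rN] at this
  · intro d hd hO
    rw [c.O_iff] at hO
    push Not at hO
    obtain ⟨h1, h3⟩ := hO
    by_cases h2 : d = y
    · rw [h2, c.Mφy, c.Mφb, c.Mφt]
    by_cases hb : d = b
    · rw [hb, c.Mφb, c.Mφt, c.Mφy]
    by_cases ht : d = t
    · rw [ht, c.Mφt, c.Mφy, c.Mφb]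
    have hO : ¬ N.O d := fun e => ht (h3 e hb)
    have hO2 : ¬ N.O (N.φ d) := fun e => hO (PMap.O_φ.1 e)
    rw [c.Mφ_inner h1 h2 hO, c.Mφ_inner (c.φ_ne_x h1) (c.φ_ne_y h2) hO2, c.Mφ_inner
      (c.φ_ne_x (c.φ_ne_x h1)) (c.φ_ne_y (c.φ_ne_y h2)) (fun e => hO2 (PMap.O_φ.1 e))]
    exact h.tri d (live' h1 h2 hd) hO
  · intro d hd
    by_cases h1 : d = x
    · rw [h1, c.Mαx, c.scxy]; exact ha1
    by_cases h2 : d = y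
    · rw [h2, c.Mαy, sameCycle_comm, c.scxy]; exact ha1
    rw [c.Mα h1 h2, c.sc' h1 h2 (c.α_ne_x h1) (c.α_ne_y h2)]
    exact h.noloop d (live' h1 h2 hd)
  · have key : ∀ d, M.α d ≠ d → d ≠ x → d ≠ y → M.σ.SameCycle x d → M.σ.SameCycle y (M.α d) →
        False := by
      intro d hd h1 h2 h3 h4
      rw [c.Mα h1 h2] at h4
      rw [c.scx h1 h2] at h3
      rw [c.scy (c.α_ne_x h1) (c.α_ne_y h2)] at h4
      exact ha2 ⟨d, live' h1 h2 hd, h3, h4⟩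
    have key2 : ∀ d, M.α d ≠ d → d ≠ x → d ≠ y → M.σ.SameCycle y d → M.σ.SameCycle x (M.α d) →
        False := by
      intro d hd h1 h2 h3 h4
      rw [c.Mα h1 h2] at h4
      rw [c.scy h1 h2] at h3
      rw [c.scx (c.α_ne_x h1) (c.α_ne_y h2)] at h4
      exact ha2 ⟨N.α d, α_live (live' h1 h2 hd), h4, by rw [h.inv]; exact h3⟩
    have nxy : ¬ M.σ.SameCycle x y := by rw [c.scxy]; exact ha1
    intro d d' hd hd' h1 h2
    by_cases e1 : d = x
    · rw [e1] at h1 h2 ⊢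
      rw [c.Mαx] at h2
      by_cases e2 : d' = x
      · exact e2.symm
      by_cases e3 : d' = y
      · rw [e3] at h1; exact (nxy h1).elim
      exact (key _ hd' e2 e3 h1 h2).elim
    by_cases e1' : d = y
    · rw [e1'] at h1 h2 ⊢
      rw [c.Mαy] at h2
      by_cases e2 : d' = y
      · exact e2.symm
      by_cases e3 : d' = x
      · rw [e3] at h1; exact (nxy h1.symm).elim
      exact (key2 _ hd' e3 e2 h1 h2).elim
    by_cases e2 : d' = x
    · rw [e2] at h1 h2; rw [c.Mαx] at h2
      exact (key _ hd e1 e1' h1.symm h2.symm).elim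
    by_cases e2' : d' = y
    · rw [e2'] at h1 h2; rw [c.Mαy] at h2
      exact (key2 _ hd e1 e1' h1.symm h2.symm).elim
    rw [c.sc' e1 e1' e2 e2'] at h1
    rw [c.Mα e1 e1', c.Mα e2 e2', c.sc' (c.α_ne_x e1) (c.α_ne_y e1') (c.α_ne_x e2) (c.α_ne_y e2')] at h2
    exact h.simp d d' (live' e1 e1' hd) (live' e2 e2' hd') h1 h2
  all_goals
    have key : ∀ d, N.O d → d ≠ b → d ≠ t → M.σ.SameCycle x d → False := by
      intro d h1 h2 h3 h4
      rw [c.scx (fun e => c.nOx (e ▸ h1)) (fun e => c.nOy (e ▸ h1))] at h4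
      exact h2 (h.bdry' b d c.Ob h1 h4 (by rw [c.rN, c.φb]; exact c.bt)
        (by rw [c.rN, c.φb]; exact h3)).symm
    have key2 : M.Bdry := by
      intro d d' h1 h2 h3
      rw [c.O_iff] at h1 h2
      rcases h1 with rfl | ⟨h1, h1', h1''⟩
      · rcases h2 with rfl | ⟨h2, h2', h2''⟩
        · rfl
        · exact (key _ h2 h2' h2'' h3).elim
      · rcases h2 with rfl | ⟨h2, h2', h2''⟩
        · exact (key _ h1 h1' h1'' h3.symm).elim
        · rw [c.sc' (fun e => c.nOx (e ▸ h1)) (fun e => c.nOy (e ▸ h1)) (fun e => c.nOx (e ▸ h2)) (fun e => c.nOy (e ▸ h2))] at h3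
          exact h.bdry' d d' h1 h2 h3 (by rw [c.rN, c.φb]; exact h1'') (by rw [c.rN, c.φb]; exact h2'')
  · intro d d' h1 h2 h3 _ _
    exact key2 d d' h1 h2 h3
  · exact key2

theorem good_nO {M : PMap X} (h : M.Good) (h2 : M.φ (M.φ M.r) ≠ M.r) : ¬ M.O (M.α M.r) := by
  intro hy
  have hs : M.O (M.φ M.r) := PMap.O_φ.2 M.O_r
  have e1 := h.2 _ _ hy hs (sc_one _ _)
  have e2 : M.φ (M.φ M.r) = M.σ M.r := by rw [← e1, PMap.φ_apply, h.1.inv]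
  rw [e2] at h2
  exact h2 (h.2 _ _ M.O_r (e2 ▸ PMap.O_φ.2 hs) (sc_one _ _)).symm

theorem conf_del {M : PMap X} (h : M.Good) (h2 : M.φ (M.φ M.r) ≠ M.r) :
    Conf M.del M M.r (M.α M.r) (M.σ M.r) (M.φ (M.σ M.r)) (M.φ M.r) := by
  have hy := good_nO h h2
  have hp := h.1
  set x := M.r with hx
  have ly := α_live hp.rlive
  have φy : M.φ (M.α x) = M.σ x := by rw [PMap.φ_apply, hp.inv]
  have tri := hp.tri _ ly hy
  rw [φy] at tri
  have nOb : ¬ M.O (M.σ x) := by rw [← φy, PMap.O_φ]; exact hy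
  have nOt : ¬ M.O (M.φ (M.σ x)) := by rw [PMap.O_φ]; exact nOb
  have Os : M.O (M.φ x) := PMap.O_φ.2 M.O_r
  have Ox : M.O x := M.O_r
  have ne : ∀ {u v : X}, M.O u → ¬ M.O v → u ≠ v := fun h1 h2 e => h2 (e ▸ h1)
  have lb := σ_live hp.ghost hp.rlive
  have lt := φ_live hp.ghost lb
  have xy : x ≠ M.α x := hp.rlive.symm
  have yb : M.α x ≠ M.σ x := by rw [← φy]; exact (φ_ne hp.noloop ly).symm
  have bt := (φ_ne hp.noloop lb).symm
  have yt : M.α x ≠ M.φ (M.σ x) := by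
    have := φ_ne hp.noloop lt
    rw [tri] at this; exact this
  have xs := (φ_ne hp.noloop hp.rlive).symm
  have hσ : ∀ d, M.del.σ d = swap (M.α x) (M.φ x) (swap x (M.σ x) (M.σ d)) := fun d => rfl
  have hα : ∀ d, M.del.α d = swap x (M.α x) (M.α d) := fun d => rfl
  have hαb : M.del.α (M.σ x) = M.α (M.σ x) := by
    rw [hα, swap_apply_of_ne_of_ne]
    · intro e; have := congrArg M.α e; rw [hp.inv] at this; exact yb this.symm
    · intro e; exact (ne Ox nOb) (M.α.injective e).symm
  have φb : M.del.φ (M.σ x) = M.φ (M.σ x) := by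
    rw [PMap.φ_apply, hαb, hσ, ← PMap.φ_apply, swap_apply_of_ne_of_ne (ne Ox nOt).symm bt.symm,
      swap_apply_of_ne_of_ne yt.symm (ne Os nOt).symm]
  have hαt : M.del.α (M.φ (M.σ x)) = M.α (M.φ (M.σ x)) := by
    rw [hα, swap_apply_of_ne_of_ne]
    · intro e; have := congrArg M.α e; rw [hp.inv] at this; exact yt this.symm
    · intro e; exact (ne Ox nOt) (M.α.injective e).symm
  have φt : M.del.φ (M.φ (M.σ x)) = M.φ x := by
    rw [PMap.φ_apply, hαt, hσ, ← PMap.φ_apply, tri, swap_apply_of_ne_of_ne xy.symm yb,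
      swap_apply_left]
  exact
  { xy := xy
    xb := ne Ox nOb
    xt := ne Ox nOt
    xs := xs
    yb := yb
    yt := yt
    ys := (ne Os hy).symm
    bt := bt
    bs := (ne Os nOb).symm
    ts := (ne Os nOt).symm
    σx := by rw [hσ, swap_apply_right, swap_apply_of_ne_of_ne xy xs]
    σy := by
      rw [hσ, ← PMap.φ_apply, swap_apply_of_ne_of_ne xs.symm (ne Os nOb), swap_apply_right]
    αx := by rw [hα, swap_apply_right]
    αy := by rw [hα, hp.inv, swap_apply_left]
    φb := φb
    φt := φt
    σM := by
      ext d; simp only [mul_apply, hσ, swap_apply_self]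
    αM := by
      ext d; simp only [mul_apply, hα, swap_apply_self]
    rN := rfl
    rM := rfl }

theorem Conf.pre {N M : PMap X} {x y b t s : X} (c : Conf N M x y b t s) (h : M.Good) :
    N.Pre ∧ N.Addable := by
  obtain ⟨hp, hb⟩ := h
  have hsN : N.φ (N.φ N.r) = s := by rw [c.rN, c.φb, c.φt]
  have nxy : ¬ M.σ.SameCycle x y := by
    have := hp.noloop x (by rw [c.Mαx]; exact c.xy.symm)
    rwa [c.Mαx] at this
  have liveM' : ∀ {d}, N.α d ≠ d → M.α d ≠ d := fun h => c.liveM.2 (Or.inr (Or.inr h))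
  have lx : M.α x ≠ x := by rw [c.Mαx]; exact c.xy.symm
  have ly : M.α y ≠ y := by rw [c.Mαy]; exact c.xy
  have lb : N.α b ≠ b := by
    have := σ_live hp.ghost lx
    rw [c.Mσx] at this
    rwa [c.Mα c.xb.symm c.yb.symm] at this
  have ls : N.α s ≠ s := by
    have := φ_live hp.ghost lx
    rw [c.Mφx] at this
    rwa [c.Mα c.xs.symm c.ys.symm] at this
  have inv : ∀ d, N.α (N.α d) = d := by
    intro d
    by_cases h1 : d = x
    · rw [h1, c.αx, c.αx]
    by_cases h2 : d = y
    · rw [h2, c.αy, c.αy]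
    rw [← c.Mα h1 h2, ← c.Mα, hp.inv]
    · rw [c.Mα h1 h2]; exact c.α_ne_x h1
    · rw [c.Mα h1 h2]; exact c.α_ne_y h2
  refine ⟨⟨inv, ?_, ?_, ?_, ?_, ?_, ?_, c.planar_iff.1 hp.planar, ?_⟩, ?_, ?_⟩
  · intro d hd
    by_cases h1 : d = x
    · rw [h1, c.σx]
    by_cases h2 : d = y
    · rw [h2, c.σy]
    have hd' := hp.ghost d (by rw [c.Mα h1 h2, hd])
    have e : N.σ d = swap y s (swap x b (M.σ d)) := by
      rw [c.σM]; simp only [mul_apply, swap_apply_self]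
    rw [e, hd', swap_apply_of_ne_of_ne h1 (fun e : d = b => lb (e ▸ hd)),
      swap_apply_of_ne_of_ne h2 (fun e : d = s => ls (e ▸ hd))]
  · rw [c.rN]; exact lb
  · intro d hd
    have := hp.conn d (liveM' hd)
    rw [c.rM, c.jr, c.hx_x, Conf.hx_of (c.liveN_ne hd).1 (c.liveN_ne hd).2] at this
    rw [c.rN]; exact this
  · intro d hd hO
    obtain ⟨h1, h2⟩ := c.liveN_ne hd
    have hO2 : ¬ N.O (N.φ d) := fun e => hO (PMap.O_φ.1 e)
    have := hp.tri d (liveM' hd) (by rw [c.O_iff]; tauto)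
    rwa [c.Mφ_inner h1 h2 hO, c.Mφ_inner (c.φ_ne_x h1) (c.φ_ne_y h2) hO2, c.Mφ_inner
      (c.φ_ne_x (c.φ_ne_x h1)) (c.φ_ne_y (c.φ_ne_y h2)) (fun e => hO2 (PMap.O_φ.1 e))] at this
  · intro d hd
    obtain ⟨h1, h2⟩ := c.liveN_ne hd
    have := hp.noloop d (liveM' hd)
    rwa [c.Mα h1 h2, c.sc' h1 h2 (c.α_ne_x h1) (c.α_ne_y h2)] at this
  · intro d d' hd hd' h3 h4
    obtain ⟨h1, h2⟩ := c.liveN_ne hd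
    obtain ⟨h1', h2'⟩ := c.liveN_ne hd'
    apply hp.simp d d' (liveM' hd) (liveM' hd')
    · rwa [c.sc' h1 h2 h1' h2']
    · rwa [c.Mα h1 h2, c.Mα h1' h2', c.sc' (c.α_ne_x h1) (c.α_ne_y h2) (c.α_ne_x h1') (c.α_ne_y h2')]
  · have key : ∀ d, N.O d → d ≠ t → N.σ.SameCycle b d → d = b := by
      intro d hO ht hs
      by_contra hne
      have hx1 : d ≠ x := fun e => c.nOx (e ▸ hO)
      exact hx1 (hb d x ((c.O_iff d).2 (Or.inr ⟨hO, hne, ht⟩)) ((c.O_iff x).2 (Or.inl rfl))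
        ((c.scx hx1 (fun e => c.nOy (e ▸ hO))).2 hs).symm)
    intro d d' h1 h2 h3 h4 h5
    rw [c.rN, c.φb] at h4 h5
    by_cases e1 : d = b
    · rw [e1] at h3 ⊢; exact (key d' h2 h5 h3).symm
    by_cases e2 : d' = b
    · rw [e2] at h3 ⊢; exact key d h1 h4 h3.symm
    apply hb d d' ((c.O_iff d).2 (Or.inr ⟨h1, e1, h4⟩)) ((c.O_iff d').2 (Or.inr ⟨h2, e2, h5⟩))
    rwa [c.sc' (fun e => c.nOx (e ▸ h1)) (fun e => c.nOy (e ▸ h1)) (fun e => c.nOx (e ▸ h2)) (fun e => c.nOy (e ▸ h2))]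
  · rw [hsN, c.rN, ← c.scxy]; exact nxy
  · rw [hsN, c.rN]
    rintro ⟨e, he, h1, h2⟩
    obtain ⟨h3, h4⟩ := c.liveN_ne he
    apply h3
    refine (hp.simp x e lx (liveM' he) ((c.scx h3 h4).2 h1) ?_).symm
    rw [c.Mαx, c.Mα h3 h4, c.scy (c.α_ne_x h3) (c.α_ne_y h4)]
    exact h2

end adddel
end Brown

set_option linter.unusedSectionVars false
namespace Brown
open Equiv Equiv.Perm
section union
variable {X : Type}

/-- `f` is `g` on `L` and `h` off `L` -/
structure Un (L : X → Prop) (f g h : Perm X) : Prop where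
  l : ∀ d, L d → f d = g d
  r : ∀ d, ¬ L d → f d = h d
  gl : ∀ d, ¬ L d → g d = d
  hr : ∀ d, L d → h d = d

theorem Un.one (L : X → Prop) : Un L 1 1 1 := ⟨fun _ _ => rfl, fun _ _ => rfl, fun _ _ => rfl, fun _ _ => rfl⟩

namespace Un
variable {L : X → Prop} {f g h : Perm X} (u : Un L f g h)
include u
theorem Lg {d : X} : L (g d) ↔ L d := by
  constructor
  · intro h1; by_contra h2; rw [u.gl d h2] at h1; exact h2 h1
  · intro h1; by_contra h2
    have := u.gl _ h2
    rw [g.injective this] at h2; exact h2 h1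
theorem Lh {d : X} : L (h d) ↔ L d := by
  constructor
  · intro h1; by_contra h2
    have := u.hr _ h1
    rw [h.injective this] at h1; exact h2 h1
  · intro h1; rw [u.hr d h1]; exact h1
theorem Lf {d : X} : L (f d) ↔ L d := by
  by_cases h1 : L d
  · rw [u.l d h1, u.Lg]
  · rw [u.r d h1, u.Lh]
theorem invg {S : X → Prop} (hS : ∀ d, S (f d) ↔ S d) (d : X) : S (g d) ↔ S d := by
  by_cases h1 : L d
  · rw [← u.l d h1, hS]
  · rw [u.gl d h1]
theorem invh {S : X → Prop} (hS : ∀ d, S (f d) ↔ S d) (d : X) : S (h d) ↔ S d := by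
  by_cases h1 : L d
  · rw [u.hr d h1]
  · rw [← u.r d h1, hS]
theorem symm : Un (fun d => ¬ L d) f h g :=
  ⟨u.r, fun d h => u.l d (not_not.1 h), fun d h => u.hr d (not_not.1 h), u.gl⟩
theorem mul {f' g' h' : Perm X} (u' : Un L f' g' h') : Un L (f * f') (g * g') (h * h') where
  l d hd := by rw [mul_apply, mul_apply, u'.l d hd, u.l _ (u'.Lg.2 hd)]
  r d hd := by rw [mul_apply, mul_apply, u'.r d hd, u.r _ (fun e => hd (u'.Lh.1 e))]
  gl d hd := by rw [mul_apply, u'.gl d hd, u.gl d hd]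
  hr d hd := by rw [mul_apply, u'.hr d hd, u.hr d hd]
end Un

theorem un_mul {L : X → Prop} {g h : Perm X} (gl : ∀ d, ¬ L d → g d = d) (hr : ∀ d, L d → h d = d) :
    Un L (g * h) g h where
  l d hd := by rw [mul_apply, hr d hd]
  r d hd := by
    rw [mul_apply, gl]
    intro h1
    have := hr _ h1
    rw [h.injective this] at h1; exact hd h1
  gl := gl
  hr := hr

section J
variable {L : X → Prop} {f g h f' g' h' : Perm X}

theorem Un.fixJ (u : Un L f g h) (u' : Un L f' g' h') {x y : X} (hx : L x) (hJ : Jrel h h' x y) :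
    x = y := by
  by_contra hne
  have := hJ (fun d => d = x) ⟨fun d => ?_, fun d => ?_⟩
  · exact hne (this.1 rfl).symm
  · constructor
    · intro e
      have h1 : L d := u.Lh.1 (e ▸ hx)
      rw [u.hr d h1] at e; exact e
    · intro e; rw [e, u.hr x hx]
  · constructor
    · intro e
      have h1 : L d := u'.Lh.1 (e ▸ hx)
      rw [u'.hr d h1] at e; exact e
    · intro e; rw [e, u'.hr x hx]

theorem Un.J_of_g (u : Un L f g h) (u' : Un L f' g' h') {x y : X} (hJ : Jrel g g' x y) :
    Jrel f f' x y := fun S hS => hJ S ⟨u.invg hS.1, u'.invg hS.2⟩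

theorem Un.JL (u : Un L f g h) (u' : Un L f' g' h') {x y : X} (hJ : Jrel f f' x y) (hx : L x) : L y :=
  (hJ L ⟨fun _ => u.Lf, fun _ => u'.Lf⟩).1 hx

theorem Un.J_g (u : Un L f g h) (u' : Un L f' g' h') {x y : X} (hx : L x) :
    Jrel f f' x y ↔ Jrel g g' x y := by
  refine ⟨fun hJ => ?_, u.J_of_g u'⟩
  have hi := inv_J g g' x
  have key : ∀ d, ¬ L d → ¬ Jrel g g' x d := fun d hd hJ =>
    hd ((hJ L ⟨fun _ => u.Lg, fun _ => u'.Lg⟩).1 hx)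
  refine (hJ (fun d => Jrel g g' x d) ⟨fun d => ?_, fun d => ?_⟩).1 (Jrel.refl _ _ _)
  · by_cases hd : L d
    · rw [u.l d hd]; exact hi.1 d
    · exact iff_of_false (key _ (fun e => hd (u.Lf.1 e))) (key _ hd)
  · by_cases hd : L d
    · rw [u'.l d hd]; exact hi.2 d
    · exact iff_of_false (key _ (fun e => hd (u'.Lf.1 e))) (key _ hd)

theorem Un.J_h (u : Un L f g h) (u' : Un L f' g' h') {x y : X} (hx : ¬ L x) :
    Jrel f f' x y ↔ Jrel h h' x y := u.symm.J_g u'.symm hx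

theorem Un.K_eq [Fintype X] (u : Un L f g h) (u' : Un L f' g' h') :
    K f f' + Nat.card X = K g g' + K h h' := by
  classical
  refine card_disj (J f f') (J g g') (J h h') ?_ ?_
  · intro x y
    change Jrel f f' x y ↔ Jrel g g' x y ∨ Jrel h h' x y
    by_cases hx : L x
    · rw [u.J_g u' hx]
      refine ⟨Or.inl, fun e => e.elim id fun e => ?_⟩
      rw [← u.fixJ u' hx e]; exact Jrel.refl _ _ _
    · rw [u.J_h u' hx]
      refine ⟨Or.inr, fun e => e.elim (fun e => ?_) id⟩
      rw [← u.symm.fixJ u'.symm hx e]; exact Jrel.refl _ _ _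
  · intro x
    by_cases hx : L x
    · right; intro y hy; have := u.fixJ u' hx hy
      first | exact this | exact this.symm
    · left; intro y hy; have := u.symm.fixJ u'.symm hx hy
      first | exact this | exact this.symm

theorem Un.cyc_eq [Fintype X] (u : Un L f g h) : cyc f + Nat.card X = cyc g + cyc h :=
  u.K_eq (Un.one L)
theorem Un.sc_g (u : Un L f g h) {x y : X} (hx : L x) : f.SameCycle x y ↔ g.SameCycle x y := by
  rw [sc_iff, sc_iff]; exact u.J_g (Un.one L) hx
theorem Un.sc_h (u : Un L f g h) {x y : X} (hx : ¬ L x) : f.SameCycle x y ↔ h.SameCycle x y := by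
  rw [sc_iff, sc_iff]; exact u.J_h (Un.one L) hx
theorem Un.scL (u : Un L f g h) {x y : X} (h : f.SameCycle x y) (hx : L x) : L y :=
  u.JL (Un.one L) (sc_iff.1 h) hx
end J

variable [DecidableEq X]

structure WConf (A B W : PMap X) (L : X → Prop) (a b o : X) : Prop where
  La : L a
  Lb : ¬ L b
  Lo : ¬ L o
  σA : ∀ d, ¬ L d → A.σ d = d
  αA : ∀ d, ¬ L d → A.α d = d
  σB : ∀ d, L d → B.σ d = d
  αB : ∀ d, L d → B.α d = d
  rA : A.r = a
  rB : B.r = b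
  rW : W.r = b
  φb : B.φ b = o
  σW : W.σ = swap a o * (A.σ * B.σ)
  αW : W.α = A.α * B.α

namespace WConf
variable {A B W : PMap X} {L : X → Prop} {a b o : X} (c : WConf A B W L a b o)
include c

theorem uσ : Un L (A.σ * B.σ) A.σ B.σ := un_mul c.σA c.σB
theorem uα : Un L W.α A.α B.α := by rw [c.αW]; exact un_mul c.αA c.αB
theorem uφ : Un L (A.σ * B.σ * W.α) A.φ B.φ := c.uσ.mul c.uα
theorem φW : W.φ = swap a o * (A.σ * B.σ * W.α) := by
  unfold PMap.φ; rw [c.σW]; simp only [mul_assoc]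
theorem ao : a ≠ o := fun e => c.Lo (e ▸ c.La)
theorem Wα_l {d : X} (h : L d) : W.α d = A.α d := c.uα.l d h
theorem Wα_r {d : X} (h : ¬ L d) : W.α d = B.α d := c.uα.r d h

theorem Wφ_l {d : X} (h : L d) (h2 : A.φ d ≠ a) : W.φ d = A.φ d := by
  rw [c.φW, mul_apply, c.uφ.l d h, swap_apply_of_ne_of_ne h2]
  intro e; exact c.Lo (e ▸ c.uφ.Lg.2 h)
theorem Wφ_r {d : X} (h : ¬ L d) (h2 : d ≠ b) : W.φ d = B.φ d := by
  rw [c.φW, mul_apply, c.uφ.r d h, swap_apply_of_ne_of_ne]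
  · intro e; exact h (c.uφ.Lh.1 (e.symm ▸ c.La))
  · intro e; rw [← c.φb] at e; exact h2 (B.φ.injective e)
theorem Wφb : W.φ b = a := by
  rw [c.φW, mul_apply, c.uφ.r b c.Lb, c.φb, swap_apply_right]
theorem Wφ_last {d : X} (h : A.φ d = a) : W.φ d = o := by
  have hd : L d := c.uφ.Lg.1 (h.symm ▸ c.La)
  rw [c.φW, mul_apply, c.uφ.l d hd, h, swap_apply_left]

variable [Finite X]
theorem nJ : ¬ Jrel (A.σ * B.σ) W.α a o := fun h => c.Lo (c.uσ.JL c.uα h c.La)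
theorem nscσ : ¬ (A.σ * B.σ).SameCycle a o := fun h => c.Lo (c.uσ.scL h c.La)
theorem nscφ : ¬ (A.σ * B.σ * W.α).SameCycle a o := fun h => c.Lo (c.uφ.scL h c.La)
theorem mσ : MergeAt (A.σ * B.σ) 1 W.σ 1 a o := by rw [c.σW]; exact mergeAt_swap c.nscσ
theorem mφ : MergeAt (A.σ * B.σ * W.α) 1 W.φ 1 a o := by rw [c.φW]; exact mergeAt_swap c.nscφ
theorem mJ : MergeAt (A.σ * B.σ) W.α W.σ W.α a o := c.mσ.mono _

theorem sc_ll {d e : X} (hd : L d) (he : L e) : W.σ.SameCycle d e ↔ A.σ.SameCycle d e := by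
  rw [sc_iff, c.mσ.iff, ← sc_iff, ← sc_iff, ← sc_iff, ← sc_iff, ← sc_iff, c.uσ.sc_g hd]
  refine ⟨?_, Or.inl⟩
  rintro (h | ⟨h1, h2⟩ | ⟨h1, h2⟩)
  · exact h
  · exact (c.Lo (c.uσ.scL h2.symm he)).elim
  · exact (c.Lo (c.uσ.scL h1 hd)).elim
theorem sc_rr {d e : X} (hd : ¬ L d) (he : ¬ L e) : W.σ.SameCycle d e ↔ B.σ.SameCycle d e := by
  rw [sc_iff, c.mσ.iff, ← sc_iff, ← sc_iff, ← sc_iff, ← sc_iff, ← sc_iff, c.uσ.sc_h hd]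
  refine ⟨?_, Or.inl⟩
  rintro (h | ⟨h1, h2⟩ | ⟨h1, h2⟩)
  · exact h
  · exact (hd (c.uσ.scL h1.symm c.La)).elim
  · exact (he (c.uσ.scL h2 c.La)).elim
theorem sc_lr {d e : X} (hd : L d) (he : ¬ L e) :
    W.σ.SameCycle d e ↔ A.σ.SameCycle d a ∧ B.σ.SameCycle o e := by
  rw [sc_iff, c.mσ.iff, ← sc_iff, ← sc_iff, ← sc_iff, ← sc_iff, ← sc_iff, ← c.uσ.sc_g hd,
    ← c.uσ.sc_h c.Lo]
  refine ⟨?_, fun h => Or.inr (Or.inl h)⟩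
  rintro (h | h | ⟨h1, h2⟩)
  · exact (he (c.uσ.scL h hd)).elim
  · exact h
  · exact (he (c.uσ.scL h2 c.La)).elim

theorem OA_L {d : X} (h : A.O d) : L d := by
  have : (A.σ * B.σ * W.α).SameCycle a d := (c.uφ.sc_g c.La).2 (by have := h; unfold PMap.O at this; rwa [c.rA] at this)
  exact c.uφ.scL this c.La
theorem OB_L {d : X} (h : B.O d) : ¬ L d := by
  have : (A.σ * B.σ * W.α).SameCycle b d := (c.uφ.sc_h c.Lb).2 (by have := h; unfold PMap.O at this; rwa [c.rB] at this)
  exact fun hd => c.Lb (c.uφ.scL this.symm hd)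
theorem OBo : B.O o := by rw [← c.φb, PMap.O_φ, ← c.rB]; exact B.O_r

theorem O_iff (d : X) : W.O d ↔ A.O d ∨ B.O d := by
  have hb : ∀ e, (A.σ * B.σ * W.α).SameCycle b e ↔ B.O e := by
    intro e; rw [c.uφ.sc_h c.Lb]; unfold PMap.O; rw [c.rB]
  have ha : ∀ e, (A.σ * B.σ * W.α).SameCycle a e ↔ A.O e := by
    intro e; rw [c.uφ.sc_g c.La]; unfold PMap.O; rw [c.rA]
  unfold PMap.O
  rw [c.rW, sc_iff, c.mφ.iff, ← sc_iff, ← sc_iff, ← sc_iff, ← sc_iff, ← sc_iff, hb, hb, hb, ha]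
  change _ ↔ A.O d ∨ B.O d
  have h1 := c.OBo
  have h2 : ¬ B.O a := fun h => c.OB_L h c.La
  tauto
theorem O_l {d : X} (hd : L d) : W.O d ↔ A.O d := by
  rw [c.O_iff]; exact ⟨fun h => h.elim id fun h => (c.OB_L h hd).elim, Or.inl⟩
theorem O_r' {d : X} (hd : ¬ L d) : W.O d ↔ B.O d := by
  rw [c.O_iff]; exact ⟨fun h => h.elim (fun h => (hd (c.OA_L h)).elim) id, Or.inr⟩

theorem Wφ_l_inner {d : X} (h : L d) (h2 : ¬ A.O d) : W.φ d = A.φ d :=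
  c.Wφ_l h (fun e => h2 (by rw [← PMap.O_φ, e, ← c.rA]; exact A.O_r))
theorem Wφ_r_inner {d : X} (h : ¬ L d) (h2 : ¬ B.O d) : W.φ d = B.φ d :=
  c.Wφ_r h (fun e => h2 (by rw [e, ← c.rB]; exact B.O_r))

theorem tri_l {d : X} (h : L d) (h2 : ¬ A.O d) :
    W.φ (W.φ (W.φ d)) = A.φ (A.φ (A.φ d)) := by
  have h3 : ¬ A.O (A.φ d) := fun e => h2 (PMap.O_φ.1 e)
  have h4 : ¬ A.O (A.φ (A.φ d)) := fun e => h3 (PMap.O_φ.1 e)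
  rw [c.Wφ_l_inner h h2, c.Wφ_l_inner (c.uφ.Lg.2 h) h3,
    c.Wφ_l_inner (c.uφ.Lg.2 (c.uφ.Lg.2 h)) h4]
theorem tri_r {d : X} (h : ¬ L d) (h2 : ¬ B.O d) :
    W.φ (W.φ (W.φ d)) = B.φ (B.φ (B.φ d)) := by
  have h3 : ¬ B.O (B.φ d) := fun e => h2 (PMap.O_φ.1 e)
  have h4 : ¬ B.O (B.φ (B.φ d)) := fun e => h3 (PMap.O_φ.1 e)
  have l1 : ¬ L (B.φ d) := fun e => h (c.uφ.Lh.1 e)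
  have l2 : ¬ L (B.φ (B.φ d)) := fun e => l1 (c.uφ.Lh.1 e)
  rw [c.Wφ_r_inner h h2, c.Wφ_r_inner l1 h3, c.Wφ_r_inner l2 h4]

theorem cycσ1 : cyc W.σ + 1 = cyc (A.σ * B.σ) := by rw [c.σW]; exact cyc_swap c.nscσ
theorem cycφ1 : cyc W.φ + 1 = cyc (A.σ * B.σ * W.α) := by rw [c.φW]; exact cyc_swap c.nscφ
theorem K1 : K W.σ W.α + 1 = K (A.σ * B.σ) W.α := c.mJ.K_eq c.nJ
end WConf
namespace WConf
variable {A B W : PMap X} {L : X → Prop} {a b o : X} [Fintype X] (c : WConf A B W L a b o)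
include c
theorem cycσ : cyc W.σ + 1 + Nat.card X = cyc A.σ + cyc B.σ := by
  have := c.cycσ1; have := c.uσ.cyc_eq; omega
theorem cycα : cyc W.α + Nat.card X = cyc A.α + cyc B.α := c.uα.cyc_eq
theorem cycφ : cyc W.φ + 1 + Nat.card X = cyc A.φ + cyc B.φ := by
  have := c.cycφ1; have := c.uφ.cyc_eq; omega
theorem K_eq : K W.σ W.α + 1 + Nat.card X = K A.σ A.α + K B.σ B.α := by
  have := c.K1; have := c.uσ.K_eq c.uα; omega
end WConf
end union
end Brown

set_option linter.unusedSectionVars false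
namespace Brown
open Equiv Equiv.Perm
section wedge
variable {X : Type} [DecidableEq X] [Fintype X]

def PMap.wd (A B : PMap X) : PMap X where
  σ := swap A.r (B.φ B.r) * (A.σ * B.σ)
  α := A.α * B.α
  r := B.r

def Dj (A B : PMap X) : Prop := ∀ d, A.α d ≠ d → B.α d = d

theorem wconf_wd {A B : PMap X} (hA : A.Pre) (hB : B.Pre) (h : Dj A B) :
    WConf A B (A.wd B) (fun d => A.α d ≠ d) A.r B.r (B.φ B.r) where
  La := hA.rlive
  Lb := fun e => hB.rlive (h _ e)
  Lo := fun e => φ_live hB.ghost hB.rlive (h _ e)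
  σA := fun d e => hA.ghost d (not_not.1 e)
  αA := fun _ e => not_not.1 e
  σB := fun d e => hB.ghost d (h d e)
  αB := h
  rA := rfl
  rB := rfl
  rW := rfl
  φb := rfl
  σW := rfl
  αW := rfl

theorem WConf.eq_wd {A B W : PMap X} {L : X → Prop} {a b o : X} (c : WConf A B W L a b o) :
    W = A.wd B := by
  have h1 := c.σW
  have h2 := c.αW
  have h3 := c.rW
  unfold PMap.wd
  rw [c.rA, c.rB, c.φb, ← h1, ← h2, ← h3]

theorem WConf.pre {A B W : PMap X} {L : X → Prop} {a b o : X} (c : WConf A B W L a b o)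
    (hA : A.Good) (hB : B.Good) : W.Pre ∧ W.Addable ∧ ¬ W.Bdry := by
  have pA := hA.1
  have pB := hB.1
  have nl : ∀ {d}, ¬ L d → ¬ L (W.α d) := fun h e => h (c.uα.Lf.1 e)
  have ll : ∀ {d}, L d → L (W.α d) := fun h => c.uα.Lf.2 h
  have lo : B.α o ≠ o := live_O pB c.OBo
  have la : A.α a ≠ a := c.rA ▸ pA.rlive
  have OAa : A.O a := c.rA ▸ A.O_r
  have nlW : ∀ d, W.α d ≠ d → ¬ W.σ.SameCycle d (W.α d) := by
    intro d hd
    by_cases h : L d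
    · rw [c.sc_ll h (ll h)]; rw [c.Wα_l h] at hd ⊢; exact pA.noloop d hd
    · rw [c.sc_rr h (nl h)]; rw [c.Wα_r h] at hd ⊢; exact pB.noloop d hd
  refine ⟨⟨?_, ?_, ?_, ?_, ?_, nlW, ?_, ?_, ?_⟩, ⟨?_, ?_⟩, ?_⟩
  · intro d
    by_cases h : L d
    · rw [c.Wα_l (ll h), c.Wα_l h, pA.inv]
    · rw [c.Wα_r (nl h), c.Wα_r h, pB.inv]
  · intro d hd
    rw [c.σW, mul_apply]
    by_cases h : L d
    · rw [c.Wα_l h] at hd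
      rw [c.uσ.l d h, pA.ghost d hd, swap_apply_of_ne_of_ne (fun e : d = a => la (e ▸ hd))
        (fun e : d = o => c.Lo (e ▸ h))]
    · rw [c.Wα_r h] at hd
      rw [c.uσ.r d h, pB.ghost d hd, swap_apply_of_ne_of_ne (fun e : d = a => h (e ▸ c.La))
        (fun e : d = o => lo (e ▸ hd))]
  · rw [c.rW, c.Wα_r c.Lb]; exact c.rB ▸ pB.rlive
  · intro d hd
    have hbo : Jrel (A.σ * B.σ) W.α b o := by
      rw [c.uσ.J_h c.uα c.Lb]; have := pB.conn o lo; rwa [c.rB] at this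
    rw [c.rW, c.mJ.iff]
    by_cases h : L d
    · right; right
      refine ⟨hbo, ?_⟩
      rw [c.uσ.J_g c.uα c.La]
      have := pA.conn d (by rwa [c.Wα_l h] at hd); rwa [c.rA] at this
    · left
      rw [c.uσ.J_h c.uα c.Lb]
      have := pB.conn d (by rwa [c.Wα_r h] at hd); rwa [c.rB] at this
  · intro d hd hO
    by_cases h : L d
    · rw [c.O_l h] at hO
      rw [c.tri_l h hO]; exact pA.tri d (by rwa [c.Wα_l h] at hd) hO
    · rw [c.O_r' h] at hO
      rw [c.tri_r h hO]; exact pB.tri d (by rwa [c.Wα_r h] at hd) hO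
  · have mixed : ∀ d d', W.α d ≠ d → L d → ¬ L d' → W.σ.SameCycle d d' →
        W.σ.SameCycle (W.α d) (W.α d') → False := by
      intro d d' hd h h' h1 h2
      rw [c.sc_lr h h'] at h1
      rw [c.sc_lr (ll h) (nl h'), c.Wα_l h] at h2
      rw [c.Wα_l h] at hd
      exact pA.noloop d hd (h1.1.trans h2.1.symm)
    intro d d' hd hd' h1 h2
    by_cases h : L d <;> by_cases h' : L d'
    · rw [c.sc_ll h h'] at h1
      rw [c.sc_ll (ll h) (ll h'), c.Wα_l h, c.Wα_l h'] at h2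
      rw [c.Wα_l h] at hd; rw [c.Wα_l h'] at hd'
      exact pA.simp d d' hd hd' h1 h2
    · exact (mixed d d' hd h h' h1 h2).elim
    · exact (mixed d' d hd' h' h h1.symm h2.symm).elim
    · rw [c.sc_rr h h'] at h1
      rw [c.sc_rr (nl h) (nl h'), c.Wα_r h, c.Wα_r h'] at h2
      rw [c.Wα_r h] at hd; rw [c.Wα_r h'] at hd'
      exact pB.simp d d' hd hd' h1 h2
  · have := c.cycσ; have := c.cycα; have := c.cycφ; have := c.K_eq
    have := pA.planar; have := pB.planar
    omega
  · have mixed : ∀ d d', W.O d → L d → ¬ L d' → W.σ.SameCycle d d' → d ≠ a → False := by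
      intro d d' hd h h' h1 h2
      rw [c.sc_lr h h'] at h1
      exact h2 (hA.2 _ _ ((c.O_l h).1 hd) OAa h1.1)
    intro d d' h1 h2 h3 h4 h5
    rw [c.rW, c.Wφb] at h4 h5
    by_cases h : L d <;> by_cases h' : L d'
    · exact hA.2 _ _ ((c.O_l h).1 h1) ((c.O_l h').1 h2) ((c.sc_ll h h').1 h3)
    · exact (mixed d d' h1 h h' h3 h4).elim
    · exact (mixed d' d h2 h' h h3.symm h5).elim
    · exact hB.2 _ _ ((c.O_r' h).1 h1) ((c.O_r' h').1 h2) ((c.sc_rr h h').1 h3)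
  all_goals
    have φa : A.φ a ≠ a := φ_ne pA.noloop la
    have hs : W.φ (W.φ W.r) = A.φ a := by
      rw [c.rW, c.Wφb, c.Wφ_l c.La φa]
    have Ls : L (A.φ a) := c.uφ.Lg.2 c.La
    have nsa : ¬ A.σ.SameCycle (A.φ a) a := fun h => φa (hA.2 _ _ (PMap.O_φ.2 OAa) OAa h)
  · rw [hs, c.rW]
    intro h
    exact nsa ((c.sc_lr Ls c.Lb).1 h.symm).1
  · rw [hs, c.rW]
    rintro ⟨e, he, h1, h2⟩
    by_cases h : L e
    · have := ((c.sc_lr h c.Lb).1 h1.symm).2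
      have e1 := hB.2 _ _ c.OBo (c.rB ▸ B.O_r) this
      have := φ_ne pB.noloop pB.rlive
      rw [c.rB, c.φb] at this
      exact this e1
    · exact nsa ((c.sc_lr Ls (nl h)).1 h2).1
  · intro hb
    refine c.ao (hb a o ((c.O_l c.La).2 OAa) ((c.O_r' c.Lo).2 c.OBo) ?_)
    rw [c.sc_lr c.La c.Lo]
    exact ⟨SameCycle.refl _ _, SameCycle.refl _ _⟩

open Classical in
/-- restriction of a permutation to an invariant predicate -/
noncomputable def rest (L : X → Prop) (f : Perm X) (h : ∀ d, L (f d) ↔ L d) : Perm X :=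
  ofSubtype (f.subtypePerm (p := L) h)

theorem rest_l {L : X → Prop} {f : Perm X} (h : ∀ d, L (f d) ↔ L d) {d : X} (hd : L d) :
    rest L f h d = f d := by
  classical
  unfold rest
  rw [ofSubtype_apply_of_mem _ hd]; rfl
theorem rest_r {L : X → Prop} {f : Perm X} (h : ∀ d, L (f d) ↔ L d) {d : X} (hd : ¬ L d) :
    rest L f h d = d := by
  classical
  unfold rest
  rw [ofSubtype_apply_of_not_mem _ hd]

theorem exists_un (L : X → Prop) (f : Perm X) (h : ∀ d, L (f d) ↔ L d) :
    ∃ g h, Un L f g h ∧ f = g * h := by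
  have h' : ∀ d, ¬ L (f d) ↔ ¬ L d := fun d => not_congr (h d)
  have u : Un L f (rest L f h) (rest (fun d => ¬ L d) f h') :=
    ⟨fun d hd => (rest_l h hd).symm, fun d hd => (rest_l (L := fun d => ¬ L d) h' hd).symm,
    fun d hd => rest_r h hd, fun d hd => rest_r (L := fun d => ¬ L d) h' (not_not.2 hd)⟩
  refine ⟨_, _, u, ?_⟩
  have u2 := un_mul u.gl u.hr
  ext d
  by_cases hd : L d
  · rw [u.l d hd, u2.l d hd]
  · rw [u.r d hd, u2.r d hd]

theorem split {W : PMap X} (p : W.Pre) (nb : ¬ W.Bdry) :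
    ∃ A B : PMap X, ∃ (L : X → Prop) (a b o : X), WConf A B W L a b o ∧ A.Good ∧ B.Good ∧ Dj A B := by
  classical
  obtain ⟨o, hO, hoa, hsc⟩ : ∃ o, W.O o ∧ o ≠ W.φ W.r ∧ W.σ.SameCycle (W.φ W.r) o := by
    unfold PMap.Bdry at nb
    push Not at nb
    obtain ⟨d, d', h1, h2, h3, h4⟩ := nb
    by_cases e1 : d = W.φ W.r
    · exact ⟨d', h2, fun e => h4 (e1.trans e.symm), e1 ▸ h3⟩
    by_cases e2 : d' = W.φ W.r
    · exact ⟨d, h1, fun e => h4 (e.trans e2.symm), e2 ▸ h3.symm⟩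
    exact (h4 (p.bdry' d d' h1 h2 h3 e1 e2)).elim
  obtain ⟨b, hb⟩ : ∃ b, W.r = b := ⟨_, rfl⟩
  obtain ⟨a, ha⟩ : ∃ a, W.φ b = a := ⟨_, rfl⟩
  rw [hb, ha] at hoa hsc
  have hao : a ≠ o := hoa.symm
  have hOa : W.O a := by rw [← ha, PMap.O_φ, ← hb]; exact W.O_r
  have la := live_O p hOa
  have lo := live_O p hO
  obtain ⟨s, hs⟩ : ∃ s, s = swap a o * W.σ := ⟨_, rfl⟩
  have hm : MergeAt s 1 W.σ 1 a o := hs ▸ mergeAt_swap' hao hsc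
  have hmJ := hm.mono W.α
  have hscφ : W.φ.SameCycle a o := (show W.φ.SameCycle W.r a from hOa).symm.trans hO
  have hsφ : s * W.α = swap a o * W.φ := by rw [hs]; rfl
  have nJ : ¬ Jrel s W.α a o := by
    intro h
    have e1 := hmJ.K_eq_same h
    have e2 := cyc_swap' hao hsc
    have e3 := cyc_swap' hao hscφ
    have e4 := genus s W.α p.inv
    rw [hsφ] at e4
    rw [← hs] at e2
    have := p.planar
    omega
  obtain ⟨L, hL⟩ : ∃ L : X → Prop, ∀ d, L d ↔ Jrel s W.α a d := ⟨_, fun d => Iff.rfl⟩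
  have hi := inv_J s W.α a
  obtain ⟨gσ, hσ, uσ, eσ⟩ := exists_un L s (fun d => by rw [hL, hL]; exact hi.1 d)
  obtain ⟨gα, hα, uα, eα⟩ := exists_un L W.α (fun d => by rw [hL, hL]; exact hi.2 d)
  have La : L a := (hL a).2 (Jrel.refl _ _ _)
  have Lo : ¬ L o := fun h => nJ ((hL o).1 h)
  have hbo : s (W.α b) = o := by
    have : (s * W.α) b = o := by rw [hsφ, mul_apply, ha, swap_apply_left]
    exact this
  have Lb : ¬ L b := fun h => Lo (by rw [← hbo, uσ.Lf, uα.Lf]; exact h)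
  have gh : ∀ d, W.α d = d → s d = d := fun d hd => by
    rw [hs, mul_apply, p.ghost d hd, swap_apply_of_ne_of_ne (fun e : d = a => la (e ▸ hd))
      (fun e : d = o => lo (e ▸ hd))]
  have c : WConf ⟨gσ, gα, a⟩ ⟨hσ, hα, b⟩ W L a b o :=
    { La := La
      Lb := Lb
      Lo := Lo
      σA := uσ.gl
      αA := uα.gl
      σB := uσ.hr
      αB := uα.hr
      rA := rfl
      rB := rfl
      rW := hb
      φb := by
        rw [PMap.φ_apply]
        change hσ (hα b) = o
        rw [← uα.r b Lb, ← uσ.r _ (fun h => Lb (uα.Lf.1 h)), hbo]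
      σW := by
        change W.σ = swap a o * (gσ * hσ)
        rw [← eσ, hs]; ext d; simp
      αW := eα }
  have nl : ∀ {d}, ¬ L d → ¬ L (W.α d) := fun h e => h (c.uα.Lf.1 e)
  have ll : ∀ {d}, L d → L (W.α d) := fun h => c.uα.Lf.2 h
  have Al : ∀ {d}, gα d ≠ d → L d := fun h => by_contra fun e => h (uα.gl _ e)
  have Bl : ∀ {d}, hα d ≠ d → ¬ L d := fun h e => h (uα.hr _ e)
  have Al' : ∀ {d}, gα d ≠ d → W.α d ≠ d := fun h => by rwa [uα.l _ (Al h)]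
  have Bl' : ∀ {d}, hα d ≠ d → W.α d ≠ d := fun h => by rwa [uα.r _ (Bl h)]
  have invA : ∀ d, gα (gα d) = d := by
    intro d
    by_cases h : L d
    · rw [← uα.l d h, ← uα.l _ (ll h), p.inv]
    · rw [uα.gl d h, uα.gl d h]
  have invB : ∀ d, hα (hα d) = d := by
    intro d
    by_cases h : L d
    · rw [uα.hr d h, uα.hr d h]
    · rw [← uα.r d h, ← uα.r _ (nl h), p.inv]
  have gA := genus gσ gα invA
  have gB := genus hσ hα invB
  have e1 := c.cycσ; have e2 := c.cycα; have e3 := c.cycφ; have e4 := c.K_eq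
  have e5 := p.planar
  change cyc W.σ + 1 + Nat.card X = cyc gσ + cyc hσ at e1
  change cyc W.α + Nat.card X = cyc gα + cyc hα at e2
  change cyc W.φ + 1 + Nat.card X = cyc (gσ * gα) + cyc (hσ * hα) at e3
  change K W.σ W.α + 1 + Nat.card X = K gσ gα + K hσ hα at e4
  have hus : gσ * hσ = s := eσ.symm
  have key : ∀ d, W.O d → L d → W.σ.SameCycle a d → d = a := by
    intro d hd hl h
    by_contra hne
    have : d = o := p.bdry' d o hd hO (h.symm.trans hsc) (by rw [hb, ha]; exact hne)
      (by rw [hb, ha]; exact hoa)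
    exact Lo (this ▸ hl)
  have bA : (⟨gσ, gα, a⟩ : PMap X).Bdry := by
    intro d d' h1 h2 h3
    have l1 := c.OA_L h1
    have l2 := c.OA_L h2
    have h4 := (c.sc_ll l1 l2).2 h3
    have O1 := (c.O_l l1).2 h1
    have O2 := (c.O_l l2).2 h2
    by_cases e1 : d = a
    · rw [e1] at h4 ⊢; exact (key d' O2 l2 h4).symm
    by_cases e2 : d' = a
    · rw [e2] at h4 ⊢; exact key d O1 l1 h4.symm
    exact p.bdry' d d' O1 O2 h4 (by rw [hb, ha]; exact e1) (by rw [hb, ha]; exact e2)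
  have bB : (⟨hσ, hα, b⟩ : PMap X).Bdry := by
    intro d d' h1 h2 h3
    have l1 := c.OB_L h1
    have l2 := c.OB_L h2
    have h4 := (c.sc_rr l1 l2).2 h3
    exact p.bdry' d d' ((c.O_r' l1).2 h1) ((c.O_r' l2).2 h2) h4
      (by rw [hb, ha]; exact fun e => l1 (e ▸ La)) (by rw [hb, ha]; exact fun e => l2 (e ▸ La))
  refine ⟨_, _, L, a, b, o, c, ⟨?_, bA⟩, ⟨?_, bB⟩, fun d hd => uα.hr d (Al hd)⟩
  · refine ⟨invA, ?_, ?_, ?_, ?_, ?_, ?_, ?_, fun d d' h1 h2 h3 _ _ => bA d d' h1 h2 h3⟩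
    · intro d hd
      change gα d = d at hd
      change gσ d = d
      by_cases h : L d
      · rw [← uσ.l d h]; rw [← uα.l d h] at hd; exact gh d hd
      · exact uσ.gl d h
    · change gα a ≠ a
      rw [← uα.l a La]; exact la
    · intro d hd
      change Jrel gσ gα a d
      rw [← uσ.J_g uα La, ← hL]; exact Al hd
    · intro d hd hO
      rw [← c.tri_l (Al hd) hO]
      exact p.tri d (Al' hd) (by rw [c.O_l (Al hd)]; exact hO)
    · intro d hd
      have l := Al hd
      change ¬ gσ.SameCycle d (gα d)
      rw [← uα.l d l, ← c.sc_ll l (ll l)]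
      exact p.noloop d (Al' hd)
    · intro d d' hd hd' h1 h2
      have l := Al hd
      have l' := Al hd'
      change gσ.SameCycle (gα d) (gα d') at h2
      rw [← uα.l d l, ← uα.l d' l'] at h2
      exact p.simp d d' (Al' hd) (Al' hd') ((c.sc_ll l l').2 h1) ((c.sc_ll (ll l) (ll l')).2 h2)
    · change cyc gσ + cyc gα + cyc (gσ * gα) = Nat.card X + 2 * K gσ gα
      omega
  · refine ⟨invB, ?_, ?_, ?_, ?_, ?_, ?_, ?_, fun d d' h1 h2 h3 _ _ => bB d d' h1 h2 h3⟩
    · intro d hd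
      change hα d = d at hd
      change hσ d = d
      by_cases h : L d
      · exact uσ.hr d h
      · rw [← uσ.r d h]; rw [← uα.r d h] at hd; exact gh d hd
    · change hα b ≠ b
      rw [← uα.r b Lb, ← hb]; exact p.rlive
    · intro d hd
      change Jrel hσ hα b d
      have := p.conn d (Bl' hd)
      rw [hb, hmJ.iff] at this
      rw [← uσ.J_h uα Lb]
      rcases this with h | ⟨h1, h2⟩ | ⟨h1, h2⟩
      · exact h
      · exact (Lb ((hL b).2 h1.symm)).elim
      · exact (Bl hd ((hL d).2 h2)).elim
    · intro d hd hO
      rw [← c.tri_r (Bl hd) hO]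
      exact p.tri d (Bl' hd) (by rw [c.O_r' (Bl hd)]; exact hO)
    · intro d hd
      have l := Bl hd
      change ¬ hσ.SameCycle d (hα d)
      rw [← uα.r d l, ← c.sc_rr l (nl l)]
      exact p.noloop d (Bl' hd)
    · intro d d' hd hd' h1 h2
      have l := Bl hd
      have l' := Bl hd'
      change hσ.SameCycle (hα d) (hα d') at h2
      rw [← uα.r d l, ← uα.r d' l'] at h2
      exact p.simp d d' (Bl' hd) (Bl' hd') ((c.sc_rr l l').2 h1) ((c.sc_rr (nl l) (nl l')).2 h2)
    · change cyc hσ + cyc hα + cyc (hσ * hα) = Nat.card X + 2 * K hσ hα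
      omega

end wedge
end Brown

set_option linter.unusedSectionVars false
namespace Brown
open Equiv Equiv.Perm
section num
variable {X : Type} [Fintype X]

noncomputable def PMap.P (M : PMap X) : ℕ := Set.ncard {d | M.O d}
noncomputable def PMap.L (M : PMap X) : ℕ := Set.ncard {d | M.α d ≠ d}
def PMap.Num (M : PMap X) (m n : ℕ) : Prop :=
  M.P = m + 2 ∧ cyc M.σ + M.L = n + (m + 2) + Nat.card X

/-- the first outer dart after the second one adjacent to the root vertex -/
def PMap.Idx (M : PMap X) (k : ℕ) : Prop :=
  M.Adj M.r ((M.φ)^[k+2] M.r) ∧ ∀ j, j < k → ¬ M.Adj M.r ((M.φ)^[j+2] M.r)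

theorem period (f : Perm X) (a : X) : ∃ p, p = Set.ncard {d | f.SameCycle a d} ∧ 0 < p ∧ f^[p] a = a ∧
    ∀ i, 0 < i → i < p → f^[i] a ≠ a := by
  refine ⟨Function.minimalPeriod f a, ?_, ?_, Function.isPeriodicPt_minimalPeriod f a, ?_⟩
  · classical
    have : Fintype (MulAction.orbit (Subgroup.zpowers f) a) := Fintype.ofFinite _
    have h1 := MulAction.minimalPeriod_eq_card (a := f) (b := a)
    change Function.minimalPeriod f a = _ at h1
    rw [h1, ← Nat.card_eq_fintype_card]
    change Set.ncard _ = _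
    congr 1
    ext d
    simp only [MulAction.mem_orbit_iff, Set.mem_ofPred_eq, Subgroup.exists_zpowers]
    rfl
  · apply Function.minimalPeriod_pos_of_mem_periodicPts
    exact Function.Injective.mem_periodicPts f.injective a
  · intro i h0 h1 h2
    exact absurd (Function.IsPeriodicPt.minimalPeriod_le h0 h2) (by omega)

variable [DecidableEq X]

theorem Conf.P_eq {N M : PMap X} {x y b t s : X} (c : Conf N M x y b t s) : N.P = M.P + 1 := by
  have h : insert x {d | N.O d} = insert b (insert t {d | M.O d}) := by
    ext d
    simp only [Set.mem_insert_iff, Set.mem_ofPred_eq, c.O_iff]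
    have h1 := c.Ob
    have h2 := c.Ot
    by_cases hb : d = b
    · subst hb; tauto
    by_cases ht : d = t
    · subst ht; tauto
    tauto
  have h1 : b ∉ insert t {d | M.O d} := by
    simp only [Set.mem_insert_iff, Set.mem_ofPred_eq, c.O_iff]
    have := c.bt; have := c.xb.symm; tauto
  have h2 : t ∉ {d | M.O d} := by
    simp only [Set.mem_ofPred_eq, c.O_iff]
    have := c.xt.symm; tauto
  have h3 : x ∉ {d | N.O d} := c.nOx
  have := congrArg Set.ncard h
  rw [Set.ncard_insert_of_notMem h3, Set.ncard_insert_of_notMem h1, Set.ncard_insert_of_notMem h2] at this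
  unfold PMap.P; omega

theorem Conf.L_eq {N M : PMap X} {x y b t s : X} (c : Conf N M x y b t s) : M.L = N.L + 2 := by
  have h : {d | M.α d ≠ d} = insert x (insert y {d | N.α d ≠ d}) := by
    ext d
    simp only [Set.mem_insert_iff, Set.mem_ofPred_eq, c.liveM]
  unfold PMap.L
  rw [h, Set.ncard_insert_of_notMem, Set.ncard_insert_of_notMem]
  · simp [c.αy]
  · simp [c.αx, c.xy]

theorem WConf.P_eq {A B W : PMap X} {L : X → Prop} {a b o : X} (c : WConf A B W L a b o) :
    W.P = A.P + B.P := by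
  unfold PMap.P
  rw [← Set.ncard_union_eq]
  · congr 1; ext d; exact c.O_iff d
  · rw [Set.disjoint_left]
    intro d h1 h2; exact c.OB_L h2 (c.OA_L h1)

theorem WConf.live {A B W : PMap X} {L : X → Prop} {a b o : X} (c : WConf A B W L a b o) (d : X) :
    W.α d ≠ d ↔ A.α d ≠ d ∨ B.α d ≠ d := by
  by_cases h : L d
  · rw [c.Wα_l h]; simp [c.αB d h]
  · rw [c.Wα_r h]; simp [c.αA d h]

theorem WConf.L_eq {A B W : PMap X} {L : X → Prop} {a b o : X} (c : WConf A B W L a b o) :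
    W.L = A.L + B.L := by
  unfold PMap.L
  rw [← Set.ncard_union_eq]
  · congr 1; ext d; exact c.live d
  · rw [Set.disjoint_left]
    intro d h1 h2
    by_cases h : L d
    · exact h2 (c.αB d h)
    · exact h1 (c.αA d h)

theorem two_le_P {M : PMap X} (h : M.Pre) : 2 ≤ M.P := by
  have h1 : ({M.φ M.r, M.r} : Set X) ⊆ {d | M.O d} := by
    rintro d (rfl | rfl)
    · exact PMap.O_φ.2 M.O_r
    · exact M.O_r
  have := Set.ncard_le_ncard h1
  rw [Set.ncard_pair (φ_ne h.noloop h.rlive)] at this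
  exact this

theorem Conf.num_add {N M : PMap X} {x y b t s : X} (c : Conf N M x y b t s) {m n : ℕ}
    (h : N.Num m n) (hM : M.Pre) : M.Num (m - 1) (n + 1) ∧ 1 ≤ m := by
  have := two_le_P hM
  obtain ⟨h1, h2⟩ := h
  have := c.P_eq; have := c.L_eq; have := c.cycσ
  unfold PMap.Num
  omega

theorem num_wed {A B W M : PMap X} {L : X → Prop} {a b o : X} (w : WConf A B W L a b o)
    {x y b' t s : X} (c : Conf W M x y b' t s) {m n m' n' : ℕ} (h : A.Num m n) (h' : B.Num m' n') :
    M.Num (m + m' + 1) (n + n') := by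
  obtain ⟨h1, h2⟩ := h
  obtain ⟨h3, h4⟩ := h'
  have := c.P_eq; have := c.L_eq; have := c.cycσ
  have := w.P_eq; have := w.L_eq; have := w.cycσ
  unfold PMap.Num
  omega

theorem Num_unique {M : PMap X} {m n m' n' : ℕ} (h : M.Num m n) (h' : M.Num m' n') :
    m = m' ∧ n = n' := by
  obtain ⟨h1, h2⟩ := h
  obtain ⟨h3, h4⟩ := h'
  omega

theorem Idx_unique {M : PMap X} {k k' : ℕ} (h : M.Idx k) (h' : M.Idx k') : k = k' := by
  rcases lt_trichotomy k k' with e | e | e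
  · exact (h'.2 k e h.1).elim
  · exact e
  · exact (h.2 k' e h'.1).elim

theorem adj_next {M : PMap X} (_ : M.Pre) {d : X} (hd : M.α d ≠ d) : M.Adj d (M.φ d) :=
  ⟨d, hd, SameCycle.refl _ _, (sc_one _ _).symm⟩
theorem adj_prev {M : PMap X} (h : M.Pre) {d : X} (hd : M.α d ≠ d) : M.Adj (M.φ d) d :=
  ⟨M.α d, α_live hd, (sc_one _ _).symm, by rw [h.inv]⟩

theorem Conf.adj {N M : PMap X} {x y b t s : X} (c : Conf N M x y b t s) (hbs : ¬ N.σ.SameCycle b s)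
    {d : X} (h1 : d ≠ x) (h2 : d ≠ y) (h3 : ¬ N.σ.SameCycle s d) : M.Adj x d ↔ N.Adj b d := by
  constructor
  · rintro ⟨e, he, h4, h5⟩
    by_cases e1 : e = x
    · rw [e1, c.Mαx] at h5
      exact (h3 ((c.scy h1 h2).1 h5.symm)).elim
    by_cases e2 : e = y
    · rw [e2, c.scxy] at h4; exact (hbs h4).elim
    refine ⟨e, by rwa [c.Mα e1 e2] at he, (c.scx e1 e2).1 h4, ?_⟩
    rw [c.Mα e1 e2] at h5
    exact (c.sc' h1 h2 (c.α_ne_x e1) (c.α_ne_y e2)).1 h5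
  · rintro ⟨e, he, h4, h5⟩
    obtain ⟨e1, e2⟩ := c.liveN_ne he
    refine ⟨e, by rwa [c.Mα e1 e2], (c.scx e1 e2).2 h4, ?_⟩
    rw [c.Mα e1 e2]
    exact (c.sc' h1 h2 (c.α_ne_x e1) (c.α_ne_y e2)).2 h5

theorem Conf.ne2 {N M : PMap X} {x y b t s : X} (c : Conf N M x y b t s) (hN : N.Pre)
    (ha : N.Addable) : M.φ (M.φ M.r) ≠ M.r := by
  have hs : N.φ (N.φ N.r) = s := by rw [c.rN, c.φb, c.φt]
  have ha2 := ha.2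
  rw [hs, c.rN] at ha2
  rw [c.rM, c.Mφx]
  have : N.φ s ≠ b := fun e => ha2 (by
    have := adj_prev hN (live_O hN c.Os)
    rwa [e] at this)
  rw [c.Mφ c.xs.symm c.ys.symm c.ts.symm this]
  exact c.φ_ne_x c.xs.symm

theorem O_iter (M : PMap X) (i : ℕ) : M.O (M.φ^[i] M.r) := by
  induction i with
  | zero => exact M.O_r
  | succ i ih => rw [Function.iterate_succ_apply']; exact PMap.O_φ.2 ih

theorem Conf.idx_add {N M : PMap X} {x y b t s : X} (c : Conf N M x y b t s) (hN : N.Good)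
    (ha : N.Addable) {k : ℕ} (hk : N.Idx (k + 1)) : M.Idx k := by
  have hs : N.φ (N.φ N.r) = s := by rw [c.rN, c.φb, c.φt]
  have hbs := ha.1
  rw [hs, c.rN] at hbs
  obtain ⟨hk1, hk2⟩ := hk
  rw [c.rN] at hk1 hk2
  have lb := live_O hN.1 c.Ob
  have hO : ∀ i, N.O (N.φ^[i] b) := fun i => by rw [← c.rN]; exact O_iter N i
  have hx : ∀ i, N.φ^[i] b ≠ x := fun i e => c.nOx (e ▸ hO i)
  have hy : ∀ i, N.φ^[i] b ≠ y := fun i e => c.nOy (e ▸ hO i)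
  have adjt : N.Adj b t := by rw [← c.φb]; exact adj_next hN.1 lb
  have nt : ∀ j, j < k + 1 → N.φ^[j + 2] b ≠ t := fun j hj e => hk2 j hj (e ▸ adjt)
  have nq : ∀ j, j < k + 1 → N.φ (N.φ^[j + 2] b) ≠ b := fun j hj e => hk2 j hj (by
    have := adj_prev hN.1 (live_O hN.1 (hO (j + 2)))
    rwa [e] at this)
  have step : ∀ j, j ≤ k + 1 → M.φ^[j + 1] x = N.φ^[j + 2] b := by
    intro j
    induction j with
    | zero => intro _; simp [c.Mφx, c.φb, c.φt]
    | succ j ih =>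
      intro hj
      rw [Function.iterate_succ_apply', ih (by omega), c.Mφ (hx _) (hy _) (nt j (by omega))
        (nq j (by omega)), ← Function.iterate_succ_apply' (f := N.φ)]
  have nsd : ∀ j, j < k + 1 → ¬ N.σ.SameCycle s (N.φ^[j + 3] b) := by
    intro j hj h
    have := hN.2 _ _ c.Os (hO _) h
    rw [← c.φt, Function.iterate_succ_apply'] at this
    exact nt j hj (N.φ.injective this).symm
  unfold PMap.Idx
  rw [c.rM]
  constructor
  · rw [step (k + 1) le_rfl, c.adj hbs (hx _) (hy _) (nsd k (by omega))]
    exact hk1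
  · intro j hj
    rw [step (j + 1) (by omega), c.adj hbs (hx _) (hy _) (nsd j (by omega))]
    exact hk2 (j + 1) (by omega)

theorem idx_wed {A B W M : PMap X} {L : X → Prop} {a b o : X} (w : WConf A B W L a b o)
    {x y t s : X} (c : Conf W M x y b t s) (hA : A.Good) (hB : B.Good) {m : ℕ} (hm : A.P = m + 2) :
    M.Idx m := by
  obtain ⟨pW, ha, nb⟩ := w.pre hA hB
  obtain ⟨p, hp, hp0, hp1, hp2⟩ := period A.φ a
  have hpm : p = m + 2 := by
    rw [hp, ← hm]; unfold PMap.P PMap.O; rw [w.rA]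
  have ht : t = a := by rw [← c.φb, w.Wφb]
  have OAa : A.O a := w.rA ▸ A.O_r
  have hO : ∀ i, A.O (A.φ^[i] a) := fun i => by rw [← w.rA]; exact O_iter A i
  have hL : ∀ i, L (A.φ^[i] a) := fun i => w.OA_L (hO i)
  have hx : ∀ i, A.φ^[i] a ≠ x := fun i e => c.nOx (e ▸ (w.O_l (hL i)).2 (hO i))
  have hy : ∀ i, A.φ^[i] a ≠ y := fun i e => c.nOy (e ▸ (w.O_l (hL i)).2 (hO i))
  have hs : s = A.φ a := by
    rw [← c.φt, ht, w.Wφ_l w.La]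
    have := φ_ne hA.1.noloop hA.1.rlive
    rwa [w.rA] at this
  have hs' : W.φ (W.φ W.r) = s := by rw [c.rN, c.φb, c.φt]
  have hbs := ha.1
  rw [hs', c.rN] at hbs
  have hob : o ≠ b := by
    have := φ_ne hB.1.noloop hB.1.rlive
    rwa [w.rB, w.φb] at this
  have step : ∀ j, j ≤ m → M.φ^[j + 1] x = A.φ^[j + 1] a := by
    intro j
    induction j with
    | zero => intro _; simp [c.Mφx, hs]
    | succ j ih =>
      intro hj
      have e1 : W.φ (A.φ^[j + 1] a) = A.φ^[j + 2] a := by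
        rw [w.Wφ_l (hL _), ← Function.iterate_succ_apply' (f := A.φ)]
        rw [← Function.iterate_succ_apply' (f := A.φ)]
        exact hp2 _ (by omega) (by omega)
      rw [Function.iterate_succ_apply', ih (by omega), c.Mφ (hx _) (hy _), e1]
      · rw [ht]; exact hp2 _ (by omega) (by omega)
      · rw [e1]; intro e; exact w.Lb (e ▸ hL _)
  have last : M.φ^[m + 2] x = o := by
    have e1 : A.φ (A.φ^[m + 1] a) = a := by
      rw [← Function.iterate_succ_apply' (f := A.φ)]; rw [hpm] at hp1; exact hp1
    have e2 := w.Wφ_last e1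
    rw [Function.iterate_succ_apply', step m le_rfl, c.Mφ (hx _) (hy _), e2]
    · rw [ht]; exact hp2 _ (by omega) (by omega)
    · rw [e2]; exact hob
  have lb : B.α b ≠ b := w.rB ▸ hB.1.rlive
  unfold PMap.Idx
  rw [c.rM]
  constructor
  · rw [last, c.adj hbs]
    · refine ⟨b, by rwa [w.Wα_r w.Lb], SameCycle.refl _ _, ?_⟩
      rw [w.Wα_r w.Lb, w.sc_rr w.Lo (fun e => w.Lb (w.uα.Lh.1 e)), ← w.φb]
      exact (sc_one _ _).symm
    · intro e; exact c.nOx (e ▸ (w.O_r' w.Lo).2 w.OBo)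
    · intro e; exact c.nOy (e ▸ (w.O_r' w.Lo).2 w.OBo)
    · have Ls : L s := by rw [hs]; exact hL 1
      rw [w.sc_lr Ls w.Lo]
      rintro ⟨h, -⟩
      rw [hs] at h
      exact hp2 1 (by omega) (by omega) (hA.2 _ _ (hO 1) OAa h)
  · intro j hj
    rw [step (j + 1) (by omega), c.adj hbs (hx _) (hy _)]
    · rintro ⟨e, he, h1, h2⟩
      by_cases h : L e
      · have := ((w.sc_lr h w.Lb).1 h1.symm).2
        exact hob (hB.2 _ _ w.OBo (w.rB ▸ B.O_r) this)
      · have := (w.sc_lr (hL _) (fun e => h (w.uα.Lf.1 e))).1 h2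
        exact hp2 _ (by omega) (by omega) (hA.2 _ _ (hO _) OAa this.1)
    · rw [hs, show A.φ a = A.φ^[1] a from rfl, w.sc_ll (hL 1) (hL _)]
      intro h
      have := hA.2 _ _ (hO 1) (hO _) h
      change A.φ a = _ at this
      rw [Function.iterate_succ_apply'] at this
      exact hp2 (j + 1) (by omega) (by omega) (A.φ.injective this).symm

end num
end Brown

set_option linter.unusedSectionVars false
namespace Brown
open Equiv Equiv.Perm

inductive Code : Type
  | edge : Code
  | wed : Code → Code → Code
  | add : Code → Code

namespace Code
def m : Code → ℕ
  | edge => 0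
  | wed A B => A.m + B.m + 1
  | add T => T.m - 1
def n : Code → ℕ
  | edge => 0
  | wed A B => A.n + B.n
  | add T => T.n + 1
def k : Code → ℕ
  | edge => 0
  | wed A _ => A.m
  | add T => T.k - 1
def ok : Code → Prop
  | edge => True
  | wed A B => A.ok ∧ B.ok
  | add T => T.ok ∧ 1 ≤ T.k

theorem k_lt {c : Code} (h : c.ok) : c = edge ∨ c.k + 1 ≤ c.m := by
  induction c with
  | edge => left; rfl
  | wed A B ihA ihB => right; simp only [k, m]; omega
  | add T ih =>
    right
    obtain ⟨h1, h2⟩ := h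
    rcases ih h1 with rfl | h
    · simp [k] at h2
    · simp only [k, m]; omega
end Code

section real
variable {X : Type} [Fintype X] [DecidableEq X]

def Real : Code → PMap X → Prop
  | .edge, M => ∃ x y, x ≠ y ∧ M = ⟨1, swap x y, x⟩
  | .wed S T, M => ∃ A B : PMap X, ∃ x y, Real S A ∧ Real T B ∧ Dj A B ∧ x ≠ y ∧
      (A.wd B).α x = x ∧ (A.wd B).α y = y ∧ M = (A.wd B).add x y
  | .add T, M => 1 ≤ T.k ∧ ∃ N : PMap X, ∃ x y, Real T N ∧ x ≠ y ∧ N.α x = x ∧ N.α y = y ∧ M = N.add x y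

theorem sc_one_iff {x y : X} : (1 : Perm X).SameCycle x y ↔ x = y := by
  constructor
  · rintro ⟨k, hk⟩; simpa using hk
  · rintro rfl; exact SameCycle.refl _ _

theorem edge_O {x y d : X} : (⟨1, swap x y, x⟩ : PMap X).O d ↔ d = x ∨ d = y := by
  constructor
  · intro h
    refine sc_forward h (fun d => d = x ∨ d = y) ?_ (Or.inl rfl)
    rintro e (rfl | rfl)
    · right; simp [PMap.φ]
    · left; simp [PMap.φ]
  · have : (⟨1, swap x y, x⟩ : PMap X).O x := PMap.O_r _
    rintro (rfl | rfl)
    · exact this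
    · have := PMap.O_φ.2 this
      simpa [PMap.φ] using this

theorem edge_live {x y d : X} (hxy : x ≠ y) : swap x y d ≠ d ↔ d = x ∨ d = y := by
  rw [swap_apply_ne_self_iff]; tauto

theorem edge_good {x y : X} (hxy : x ≠ y) : (⟨1, swap x y, x⟩ : PMap X).Good := by
  have hb : (⟨1, swap x y, x⟩ : PMap X).Bdry := fun d d' _ _ h => sc_one_iff.1 h
  refine ⟨⟨?_, ?_, ?_, ?_, ?_, ?_, ?_, ?_, fun d d' h1 h2 h3 _ _ => hb d d' h1 h2 h3⟩, hb⟩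
  · intro d; simp
  · intro d _; rfl
  · change swap x y x ≠ x; simp [hxy.symm]
  · intro d hd
    rcases (edge_live hxy).1 hd with rfl | rfl
    · exact Jrel.refl _ _ _
    · have := J_α 1 (swap x d) x
      simpa using this
  · intro d hd hO
    exact (hO (edge_O.2 ((edge_live hxy).1 hd))).elim
  · intro d hd h
    exact hd (sc_one_iff.1 h).symm
  · intro d d' _ _ h _; exact sc_one_iff.1 h
  · change cyc 1 + cyc (swap x y) + cyc (1 * swap x y) = Nat.card X + 2 * K 1 (swap x y)
    have n1 : ¬ (1 : Perm X).SameCycle x y := fun h => hxy (sc_one_iff.1 h)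
    have h1 := cyc_swap n1
    have h2 : K 1 (swap x y) + 1 = K (1 : Perm X) 1 := by
      have := (mergeAt_edge (s := (1 : Perm X)) (a := 1) (x := x) (y := y) rfl rfl).K_eq
        (fun h => n1 (sc_iff.2 h))
      simpa using this
    have h3 := cyc_one (X := X)
    change K (1 : Perm X) 1 = _ at h3
    have h4 : cyc (1 : Perm X) = K (1 : Perm X) 1 := rfl
    rw [one_mul]
    rw [mul_one] at h1
    omega

theorem edge_num {x y : X} (hxy : x ≠ y) : (⟨1, swap x y, x⟩ : PMap X).Num 0 0 := by
  constructor
  · unfold PMap.P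
    rw [show {d | (⟨1, swap x y, x⟩ : PMap X).O d} = {x, y} by ext d; exact edge_O]
    rw [Set.ncard_pair hxy]
  · unfold PMap.L
    change cyc (1 : Perm X) + Set.ncard {d | swap x y d ≠ d} = _
    rw [show {d | swap x y d ≠ d} = {x, y} by ext d; exact edge_live hxy]
    rw [Set.ncard_pair hxy, cyc_one]; omega

theorem addable_of {M : PMap X} (h : M.Good) {k : ℕ} (hi : M.Idx k) (h2 : M.φ (M.φ M.r) ≠ M.r) :
    M.Addable ↔ 1 ≤ k := by
  constructor
  · intro ha
    rcases k with _ | k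
    · exact (ha.2 hi.1).elim
    · omega
  · intro hk
    exact ⟨fun e => h2 (h.2 _ _ M.O_r (PMap.O_φ.2 (PMap.O_φ.2 M.O_r)) e).symm, hi.2 0 (by omega)⟩

theorem real_spec (c : Code) : ∀ M : PMap X, Real c M → M.Good ∧ M.Num c.m c.n ∧ c.ok ∧
    ((c = .edge ∧ M.φ (M.φ M.r) = M.r) ∨ (M.Idx c.k ∧ M.φ (M.φ M.r) ≠ M.r)) := by
  induction c with
  | edge =>
    rintro M ⟨x, y, hxy, rfl⟩
    exact ⟨edge_good hxy, edge_num hxy, trivial, Or.inl ⟨rfl, by simp [PMap.φ]⟩⟩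
  | wed S T ihS ihT =>
    rintro M ⟨A, B, x, y, hA, hB, hd, hxy, hx, hy, rfl⟩
    obtain ⟨gA, nA, okA, -⟩ := ihS A hA
    obtain ⟨gB, nB, okB, -⟩ := ihT B hB
    have w := wconf_wd gA.1 gB.1 hd
    obtain ⟨p, ha, -⟩ := w.pre gA gB
    have c := conf_add p ha hxy hx hy
    exact ⟨c.good p ha, num_wed w c nA nB, ⟨okA, okB⟩, Or.inr ⟨idx_wed w c gA gB nA.1, c.ne2 p ha⟩⟩
  | add T ih =>
    rintro M ⟨hk, N, x, y, hN, hxy, hx, hy, rfl⟩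
    obtain ⟨g, nN, okN, h⟩ := ih N hN
    rcases h with ⟨rfl, -⟩ | ⟨hi, h2⟩
    · simp [Code.k] at hk
    have ha := (addable_of g hi h2).2 hk
    have c := conf_add g.1 ha hxy hx hy
    have gM := c.good g.1 ha
    refine ⟨gM, (c.num_add nN gM.1).1, ⟨okN, hk⟩, Or.inr ⟨c.idx_add g ha ?_, c.ne2 g.1 ha⟩⟩
    simp only [Code.k]
    rwa [Nat.sub_add_cancel hk]

theorem edge_of_p2 {M : PMap X} (h : M.Good) (h2 : M.φ (M.φ M.r) = M.r) : Real .edge M := by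
  have p := h.1
  have ls := φ_live p.ghost p.rlive
  have e1 : M.r = M.α (M.φ M.r) := by
    apply p.simp _ _ p.rlive (α_live ls)
    · have := sc_one M.σ (M.α (M.φ M.r))
      rw [← PMap.φ_apply, h2] at this; exact this.symm
    · rw [p.inv]; exact sc_one _ _
  have e2 : M.φ M.r = M.α M.r := by
    have := congrArg M.α e1
    rw [p.inv] at this; exact this.symm
  have s1 : M.σ (M.α M.r) = M.α M.r := e2
  have s2 : M.σ M.r = M.r := by
    rw [e2, PMap.φ_apply, p.inv] at h2; exact h2
  have live : ∀ d, M.α d ≠ d → d = M.r ∨ d = M.α M.r := by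
    intro d hd
    refine (p.conn d hd (fun d => d = M.r ∨ d = M.α M.r) ⟨inv_of_forward (S := fun d => d = M.r ∨ d = M.α M.r) (g := M.σ) ?_, inv_of_forward (S := fun d => d = M.r ∨ d = M.α M.r) (g := M.α) ?_⟩).1 (Or.inl rfl)
    · rintro e (rfl | rfl)
      · exact Or.inl s2
      · exact Or.inr s1
    · rintro e (rfl | rfl)
      · exact Or.inr rfl
      · exact Or.inl (p.inv _)
  refine ⟨M.r, M.α M.r, p.rlive.symm, ?_⟩
  have e3 : M.σ = 1 := by
    ext d
    by_cases hd : M.α d = d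
    · exact p.ghost d hd
    · rcases live d hd with rfl | rfl
      · exact s2
      · exact s1
  have e4 : M.α = swap M.r (M.α M.r) := by
    ext d
    by_cases hd : M.α d = d
    · rw [hd, swap_apply_of_ne_of_ne]
      · intro e; exact p.rlive (e ▸ hd)
      · intro e; exact α_live p.rlive (e ▸ hd)
    · rcases live d hd with rfl | e
      · rw [swap_apply_left]
      · nth_rw 2 [e]
        rw [swap_apply_right, e, p.inv]
  obtain ⟨s, a, r⟩ := M
  simp only at e3 e4 ⊢
  rw [e3, ← e4]

theorem exists_code : ∀ l, ∀ M : PMap X, M.Good → M.L = l → ∃ c, Real c M := by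
  intro l
  induction l using Nat.strong_induction_on with
  | _ l ih =>
    intro M h hl
    by_cases h2 : M.φ (M.φ M.r) = M.r
    · exact ⟨_, edge_of_p2 h h2⟩
    have c := conf_del h h2
    obtain ⟨p, ha⟩ := c.pre h
    have hL := c.L_eq
    by_cases hb : M.del.Bdry
    · have g : M.del.Good := ⟨p, hb⟩
      obtain ⟨T, hT⟩ := ih _ (by omega) _ g rfl
      obtain ⟨-, -, -, h4⟩ := real_spec T _ hT
      refine ⟨.add T, ?_, _, _, _, hT, c.xy, c.αx, c.αy, c.eq_add⟩
      rcases h4 with ⟨-, h5⟩ | ⟨h5, h6⟩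
      · exfalso; apply ha.1; rw [h5]
      · exact (addable_of g h5 h6).1 ha
    · obtain ⟨A, B, L, a, b, o, w, gA, gB, dj⟩ := split p hb
      have hwL := w.L_eq
      have e := w.eq_wd
      have h1 : 1 ≤ A.L := (Set.ncard_pos (Set.toFinite _)).2 ⟨_, gA.1.rlive⟩
      have h2 : 1 ≤ B.L := (Set.ncard_pos (Set.toFinite _)).2 ⟨_, gB.1.rlive⟩
      obtain ⟨S, hS⟩ := ih _ (by omega) A gA rfl
      obtain ⟨T, hT⟩ := ih _ (by omega) B gB rfl
      refine ⟨.wed S T, A, B, _, _, hS, hT, dj, c.xy, ?_, ?_, ?_⟩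
      · rw [← e]; exact c.αx
      · rw [← e]; exact c.αy
      · rw [← e]; exact c.eq_add

theorem exists_real (c : Code) : c.ok → ∀ D : Finset X, D.card = 2 * (3 * c.n + 2 * c.m + 1) →
    ∃ M : PMap X, Real c M ∧ ∀ d, M.α d ≠ d ↔ d ∈ D := by
  induction c with
  | edge =>
    intro _ D hD
    obtain ⟨x, y, hxy, rfl⟩ := Finset.card_eq_two.1 hD
    refine ⟨⟨1, swap x y, x⟩, ⟨x, y, hxy, rfl⟩, fun d => ?_⟩
    rw [show (⟨1, swap x y, x⟩ : PMap X).α = swap x y from rfl, edge_live hxy]; simp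
  | add T ih =>
    rintro ⟨ok, hk⟩ D hD
    have hm : T.k + 1 ≤ T.m := by
      rcases Code.k_lt ok with rfl | h
      · simp [Code.k] at hk
      · exact h
    simp only [Code.m, Code.n] at hD
    obtain ⟨D', hD', hc⟩ := Finset.exists_subset_card_eq (s := D) (n := 2 * (3 * T.n + 2 * T.m + 1)) (by omega)
    have h2 : (D \ D').card = 2 := by rw [Finset.card_sdiff_of_subset hD']; omega
    obtain ⟨x, y, hxy, he⟩ := Finset.card_eq_two.1 h2
    obtain ⟨N, hN, hl⟩ := ih ok D' hc
    have hx : x ∈ D \ D' := by rw [he]; simp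
    have hy : y ∈ D \ D' := by rw [he]; simp
    have gx : N.α x = x := by by_contra h; exact (Finset.mem_sdiff.1 hx).2 ((hl x).1 h)
    have gy : N.α y = y := by by_contra h; exact (Finset.mem_sdiff.1 hy).2 ((hl y).1 h)
    have hR : Real (.add T) (N.add x y) := ⟨hk, N, x, y, hN, hxy, gx, gy, rfl⟩
    refine ⟨_, hR, fun d => ?_⟩
    obtain ⟨g, nN, okN, h⟩ := real_spec _ _ hN
    rcases h with ⟨rfl, -⟩ | ⟨hi, h2⟩
    · simp [Code.k] at hk
    have c := conf_add g.1 ((addable_of g hi h2).2 hk) hxy gx gy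
    rw [c.liveM, hl]
    have : d ∈ D \ D' ↔ d = x ∨ d = y := by rw [he]; simp
    rw [Finset.mem_sdiff] at this
    have := @hD' d
    tauto
  | wed S T ihS ihT =>
    rintro ⟨okS, okT⟩ D hD
    simp only [Code.m, Code.n] at hD
    obtain ⟨D1, hD1, hc1⟩ := Finset.exists_subset_card_eq (s := D) (n := 2 * (3 * S.n + 2 * S.m + 1)) (by omega)
    have h1 : (D \ D1).card = 2 * (3 * T.n + 2 * T.m + 1) + 2 := by
      rw [Finset.card_sdiff_of_subset hD1]; omega
    obtain ⟨D2, hD2, hc2⟩ := Finset.exists_subset_card_eq (s := D \ D1) (n := 2 * (3 * T.n + 2 * T.m + 1)) (by omega)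
    have h2 : ((D \ D1) \ D2).card = 2 := by rw [Finset.card_sdiff_of_subset hD2]; omega
    obtain ⟨x, y, hxy, he⟩ := Finset.card_eq_two.1 h2
    obtain ⟨A, hA, hlA⟩ := ihS okS D1 hc1
    obtain ⟨B, hB, hlB⟩ := ihT okT D2 hc2
    have dj : Dj A B := by
      intro d hd
      by_contra h
      exact (Finset.mem_sdiff.1 (hD2 ((hlB d).1 h))).2 ((hlA d).1 hd)
    obtain ⟨gA, -⟩ := real_spec _ _ hA
    obtain ⟨gB, -⟩ := real_spec _ _ hB
    have w := wconf_wd gA.1 gB.1 dj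
    obtain ⟨p, ha, -⟩ := w.pre gA gB
    have hx : x ∈ (D \ D1) \ D2 := by rw [he]; simp
    have hy : y ∈ (D \ D1) \ D2 := by rw [he]; simp
    simp only [Finset.mem_sdiff] at hx hy
    have gx : (A.wd B).α x = x := by
      by_contra h
      have := (w.live x).1 h
      rw [hlA, hlB] at this; tauto
    have gy : (A.wd B).α y = y := by
      by_contra h
      have := (w.live y).1 h
      rw [hlA, hlB] at this; tauto
    refine ⟨(A.wd B).add x y, ⟨A, B, x, y, hA, hB, dj, hxy, gx, gy, rfl⟩, fun d => ?_⟩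
    have c := conf_add p ha hxy gx gy
    rw [c.liveM, w.live, hlA, hlB]
    have : d ∈ (D \ D1) \ D2 ↔ d = x ∨ d = y := by rw [he]; simp
    rw [Finset.mem_sdiff, Finset.mem_sdiff] at this
    have h3 := @hD1 d
    have h4 := @hD2 d
    rw [Finset.mem_sdiff] at h4
    tauto

end real
end Brown

set_option linter.unusedSectionVars false
namespace Brown
open Equiv Equiv.Perm
section uniq
variable {X : Type} [Fintype X] [DecidableEq X]

theorem Conf.eq_del {N M : PMap X} {x y b t s : X} (c : Conf N M x y b t s) : N = M.del := by
  obtain ⟨Ns, Na, Nr⟩ := N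
  unfold PMap.del
  rw [c.rM, c.Mαx, c.Mσx, c.Mφx, c.σM, c.αM]
  have : Nr = b := c.rN
  rw [this]
  congr 1
  · rw [mul_assoc (swap x b), swap_mul_self_mul, swap_mul_self_mul]
  · rw [swap_mul_self_mul]

theorem wd_live {A B : PMap X} (gA : A.Good) (gB : B.Good) (h : Dj A B) (d : X) :
    A.α d ≠ d ↔ Jrel (A.σ * B.σ) (A.α * B.α) A.r d := by
  have w := wconf_wd gA.1 gB.1 h
  have := w.uσ.J_g (y := d) w.uα w.La
  rw [w.αW] at this
  rw [this]
  constructor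
  · exact fun h => gA.1.conn d h
  · intro hJ
    exact (w.uσ.JL w.uα (w.uσ.J_of_g w.uα hJ) w.La)

theorem wd_inj {A B A' B' : PMap X} (gA : A.Good) (gB : B.Good) (h : Dj A B)
    (gA' : A'.Good) (gB' : B'.Good) (h' : Dj A' B') (e : A.wd B = A'.wd B') : A = A' ∧ B = B' := by
  have w := wconf_wd gA.1 gB.1 h
  have w' := wconf_wd gA'.1 gB'.1 h'
  rw [← e] at w'
  have p := (w.pre gA gB).1
  have eb : B.r = B'.r := w.rW.symm.trans w'.rW
  have ea : A.r = A'.r := by rw [← w.Wφb, ← w'.Wφb, eb]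
  have so : (A.wd B).O (B.φ B.r) := (w.O_iff _).2 (Or.inr w.OBo)
  have so' : (A.wd B).O (B'.φ B'.r) := (w'.O_iff _).2 (Or.inr w'.OBo)
  have c1 : (A.wd B).σ.SameCycle A.r (B.φ B.r) := (w.sc_lr w.La w.Lo).2 ⟨SameCycle.refl _ _, SameCycle.refl _ _⟩
  have c2 : (A.wd B).σ.SameCycle A'.r (B'.φ B'.r) := (w'.sc_lr w'.La w'.Lo).2 ⟨SameCycle.refl _ _, SameCycle.refl _ _⟩
  rw [← ea] at c2
  have r1 : (A.wd B).φ (A.wd B).r = A.r := by rw [w.rW]; exact w.Wφb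
  have eo : B.φ B.r = B'.φ B'.r := by
    refine p.bdry' _ _ so so' (c1.symm.trans c2) ?_ ?_
    · rw [r1]; exact w.ao.symm
    · rw [r1, ea]; exact w'.ao.symm
  have es : A.σ * B.σ = A'.σ * B'.σ := by
    have h1 := w.σW
    rw [w'.σW, ← ea, ← eo] at h1
    exact (mul_left_cancel h1).symm
  have eα : A.α * B.α = A'.α * B'.α := by
    have h1 := w.αW
    rw [w'.αW] at h1; exact h1.symm
  have eL : ∀ d, A.α d ≠ d ↔ A'.α d ≠ d := by
    intro d
    rw [wd_live gA gB h, wd_live gA' gB' h', es, eα, ea]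
  have eAα : A.α = A'.α := by
    ext d
    by_cases hd : A.α d = d
    · rw [hd, not_ne_iff.1 (fun h => (eL d).2 h hd)]
    · rw [← w.Wα_l hd, ← w'.Wα_l ((eL d).1 hd)]
  have eAσ : A.σ = A'.σ := by
    ext d
    by_cases hd : A.α d = d
    · rw [gA.1.ghost d hd, gA'.1.ghost d (not_ne_iff.1 (fun h => (eL d).2 h hd))]
    · rw [← w.uσ.l d hd, ← w'.uσ.l d ((eL d).1 hd), es]
  have eBα : B.α = B'.α := by rw [eAα] at eα; exact mul_left_cancel eα
  have eBσ : B.σ = B'.σ := by rw [eAσ] at es; exact mul_left_cancel es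
  obtain ⟨s, a, r⟩ := A
  obtain ⟨s, a, r⟩ := B
  obtain ⟨s, a, r⟩ := A'
  obtain ⟨s, a, r⟩ := B'
  simp only at eAα eAσ eBα eBσ ea eb
  subst eAα eAσ eBα eBσ ea eb
  exact ⟨rfl, rfl⟩

theorem real_add {T : Code} {M : PMap X} (h : Real (.add T) M) : Real T M.del ∧ M.del.Bdry := by
  obtain ⟨hk, N, x, y, hN, hxy, hx, hy, rfl⟩ := h
  obtain ⟨g, nN, okN, h⟩ := real_spec _ _ hN
  rcases h with ⟨rfl, -⟩ | ⟨hi, h2⟩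
  · simp [Code.k] at hk
  have c := conf_add g.1 ((addable_of g hi h2).2 hk) hxy hx hy
  rw [← c.eq_del]
  exact ⟨hN, g.2⟩

theorem real_wed {S T : Code} {M : PMap X} (h : Real (.wed S T) M) :
    ∃ A B, Real S A ∧ Real T B ∧ Dj A B ∧ M.del = A.wd B ∧ ¬ M.del.Bdry := by
  obtain ⟨A, B, x, y, hA, hB, hd, hxy, hx, hy, rfl⟩ := h
  obtain ⟨gA, -⟩ := real_spec _ _ hA
  obtain ⟨gB, -⟩ := real_spec _ _ hB
  have w := wconf_wd gA.1 gB.1 hd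
  obtain ⟨p, ha, nb⟩ := w.pre gA gB
  have c := conf_add p ha hxy hx hy
  rw [← c.eq_del]
  exact ⟨A, B, hA, hB, hd, rfl, nb⟩

theorem real_unique (c : Code) : ∀ (M : PMap X) (c' : Code), Real c M → Real c' M → c = c' := by
  induction c with
  | edge =>
    intro M c' h h'
    obtain ⟨-, -, -, h1⟩ := real_spec _ _ h
    obtain ⟨-, -, -, h2⟩ := real_spec _ _ h'
    rcases h1 with ⟨-, h1⟩ | ⟨-, h1⟩
    · rcases h2 with ⟨h2, -⟩ | ⟨-, h2⟩
      · exact h2.symm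
      · exact (h2 h1).elim
    · obtain ⟨x, y, hxy, rfl⟩ := h
      simp [PMap.φ] at h1
  | add T ih =>
    intro M c' h h'
    obtain ⟨h1, h2⟩ := real_add h
    cases c' with
    | edge =>
      obtain ⟨-, -, -, h3⟩ := real_spec _ _ h
      obtain ⟨x, y, hxy, rfl⟩ := h'
      rcases h3 with ⟨h3, -⟩ | ⟨-, h3⟩
      · cases h3
      · simp [PMap.φ] at h3
    | add T' => rw [ih _ _ h1 (real_add h').1]
    | wed S' T' =>
      obtain ⟨_, _, _, _, _, _, h3⟩ := real_wed h'
      exact (h3 h2).elim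
  | wed S T ihS ihT =>
    intro M c' h h'
    obtain ⟨A, B, hA, hB, hd, e, nb⟩ := real_wed h
    cases c' with
    | edge =>
      obtain ⟨-, -, -, h3⟩ := real_spec _ _ h
      obtain ⟨x, y, hxy, rfl⟩ := h'
      rcases h3 with ⟨h3, -⟩ | ⟨-, h3⟩
      · cases h3
      · simp [PMap.φ] at h3
    | add T' => exact (nb (real_add h').2).elim
    | wed S' T' =>
      obtain ⟨A', B', hA', hB', hd', e', -⟩ := real_wed h'
      obtain ⟨rfl, rfl⟩ := wd_inj (real_spec _ _ hA).1 (real_spec _ _ hB).1 hd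
        (real_spec _ _ hA').1 (real_spec _ _ hB').1 hd' (e.symm.trans e')
      rw [ihS _ _ hA hA', ihT _ _ hB hB']

/-! ### transport -/

def PMap.map (f : Perm X) (M : PMap X) : PMap X := ⟨f * M.σ * f⁻¹, f * M.α * f⁻¹, f M.r⟩

theorem conj_swap (f : Perm X) (x y : X) : f * swap x y * f⁻¹ = swap (f x) (f y) := by
  rw [mul_swap_eq_swap_mul, mul_inv_cancel_right]

theorem map_α (f : Perm X) (M : PMap X) (d : X) : (M.map f).α (f d) = f (M.α d) := by
  simp [PMap.map]

theorem map_φ (f : Perm X) (M : PMap X) (d : X) : (M.map f).φ (f d) = f (M.φ d) := by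
  simp [PMap.map, PMap.φ]

theorem map_r (f : Perm X) (M : PMap X) : (M.map f).r = f M.r := rfl

theorem map_edge (f : Perm X) (x y : X) : (⟨1, swap x y, x⟩ : PMap X).map f = ⟨1, swap (f x) (f y), f x⟩ := by
  unfold PMap.map
  simp only [conj_swap]
  simp

theorem map_add (f : Perm X) (N : PMap X) (x y : X) : (N.add x y).map f = (N.map f).add (f x) (f y) := by
  have h1 : (N.map f).φ ((N.map f).φ (N.map f).r) = f (N.φ (N.φ N.r)) := by
    rw [map_r, map_φ, map_φ]
  unfold PMap.add
  rw [h1]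
  unfold PMap.map
  simp only [← conj_swap]
  congr 1 <;> group

theorem map_wd (f : Perm X) (A B : PMap X) : (A.wd B).map f = (A.map f).wd (B.map f) := by
  have h1 : (B.map f).φ (B.map f).r = f (B.φ B.r) := by rw [map_r, map_φ]
  unfold PMap.wd
  rw [h1]
  unfold PMap.map
  simp only [← conj_swap]
  congr 1 <;> group

theorem map_ghost {f : Perm X} {M : PMap X} {d : X} : (M.map f).α (f d) = f d ↔ M.α d = d := by
  rw [map_α, f.injective.eq_iff]

theorem dj_map {f : Perm X} {A B : PMap X} (h : Dj A B) : Dj (A.map f) (B.map f) := by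
  intro d
  obtain ⟨d, rfl⟩ := f.surjective d
  rw [Ne, map_ghost, map_ghost]; exact h d

theorem real_map (f : Perm X) (c : Code) : ∀ M : PMap X, Real c M → Real c (M.map f) := by
  induction c with
  | edge =>
    rintro M ⟨x, y, hxy, rfl⟩
    exact ⟨f x, f y, f.injective.ne hxy, map_edge _ _ _⟩
  | add T ih =>
    rintro M ⟨hk, N, x, y, hN, hxy, hx, hy, rfl⟩
    exact ⟨hk, _, f x, f y, ih _ hN, f.injective.ne hxy, map_ghost.2 hx, map_ghost.2 hy, map_add _ _ _ _⟩
  | wed S T ihS ihT =>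
    rintro M ⟨A, B, x, y, hA, hB, hd, hxy, hx, hy, rfl⟩
    refine ⟨_, _, f x, f y, ihS _ hA, ihT _ hB, dj_map hd, f.injective.ne hxy, ?_, ?_, ?_⟩
    · rw [← map_wd]; exact map_ghost.2 hx
    · rw [← map_wd]; exact map_ghost.2 hy
    · rw [← map_wd, map_add]

theorem conj_agree {f g s : Perm X} {L : X → Prop} (hL : ∀ d, L d → L (s d)) (hs : ∀ d, ¬ L d → s d = d)
    (h : ∀ d, L d → f d = g d) : f * s * f⁻¹ = g * s * g⁻¹ := by
  ext e
  simp only [mul_apply]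
  by_cases h1 : L (f⁻¹ e)
  · have : g⁻¹ e = f⁻¹ e := by rw [inv_eq_iff_eq, ← h _ h1]; simp
    rw [this, h _ (hL _ h1)]
  · have h2 : ¬ L (g⁻¹ e) := by
      intro h2
      apply h1
      have : f⁻¹ e = g⁻¹ e := by rw [inv_eq_iff_eq, h _ h2]; simp
      rwa [this]
    rw [hs _ h1, hs _ h2]; simp

theorem map_agree {f g : Perm X} {M : PMap X} (hM : M.Pre) (h : ∀ d, M.α d ≠ d → f d = g d) :
    M.map f = M.map g := by
  unfold PMap.map
  rw [conj_agree (L := fun d => M.α d ≠ d) (fun d => σ_live hM.ghost) (fun d hd => hM.ghost d (not_not.1 hd)) h,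
    conj_agree (L := fun d => M.α d ≠ d) (fun d => α_live) (fun d hd => not_not.1 hd) h, h _ hM.rlive]

theorem extend {D : X → Prop} (p : X → X) (hp : ∀ d e, D d → D e → p d = p e → d = e) :
    ∃ f : Perm X, ∀ d, D d → f d = p d := by
  classical
  have inj : Set.InjOn p {d | D d} := fun d hd e he h => hp d e hd he h
  have mt : Set.MapsTo p {d | D d} ((Finset.univ : Finset X) : Set X) := fun _ _ => by simp
  obtain ⟨f, hf⟩ := mt.exists_equiv_extend_of_card_eq (by simp) inj
  refine ⟨f.trans (Equiv.subtypeUnivEquiv (fun _ => Finset.mem_univ _)), fun d hd => hf d hd⟩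

theorem iso_of_real (c : Code) : ∀ M N : PMap X, Real c M → Real c N → ∃ f : Perm X, M.map f = N := by
  classical
  induction c with
  | edge =>
    rintro M N ⟨x, y, hxy, rfl⟩ ⟨x', y', hxy', rfl⟩
    obtain ⟨f, hf⟩ := extend (D := fun d => d = x ∨ d = y) (fun d => if d = x then x' else y') (by
      rintro d e (rfl | rfl) (rfl | rfl) <;> simp [hxy, hxy', hxy.symm, hxy'.symm])
    refine ⟨f, ?_⟩
    have h1 : f x = x' := by simpa using hf x (Or.inl rfl)
    have h2 : f y = y' := by simpa [hxy.symm] using hf y (Or.inr rfl)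
    rw [map_edge, h1, h2]
  | add T ih =>
    rintro _ _ ⟨hk, N, x, y, hN, hxy, hx, hy, rfl⟩ ⟨-, N', x', y', hN', hxy', hx', hy', rfl⟩
    obtain ⟨g, hg⟩ := ih _ _ hN hN'
    have pN := (real_spec _ _ hN).1.1
    have hl : ∀ d, N'.α (g d) = g d ↔ N.α d = d := by intro d; rw [← hg]; exact map_ghost
    have key : ∀ d, N.α d ≠ d → g d ≠ x' ∧ g d ≠ y' ∧ d ≠ x ∧ d ≠ y := by
      intro d hd
      have := fun h => hd ((hl d).1 h)
      refine ⟨?_, ?_, ?_, ?_⟩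
      · intro e; rw [e] at this; exact this hx'
      · intro e; rw [e] at this; exact this hy'
      · rintro rfl; exact hd hx
      · rintro rfl; exact hd hy
    obtain ⟨f, hf⟩ := extend (D := fun d => N.α d ≠ d ∨ d = x ∨ d = y)
      (fun d => if d = x then x' else if d = y then y' else g d) (by
      rintro d e (h1 | rfl | rfl) (h2 | rfl | rfl)
      · have := key _ h1; have := key _ h2; simp [*]
      · have := key _ h1; simp [*]
      · have := key _ h1; simp [*, hxy.symm]
      · have := key _ h2; simp [*, this.1.symm]
      · simp
      · simp [hxy.symm, hxy']
      · have := key _ h2; simp [*, this.2.1.symm, hxy.symm]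
      · simp [hxy.symm, hxy'.symm]
      · simp)
    refine ⟨f, ?_⟩
    have h1 : f x = x' := by simpa using hf x (Or.inr (Or.inl rfl))
    have h2 : f y = y' := by simpa [hxy.symm] using hf y (Or.inr (Or.inr rfl))
    have h3 : N.map f = N' := by
      rw [← hg]
      refine map_agree pN fun d hd => ?_
      rw [hf d (Or.inl hd)]
      have := key _ hd; simp [*]
    rw [map_add, h1, h2, h3]
  | wed S T ihS ihT =>
    rintro _ _ ⟨A, B, x, y, hA, hB, hd, hxy, hx, hy, rfl⟩ ⟨A', B', x', y', hA', hB', hd', hxy', hx', hy', rfl⟩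
    obtain ⟨gA, -⟩ := real_spec _ _ hA
    obtain ⟨gB, -⟩ := real_spec _ _ hB
    obtain ⟨gA', -⟩ := real_spec _ _ hA'
    obtain ⟨gB', -⟩ := real_spec _ _ hB'
    have w := wconf_wd gA.1 gB.1 hd
    have w' := wconf_wd gA'.1 gB'.1 hd'
    obtain ⟨g, hg⟩ := ihS _ _ hA hA'
    obtain ⟨h, hh⟩ := ihT _ _ hB hB'
    have hlA : ∀ d, A'.α (g d) = g d ↔ A.α d = d := by intro d; rw [← hg]; exact map_ghost
    have hlB : ∀ d, B'.α (h d) = h d ↔ B.α d = d := by intro d; rw [← hh]; exact map_ghost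
    have hx1 := mt (w.live x).2 (not_not.2 hx)
    have hy1 := mt (w.live y).2 (not_not.2 hy)
    have hx1' := mt (w'.live x').2 (not_not.2 hx')
    have hy1' := mt (w'.live y').2 (not_not.2 hy')
    push Not at hx1 hy1 hx1' hy1'
    have kA : ∀ d, A.α d ≠ d → g d ≠ x' ∧ g d ≠ y' ∧ d ≠ x ∧ d ≠ y := by
      intro d hd
      have := fun h => hd ((hlA d).1 h)
      refine ⟨?_, ?_, ?_, ?_⟩
      · intro e; rw [e] at this; exact this hx1'.1
      · intro e; rw [e] at this; exact this hy1'.1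
      · rintro rfl; exact hd hx1.1
      · rintro rfl; exact hd hy1.1
    have kB : ∀ d, B.α d ≠ d → h d ≠ x' ∧ h d ≠ y' ∧ d ≠ x ∧ d ≠ y ∧ A.α d = d := by
      intro d hd1
      have := fun h => hd1 ((hlB d).1 h)
      refine ⟨?_, ?_, ?_, ?_, ?_⟩
      · intro e; rw [e] at this; exact this hx1'.2
      · intro e; rw [e] at this; exact this hy1'.2
      · rintro rfl; exact hd1 hx1.2
      · rintro rfl; exact hd1 hy1.2
      · by_contra h; exact hd1 (hd d h)
    have kAB : ∀ d e, A.α d ≠ d → B.α e ≠ e → g d ≠ h e := by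
      intro d e h1 h2 h3
      have h4 := fun h => h1 ((hlA d).1 h)
      have h5 := fun h => h2 ((hlB e).1 h)
      rw [← h3] at h5
      exact h5 (hd' _ h4)
    obtain ⟨f, hf⟩ := extend (D := fun d => A.α d ≠ d ∨ B.α d ≠ d ∨ d = x ∨ d = y)
      (fun d => if d = x then x' else if d = y then y' else if A.α d = d then h d else g d) (by
      rintro d e (h1 | h1 | rfl | rfl) (h2 | h2 | rfl | rfl)
      · have := kA _ h1; have := kA _ h2; simp [*]
      · have := kA _ h1; have := kB _ h2; have := kAB _ _ h1 h2; simp [*]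
      · have := kA _ h1; simp [*]
      · have := kA _ h1; simp [*, hxy.symm]
      · have := kB _ h1; have := kA _ h2; have := kAB _ _ h2 h1; simp [*, this.symm]
      · have := kB _ h1; have := kB _ h2; simp [*]
      · have := kB _ h1; simp [*]
      · have := kB _ h1; simp [*, hxy.symm]
      · have := kA _ h2; simp [*, this.1.symm]
      · have := kB _ h2; simp [*, this.1.symm]
      · simp
      · simp [hxy.symm, hxy']
      · have := kA _ h2; simp [*, this.2.1.symm, hxy.symm]
      · have := kB _ h2; simp [*, this.2.1.symm, hxy.symm]
      · simp [hxy.symm, hxy'.symm]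
      · simp)
    refine ⟨f, ?_⟩
    have h1 : f x = x' := by simpa using hf x (Or.inr (Or.inr (Or.inl rfl)))
    have h2 : f y = y' := by simpa [hxy.symm] using hf y (Or.inr (Or.inr (Or.inr rfl)))
    have h3 : A.map f = A' := by
      rw [← hg]
      refine map_agree gA.1 fun d hd => ?_
      rw [hf d (Or.inl hd)]
      have := kA _ hd; simp [*]
    have h4 : B.map f = B' := by
      rw [← hh]
      refine map_agree gB.1 fun d hd => ?_
      rw [hf d (Or.inr (Or.inl hd))]
      have := kB _ hd; simp [*]
    rw [map_add, map_wd, h1, h2, h3, h4]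
end uniq
end Brown

set_option linter.unusedSectionVars false
namespace Brown
open Equiv Equiv.Perm
section cyc
variable {X : Type} [Fintype X] [DecidableEq X]

theorem csize {g : Perm X} (hf : ∀ d, g d ≠ d) (x : X) :
    (g.cycleOf x).support.card = Set.ncard {y | g.SameCycle x y} := by
  rw [← Set.ncard_coe_finset]
  congr 1
  ext y
  rw [Finset.mem_coe, mem_support_cycleOf_iff]
  simp [hf]

theorem csize3 {g : Perm X} {x : X} (h : Set.ncard {y | g.SameCycle x y} = 3) : g (g (g x)) = x := by
  obtain ⟨p, hp, -, h3, -⟩ := period g x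
  rw [h] at hp; subst hp
  exact h3

theorem csize3' {g : Perm X} (hf : ∀ d, g d ≠ d) {x : X} (h : g (g (g x)) = x) :
    Set.ncard {y | g.SameCycle x y} = 3 := by
  obtain ⟨p, hp, h0, h1, h2⟩ := period g x
  rw [← hp]
  have h3 : ¬ 3 < p := fun h' => h2 3 (by omega) h' h
  interval_cases p
  · exact (hf x h1).elim
  · change g (g x) = x at h1
    rw [h1] at h; exact (hf x h).elim
  · rfl

theorem ct_split {g : Perm X} (hf : ∀ d, g d ≠ d) (r : X) :
    g.cycleType = (g.cycleOf r).support.card ::ₘ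
      Multiset.map (Finset.card ∘ Perm.support) (g.cycleFactorsFinset.erase (g.cycleOf r)).1 := by
  have hm : g.cycleOf r ∈ g.cycleFactorsFinset := by
    rw [cycleOf_mem_cycleFactorsFinset_iff]; simp [hf]
  rw [cycleType_def, Finset.erase_val]
  conv_lhs => rw [← Multiset.cons_erase (show g.cycleOf r ∈ g.cycleFactorsFinset.1 from hm)]
  rw [Multiset.map_cons]; rfl

theorem ct_fwd {g : Perm X} (hf : ∀ d, g d ≠ d) {r d : X} {p k : ℕ} (h : g.cycleType = p ::ₘ Multiset.replicate k 3)
    (hr : (g.cycleOf r).support.card = p) (hd : ¬ g.SameCycle r d) : (g.cycleOf d).support.card = 3 := by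
  rw [ct_split hf r, hr, Multiset.cons_inj_right] at h
  apply Multiset.eq_of_mem_replicate (n := k)
  rw [← h, Multiset.mem_map]
  refine ⟨g.cycleOf d, ?_, rfl⟩
  change _ ∈ g.cycleFactorsFinset.erase (g.cycleOf r)
  rw [Finset.mem_erase, cycleOf_mem_cycleFactorsFinset_iff]
  refine ⟨fun e => hd ?_, by simp [hf]⟩
  rw [sameCycle_iff_cycleOf_eq_of_mem_support (by simp [hf]) (by simp [hf])]
  exact e.symm

theorem ct_bwd {g : Perm X} (hf : ∀ d, g d ≠ d) {r : X} {p k : ℕ} (hr : (g.cycleOf r).support.card = p)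
    (h : ∀ d, ¬ g.SameCycle r d → (g.cycleOf d).support.card = 3) (hc : Fintype.card X = p + 3 * k) :
    g.cycleType = p ::ₘ Multiset.replicate k 3 := by
  have h1 := ct_split hf r
  have h2 : Multiset.map (Finset.card ∘ Perm.support) (g.cycleFactorsFinset.erase (g.cycleOf r)).1 =
      Multiset.replicate (g.cycleFactorsFinset.erase (g.cycleOf r)).card 3 := by
    rw [Multiset.eq_replicate]
    refine ⟨by rw [Multiset.card_map]; rfl, ?_⟩
    intro b hb
    obtain ⟨c, hc, rfl⟩ := Multiset.mem_map.1 hb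
    change c ∈ g.cycleFactorsFinset.erase (g.cycleOf r) at hc
    rw [Finset.mem_erase] at hc
    have hcyc := (mem_cycleFactorsFinset_iff.1 hc.2).1
    obtain ⟨d, hd⟩ := hcyc.nonempty_support
    have e := cycle_is_cycleOf hd hc.2
    rw [e]
    apply h
    intro hs
    apply hc.1
    rw [e]
    exact (hs.cycleOf_eq).symm
  have h3 := sum_cycleType g
  have h4 : g.support = Finset.univ := by ext; simp [hf]
  rw [h1, h2, h4, Multiset.sum_cons, Multiset.sum_replicate, hr, Finset.card_univ, hc] at h3
  rw [h1, h2, hr]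
  congr 2
  simp only [smul_eq_mul] at h3; omega

theorem cyc_sum (g : Perm X) : (cyc g : ℚ) = ∑ x : X, 1 / (Set.ncard {y | g.SameCycle x y} : ℚ) := by
  unfold cyc K
  rw [card_quot_sum]
  refine Finset.sum_congr rfl fun x _ => ?_
  congr 2
  change Set.ncard {y | Jrel g 1 x y} = _
  congr 1; ext y; exact sc_iff.symm

theorem cyc_tri {g : Perm X} {r : X} {p k : ℕ} (hr : Set.ncard {y | g.SameCycle r y} = p)
    (h : ∀ d, ¬ g.SameCycle r d → Set.ncard {y | g.SameCycle d y} = 3) (hc : Fintype.card X = p + 3 * k) :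
    cyc g = k + 1 := by
  classical
  have h1 := cyc_sum g
  rw [← Finset.sum_filter_add_sum_filter_not _ (fun d => g.SameCycle r d)] at h1
  have e1 : (Finset.univ.filter fun d => g.SameCycle r d).card = p := by
    rw [← hr, ← Set.ncard_coe_finset]; congr 1; ext; simp
  have e2 : (Finset.univ.filter fun d => ¬ g.SameCycle r d).card = 3 * k := by
    have := Finset.card_filter_add_card_filter_not (s := (Finset.univ : Finset X)) (fun d => g.SameCycle r d)
    rw [e1, Finset.card_univ, hc] at this
    omega
  rw [Finset.sum_congr rfl (g := fun _ => 1 / (p : ℚ)), Finset.sum_congr rfl (s₁ := Finset.univ.filter fun d => ¬ g.SameCycle r d) (g := fun _ => 1 / (3 : ℚ))] at h1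
  · rw [Finset.sum_const, Finset.sum_const, e1, e2] at h1
    have hp : (p : ℚ) ≠ 0 := by
      have : 0 < p := by rw [← hr]; exact (Set.ncard_pos (Set.toFinite _)).2 ⟨r, SameCycle.refl _ _⟩
      positivity
    simp only [nsmul_eq_mul] at h1
    rw [mul_one_div_cancel hp] at h1
    push_cast at h1
    have : (cyc g : ℚ) = ((k + 1 : ℕ) : ℚ) := by rw [h1]; push_cast; ring
    exact_mod_cast this
  · intro x hx
    rw [h x (Finset.mem_filter.1 hx).2]; norm_num
  · intro x hx
    have hx := (Finset.mem_filter.1 hx).2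
    rw [← hr]
    congr 3
    ext y
    exact ⟨fun h => hx.trans h, fun h => hx.symm.trans h⟩

theorem cyc_invol {a : Perm X} (h1 : ∀ d, a d ≠ d) (h2 : ∀ d, a (a d) = d) {E : ℕ}
    (hc : Fintype.card X = 2 * E) : cyc a = E := by
  have h := cyc_sum a
  rw [Finset.sum_congr rfl (g := fun _ => 1 / (2 : ℚ))] at h
  · rw [Finset.sum_const, Finset.card_univ, hc] at h
    have : (cyc a : ℚ) = (E : ℚ) := by rw [h]; simp; field_simp
    exact_mod_cast this
  · intro x _
    obtain ⟨p, hp, h0, h3, h4⟩ := period a x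
    rw [← hp]
    have h5 : ¬ 2 < p := fun h' => h4 2 (by omega) h' (h2 x)
    interval_cases p
    · exact (h1 x h3).elim
    · norm_num

theorem numOrb (g : Perm X) : Set.ncard (Set.range fun d : X => {x | g.SameCycle d x}) = cyc g := by
  unfold cyc K
  rw [← Nat.card_coe_set_eq]
  symm
  refine Nat.card_congr (Equiv.ofBijective (Quotient.lift (fun d => (⟨{x | g.SameCycle d x}, d, rfl⟩ :
    Set.range fun d : X => {x | g.SameCycle d x})) ?_) ⟨?_, ?_⟩)
  · intro a b (hab : Jrel g 1 a b)
    rw [← sc_iff] at hab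
    ext y
    exact ⟨fun h => hab.symm.trans h, fun h => hab.trans h⟩
  · intro x y
    induction x using Quotient.inductionOn
    induction y using Quotient.inductionOn
    rename_i a b
    intro h
    apply Quotient.sound
    change Jrel g 1 a b
    rw [← sc_iff]
    have h := congrArg Subtype.val h
    change {x | g.SameCycle a x} = {x | g.SameCycle b x} at h
    have : b ∈ {x | g.SameCycle a x} := by rw [h]; exact SameCycle.refl _ _
    exact this
  · rintro ⟨_, d, rfl⟩
    exact ⟨Quotient.mk _ d, rfl⟩

theorem conn_iff (s a : Perm X) (d d' : X) :
    (∃ g ∈ Subgroup.closure ({s, a} : Set (Perm X)), g d = d') ↔ Jrel s a d d' := by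
  constructor
  · rintro ⟨g, hg, rfl⟩ S hS
    suffices ∀ d, S (g d) ↔ S d from (this d).symm
    induction hg using Subgroup.closure_induction with
    | mem x hx =>
      rcases hx with rfl | rfl
      · exact hS.1
      · exact hS.2
    | one => intro d; rfl
    | mul x y _ _ hx hy => intro d; rw [mul_apply, hx, hy]
    | inv x _ hx => intro d; rw [← hx (x⁻¹ d)]; simp
  · intro h
    refine (h (fun y => ∃ g ∈ Subgroup.closure ({s, a} : Set (Perm X)), g d = y) ?_).1 ⟨1, one_mem _, rfl⟩
    have key : ∀ t ∈ ({s, a} : Set (Perm X)), ∀ y,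
        (∃ g ∈ Subgroup.closure ({s, a} : Set (Perm X)), g d = t y) ↔
        (∃ g ∈ Subgroup.closure ({s, a} : Set (Perm X)), g d = y) := by
      intro t ht y
      have ht := Subgroup.subset_closure ht
      constructor
      · rintro ⟨g, hg, e⟩
        exact ⟨t⁻¹ * g, mul_mem (inv_mem ht) hg, by simp [e]⟩
      · rintro ⟨g, hg, e⟩
        exact ⟨t * g, mul_mem ht hg, by simp [e]⟩
    exact ⟨key s (by simp), key a (by simp)⟩
end cyc

section twoconn
variable {X : Type} [Fintype X] [DecidableEq X]

def TwoConn (s a : Perm X) : Prop := ∀ v d d', ¬ s.SameCycle v d → ¬ s.SameCycle v d' →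
    Relation.ReflTransGen
      (fun x y => ¬ s.SameCycle v x ∧ ¬ s.SameCycle v y ∧ (y = s x ∨ y = a x)) d d'

theorem bdry_of_two {M : PMap X} (live : ∀ d, M.α d ≠ d) (inv : ∀ d, M.α (M.α d) = d)
    (noloop : ∀ d, ¬ M.σ.SameCycle d (M.α d))
    (planar : cyc M.σ + cyc M.α + cyc M.φ = Nat.card X + 2 * K M.σ M.α)
    (two : TwoConn M.σ M.α) : M.Bdry := by
  intro a b ha hb hs
  by_contra hne
  have hφ : M.φ.SameCycle a b := ha.symm.trans hb
  have c1 := cyc_swap' hne hs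
  have c2 := cyc_swap' hne hφ
  have g := genus (swap a b * M.σ) M.α inv
  rw [mul_assoc] at g
  change _ + _ + cyc (swap a b * M.φ) ≤ _ at g
  have m := (mergeAt_swap' hne hs).mono M.α
  have nJ : ¬ Jrel (swap a b * M.σ) M.α a b := by
    intro h
    have := m.K_eq_same h
    omega
  apply nJ
  have n1 : ¬ M.σ.SameCycle a (M.α a) := noloop a
  have n2 : ¬ M.σ.SameCycle a (M.α b) := fun h => noloop b (hs.symm.trans h)
  have path := two a _ _ n1 n2
  have : ∀ x y, Relation.ReflTransGen
      (fun x y => ¬ M.σ.SameCycle a x ∧ ¬ M.σ.SameCycle a y ∧ (y = M.σ x ∨ y = M.α x)) x y →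
      Jrel (swap a b * M.σ) M.α x y := by
    intro x y h
    induction h with
    | refl => exact Jrel.refl _ _ _
    | @tail y z _ h ih =>
      obtain ⟨-, h2, h3⟩ := h
      intro S hS
      rw [ih S hS]
      rcases h3 with rfl | rfl
      · have := hS.1 y
        rw [mul_apply, swap_apply_of_ne_of_ne] at this
        · exact this.symm
        · intro e; rw [e] at h2; exact h2 (SameCycle.refl _ _)
        · intro e; rw [e] at h2; exact h2 hs
      · exact (hS.2 y).symm
  have := this _ _ path
  intro S hS
  have := this S hS
  rw [hS.2, hS.2] at this
  exact this

theorem two_of_bdry {M : PMap X} (live : ∀ d, M.α d ≠ d) (g : M.Good) : TwoConn M.σ M.α := by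
  intro v d d' hd hd'
  have p := g.1
  set R := (fun x y => ¬ M.σ.SameCycle v x ∧ ¬ M.σ.SameCycle v y ∧ (y = M.σ x ∨ y = M.α x)) with hR
  set S : X → Prop := fun x => Relation.ReflTransGen R d x with hSdef
  have nv : ∀ {x y}, M.σ.SameCycle x y → (M.σ.SameCycle v x ↔ M.σ.SameCycle v y) :=
    fun h => ⟨fun h' => h'.trans h, fun h' => h'.trans h.symm⟩
  have Sσ : ∀ x y, M.σ.SameCycle x y → ¬ M.σ.SameCycle v x → (S x → S y) := by
    intro x y h hx hS
    refine (sc_forward h (fun z => ¬ M.σ.SameCycle v z ∧ S z) ?_ ⟨hx, hS⟩).2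
    rintro z ⟨h1, h2⟩
    have h3 : ¬ M.σ.SameCycle v (M.σ z) := fun h => h1 ((nv (sc_one _ _)).2 h)
    exact ⟨h3, h2.tail ⟨h1, h3, Or.inl rfl⟩⟩
  have Sα : ∀ x, ¬ M.σ.SameCycle v x → ¬ M.σ.SameCycle v (M.α x) → S x → S (M.α x) := by
    intro x h1 h2 h3
    exact h3.tail ⟨h1, h2, Or.inr rfl⟩
  have nl : ∀ x, M.σ.SameCycle v x → ¬ M.σ.SameCycle v (M.α x) := by
    intro x h h'
    exact p.noloop x (live x) (h.symm.trans h')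
  -- one step around v
  have step : ∀ x, M.σ.SameCycle v x → ¬ M.O (M.σ x) → (S (M.α x) ↔ S (M.α (M.σ x))) := by
    intro x hx hO
    have hx' : M.σ.SameCycle v (M.σ x) := (nv (sc_one _ _)).1 hx
    have t := p.tri _ (live _) hO
    have e1 : M.φ (M.α x) = M.σ x := by rw [PMap.φ_apply, p.inv]
    have e2 : M.φ (M.φ (M.σ x)) = M.α x := by
      apply M.φ.injective; rw [t, e1]
    set z := M.φ (M.σ x) with hz
    have h1 : M.σ.SameCycle (M.α (M.σ x)) z := sc_one _ _
    have h2 : M.σ.SameCycle (M.α z) (M.α x) := by rw [← e2]; exact sc_one _ _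
    have n1 := nl _ hx
    have n2 := nl _ hx'
    have n3 : ¬ M.σ.SameCycle v z := fun h => n2 ((nv h1).2 h)
    have n4 : ¬ M.σ.SameCycle v (M.α z) := fun h => n1 ((nv h2).1 h)
    constructor
    · intro h
      have h5 := Sα _ n4 (by rwa [p.inv]) (Sσ _ _ h2.symm n1 h)
      rw [p.inv] at h5
      exact Sσ _ _ h1.symm n3 h5
    · intro h
      exact Sσ _ _ h2 n4 (Sα _ n3 n4 (Sσ _ _ h1 n2 h))
  obtain ⟨w, hw, hw'⟩ : ∃ w, M.σ.SameCycle v w ∧ ∀ x, M.σ.SameCycle v x → M.O x → x = w := by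
    by_cases h : ∃ w, M.σ.SameCycle v w ∧ M.O w
    · obtain ⟨w, h1, h2⟩ := h
      exact ⟨w, h1, fun x h3 h4 => g.2 _ _ h4 h2 (h3.symm.trans h1)⟩
    · exact ⟨v, SameCycle.refl _ _, fun x h3 h4 => (h ⟨x, h3, h4⟩).elim⟩
  have cst : ∀ x, M.σ.SameCycle v x → (S (M.α x) ↔ S (M.α w)) := by
    intro x hx
    refine (sc_forward (hw.symm.trans hx) (fun x => M.σ.SameCycle v x ∧ (S (M.α x) ↔ S (M.α w))) ?_ ⟨hw, Iff.rfl⟩).2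
    rintro y ⟨h1, h2⟩
    have h3 : M.σ.SameCycle v (M.σ y) := (nv (sc_one _ _)).1 h1
    refine ⟨h3, ?_⟩
    by_cases h4 : M.σ y = w
    · rw [h4]
    · rw [← step y h1 (fun h => h4 (hw' _ h3 h)), h2]
  -- the invariant set
  have hU : Inv M.σ M.α (fun x => (M.σ.SameCycle v x ∧ S (M.α x)) ∨ (¬ M.σ.SameCycle v x ∧ S x)) := by
    constructor
    · refine inv_of_forward (S := fun x => (M.σ.SameCycle v x ∧ S (M.α x)) ∨ (¬ M.σ.SameCycle v x ∧ S x)) ?_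
      intro x h
      have hx := nv (sc_one M.σ x)
      rcases h with ⟨h1, h2⟩ | ⟨h1, h2⟩
      · exact Or.inl ⟨hx.1 h1, (cst _ (hx.1 h1)).2 ((cst _ h1).1 h2)⟩
      · exact Or.inr ⟨fun h => h1 (hx.2 h), Sσ _ _ (sc_one _ _) h1 h2⟩
    · refine inv_of_forward (S := fun x => (M.σ.SameCycle v x ∧ S (M.α x)) ∨ (¬ M.σ.SameCycle v x ∧ S x)) ?_
      intro x h
      rcases h with ⟨h1, h2⟩ | ⟨h1, h2⟩
      · exact Or.inr ⟨nl _ h1, h2⟩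
      · by_cases h3 : M.σ.SameCycle v (M.α x)
        · refine Or.inl ⟨h3, ?_⟩
          rwa [p.inv]
        · exact Or.inr ⟨h3, Sα _ h1 h3 h2⟩
  have hf := (p.conn d' (live d') _ hU).1 ((p.conn d (live d) _ hU).2 (Or.inr ⟨hd, Relation.ReflTransGen.refl⟩))
  rcases hf with ⟨h, -⟩ | ⟨-, h⟩
  · exact (hd' h).elim
  · exact h
end twoconn
end Brown

set_option linter.unusedSectionVars false
namespace Brown
open Equiv Equiv.Perm
section trans
variable {m n : ℕ}

def toP (T : RootedMapData m n) : PMap (Fin (2 * (3 * n + 2 * m + 1))) := ⟨T.σ, T.α, T.root⟩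

theorem tri_fwd (T : RootedMapData m n) (h : IsRootedTriangulation T) :
    (toP T).Good ∧ (toP T).Num m n ∧ ∀ d, (toP T).α d ≠ d := by
  obtain ⟨live, inv, conn, nσ, ct, rt, noloop, simp', two⟩ := h
  set M := toP T with hM
  change ∀ d, M.α d ≠ d at live
  change ∀ d, M.α (M.α d) = d at inv
  change M.φ.cycleType = _ at ct
  change (M.φ.cycleOf M.r).support.card = _ at rt
  change ∀ d, ¬ M.σ.SameCycle d (M.α d) at noloop
  change TwoConn M.σ M.α at two
  have nσ : cyc M.σ = n + m + 2 := by rw [← nσ, ← numOrb]; rfl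
  have hf : ∀ d, M.φ d ≠ d := by
    intro d e
    have := sc_one M.σ (M.α d)
    rw [← PMap.φ_apply, e] at this
    exact noloop d this.symm
  have card : Fintype.card (Fin (2 * (3 * n + 2 * m + 1))) = (m + 2) + 3 * (2 * n + m) := by
    rw [Fintype.card_fin]; ring
  have c3 : ∀ d, ¬ M.φ.SameCycle M.r d → Set.ncard {y | M.φ.SameCycle d y} = 3 := by
    intro d hd
    rw [← csize hf]; exact ct_fwd hf ct rt hd
  have nr : Set.ncard {y | M.φ.SameCycle M.r y} = m + 2 := by rw [← csize hf]; exact rt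
  have nφ := cyc_tri nr c3 card
  have nα : cyc M.α = 3 * n + 2 * m + 1 := cyc_invol live inv (Fintype.card_fin _)
  have conn' : ∀ d d', Jrel M.σ M.α d d' := fun d d' => (conn_iff _ _ _ _).1 (conn d d')
  have nK : K M.σ M.α = 1 := by
    unfold K
    rw [Nat.card_eq_one_iff_unique]
    refine ⟨⟨fun a b => ?_⟩, ⟨Quotient.mk _ M.r⟩⟩
    induction a using Quotient.inductionOn
    induction b using Quotient.inductionOn
    exact Quotient.sound (conn' _ _)
  have planar : cyc M.σ + cyc M.α + cyc M.φ = Nat.card (Fin (2 * (3 * n + 2 * m + 1))) + 2 * K M.σ M.α := by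
    rw [nσ, nφ, nα, nK, Nat.card_eq_fintype_card, Fintype.card_fin]; ring
  have hb := bdry_of_two live inv noloop planar two
  refine ⟨⟨⟨inv, fun d h => (live d h).elim, live _, fun d _ => conn' _ _, fun d _ hd => csize3 (c3 d hd),
    fun d _ => noloop d, ?_, planar, fun d d' h1 h2 h3 _ _ => hb d d' h1 h2 h3⟩, hb⟩, ⟨nr, ?_⟩, live⟩
  · intro d d' _ _ h1 h2
    rcases simp' d d' h1 h2 with h | h
    · exact h.symm
    · change d' = M.α d at h
      rw [h] at h1
      exact (noloop d h1).elim
  · unfold PMap.L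
    rw [show {d | M.α d ≠ d} = Set.univ from Set.eq_univ_of_forall live, Set.ncard_univ, nσ]
    ring

theorem tri_bwd (T : RootedMapData m n) (g : (toP T).Good) (num : (toP T).Num m n)
    (live : ∀ d, (toP T).α d ≠ d) : IsRootedTriangulation T := by
  set M := toP T with hM
  have p := g.1
  have hf : ∀ d, M.φ d ≠ d := by
    intro d e
    have := sc_one M.σ (M.α d)
    rw [← PMap.φ_apply, e] at this
    exact p.noloop d (live d) this.symm
  have card : Fintype.card (Fin (2 * (3 * n + 2 * m + 1))) = (m + 2) + 3 * (2 * n + m) := by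
    rw [Fintype.card_fin]; ring
  have rt : (M.φ.cycleOf M.r).support.card = m + 2 := by rw [csize hf]; exact num.1
  refine ⟨live, p.inv, ?_, ?_, ?_, rt, ?_, ?_, two_of_bdry live g⟩
  · intro d d'
    have h1 := p.conn d (live d)
    have h2 := p.conn d' (live d')
    exact (conn_iff _ _ _ _).2 fun S hS => (h1 S hS).symm.trans (h2 S hS)
  · have h1 := num.2
    unfold PMap.L at h1
    rw [show {d | M.α d ≠ d} = Set.univ from Set.eq_univ_of_forall live, Set.ncard_univ] at h1
    have h2 := numOrb M.σ
    change numOrbits T.σ = _ at h2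
    rw [h2]; omega
  · refine ct_bwd hf rt (fun d hd => ?_) card
    rw [csize hf]
    exact csize3' hf (p.tri d (live d) hd)
  · intro d; exact p.noloop d (live d)
  · intro d d' h1 h2
    exact Or.inl (p.simp d d' (live _) (live _) h1 h2).symm

theorem mapIso_iff (T T' : RootedMapData m n) : MapIso T T' ↔ ∃ f, (toP T).map f = toP T' := by
  constructor
  · rintro ⟨f, h1, h2, h3⟩
    refine ⟨f, ?_⟩
    unfold PMap.map toP
    simp only [PMap.mk.injEq]
    refine ⟨?_, ?_, h3⟩
    · ext d; simp [mul_apply, h1]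
    · ext d; simp [mul_apply, h2]
  · rintro ⟨f, h⟩
    unfold PMap.map toP at h
    simp only [PMap.mk.injEq] at h
    obtain ⟨h1, h2, h3⟩ := h
    refine ⟨f, ?_, ?_, h3⟩
    · intro d; rw [← h1]; simp
    · intro d; rw [← h2]; simp

theorem exists_code' (T : {T : RootedMapData m n // IsRootedTriangulation T}) : ∃ c, Real c (toP T.1) :=
  exists_code _ _ (tri_fwd _ T.2).1 rfl

noncomputable def codeOf (T : {T : RootedMapData m n // IsRootedTriangulation T}) : Code :=
  (exists_code' T).choose
theorem codeOf_spec (T : {T : RootedMapData m n // IsRootedTriangulation T}) : Real (codeOf T) (toP T.1) :=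
  (exists_code' T).choose_spec

theorem code_iff (T T' : {T : RootedMapData m n // IsRootedTriangulation T}) :
    MapIso T.1 T'.1 ↔ codeOf T = codeOf T' := by
  rw [mapIso_iff]
  constructor
  · rintro ⟨f, h⟩
    have := real_map f _ _ (codeOf_spec T)
    rw [h] at this
    exact real_unique _ _ _ this (codeOf_spec T')
  · intro h
    have h1 := codeOf_spec T
    rw [h] at h1
    exact iso_of_real _ _ _ h1 (codeOf_spec T')

def Codes (m n : ℕ) : Set Code := {c | c.ok ∧ c.m = m ∧ c.n = n}

theorem codeOf_mem (T : {T : RootedMapData m n // IsRootedTriangulation T}) : codeOf T ∈ Codes m n := by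
  obtain ⟨-, h1, h2, -⟩ := real_spec _ _ (codeOf_spec T)
  have := Num_unique h1 (tri_fwd _ T.2).2.1
  exact ⟨h2, this.1, this.2⟩

theorem card_quot : Nat.card (Quot fun T T' : {T : RootedMapData m n // IsRootedTriangulation T} =>
        MapIso T.1 T'.1) = (Codes m n).ncard := by
  rw [← Nat.card_coe_set_eq]
  refine Nat.card_congr (Equiv.ofBijective (Quot.lift (fun T => (⟨codeOf T, codeOf_mem T⟩ : Codes m n)) ?_) ⟨?_, ?_⟩)
  · intro T T' h
    exact Subtype.ext ((code_iff T T').1 h)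
  · intro a b
    induction a using Quot.inductionOn
    induction b using Quot.inductionOn
    intro h
    exact Quot.sound ((code_iff _ _).2 (congrArg Subtype.val h))
  · rintro ⟨c, ok, h1, h2⟩
    obtain ⟨M, hM, hl⟩ := exists_real c ok (Finset.univ : Finset (Fin (2 * (3 * n + 2 * m + 1)))) (by
      rw [Finset.card_univ, Fintype.card_fin, h1, h2])
    obtain ⟨g, num, -⟩ := real_spec _ _ hM
    rw [h1, h2] at num
    let T : RootedMapData m n := ⟨M.σ, M.α, M.r⟩
    have hT : toP T = M := rfl
    have h : IsRootedTriangulation T := tri_bwd T g num (fun d => (hl d).2 (Finset.mem_univ _))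
    refine ⟨Quot.mk _ ⟨T, h⟩, Subtype.ext ?_⟩
    exact real_unique _ _ _ (codeOf_spec ⟨T, h⟩) hM
end trans
end Brown

set_option linter.unusedSectionVars false
namespace Brown
section count

def Code.size : Code → ℕ
  | .edge => 0
  | .wed A B => A.size + B.size + 1
  | .add T => T.size + 1

theorem size_finite (t : ℕ) : {c : Code | c.size ≤ t}.Finite := by
  have key : ∀ S : Set Code, S.Finite → (({Code.edge} ∪ Set.image2 Code.wed S S) ∪ Code.add '' S).Finite :=
    fun S hS => ((Set.finite_singleton _).union (hS.image2 _ hS)).union (hS.image _)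
  induction t with
  | zero =>
    refine (key ∅ Set.finite_empty).subset ?_
    intro c hc
    cases c with
    | edge => simp
    | wed A B => simp [Code.size] at hc
    | add T => simp [Code.size] at hc
  | succ t ih =>
    refine (key _ ih).subset ?_
    intro c hc
    cases c with
    | edge => simp
    | wed A B =>
      simp only [Code.size, Set.mem_ofPred_eq] at hc
      exact Or.inl (Or.inr ⟨A, by simp only [Set.mem_ofPred_eq]; omega, B, by simp only [Set.mem_ofPred_eq]; omega, rfl⟩)
    | add T =>
      simp only [Code.size, Set.mem_ofPred_eq] at hc
      exact Or.inr ⟨T, by simp only [Set.mem_ofPred_eq]; omega, rfl⟩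

theorem add_m {T : Code} (h : T.ok) (hk : 1 ≤ T.k) : T.k + 1 ≤ T.m ∧ T ≠ .edge := by
  rcases Code.k_lt h with rfl | h
  · simp [Code.k] at hk
  · refine ⟨h, ?_⟩
    rintro rfl; simp [Code.k] at hk

theorem size_eq {c : Code} (h : c.ok) : c.size = 2 * c.n + c.m := by
  induction c with
  | edge => rfl
  | wed A B ihA ihB =>
    simp only [Code.size, Code.n, Code.m, ihA h.1, ihB h.2]; ring
  | add T ih =>
    have := add_m h.1 h.2
    simp only [Code.size, Code.n, Code.m, ih h.1]; omega

theorem codes_finite (m n : ℕ) : (Codes m n).Finite := by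
  refine (size_finite (2 * n + m)).subset ?_
  rintro c ⟨h1, h2, h3⟩
  simp only [Set.mem_ofPred_eq, size_eq h1, h2, h3]; omega

noncomputable def CF (m n : ℕ) : Finset Code := (codes_finite m n).toFinset

open scoped Classical in
noncomputable def ZF (k m n : ℕ) : Finset Code := (CF m n).filter (fun c => c ≠ .edge ∧ c.k = k)

theorem mem_CF {m n : ℕ} {c : Code} : c ∈ CF m n ↔ c.ok ∧ c.m = m ∧ c.n = n := by
  unfold CF; rw [Set.Finite.mem_toFinset]; rfl
theorem mem_ZF {k m n : ℕ} {c : Code} : c ∈ ZF k m n ↔ c.ok ∧ c.m = m ∧ c.n = n ∧ c ≠ .edge ∧ c.k = k := by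
  simp only [ZF, Finset.mem_filter, mem_CF]; tauto

theorem ne_edge {c : Code} (h : 1 ≤ c.m) : c ≠ .edge := by
  rintro rfl; simp [Code.m] at h

theorem card_CF (m n : ℕ) (hm : 1 ≤ m) : (CF m n).card = ∑ k ∈ Finset.range m, (ZF k m n).card := by
  classical
  rw [Finset.card_eq_sum_card_fiberwise (f := Code.k) (t := Finset.range m)]
  · refine Finset.sum_congr rfl fun k _ => ?_
    congr 1
    ext c
    rw [Finset.mem_filter, mem_CF, mem_ZF]
    constructor
    · rintro ⟨⟨h1, h2, h3⟩, h4⟩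
      exact ⟨h1, h2, h3, ne_edge (by omega), h4⟩
    · tauto
  · intro c hc
    have hc := mem_CF.1 hc
    have := (Code.k_lt hc.1).resolve_left (ne_edge (by omega))
    simp only [Finset.coe_range, Set.mem_Iio]; omega

theorem CF_zero_zero : CF 0 0 = {.edge} := by
  ext c
  rw [mem_CF, Finset.mem_singleton]
  constructor
  · rintro ⟨h1, h2, -⟩
    rcases Code.k_lt h1 with h | h
    · exact h
    · omega
  · rintro rfl; exact ⟨trivial, rfl, rfl⟩

theorem CF_zero_succ (n : ℕ) : CF 0 (n + 1) = ∅ := by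
  ext c
  rw [mem_CF]
  simp only [Finset.notMem_empty, iff_false]
  rintro ⟨h1, h2, h3⟩
  rcases Code.k_lt h1 with rfl | h
  · simp [Code.n] at h3
  · omega

noncomputable def WF (k l n : ℕ) : Finset ((_ : ℕ × ℕ) × (Code × Code)) :=
  (Finset.HasAntidiagonal.antidiagonal n).sigma (fun p => CF k p.1 ×ˢ CF l p.2)

theorem card_WF (k l n : ℕ) : (WF k l n).card = ∑ p ∈ Finset.HasAntidiagonal.antidiagonal n, (CF k p.1).card * (CF l p.2).card := by
  unfold WF
  rw [Finset.card_sigma]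
  simp only [Finset.card_product]

theorem WF_inj (k l n : ℕ) : Set.InjOn (fun p : (_ : ℕ × ℕ) × (Code × Code) => Code.wed p.2.1 p.2.2) (WF k l n) := by
  rintro ⟨⟨a, b⟩, S, T⟩ h ⟨⟨a', b'⟩, S', T'⟩ h' e
  simp only [Finset.mem_coe, WF, Finset.mem_sigma, Finset.mem_product, mem_CF] at h h'
  simp only [Code.wed.injEq] at e
  obtain ⟨rfl, rfl⟩ := e
  obtain ⟨-, ⟨-, -, rfl⟩, ⟨-, -, rfl⟩⟩ := h
  obtain ⟨-, ⟨-, -, rfl⟩, ⟨-, -, rfl⟩⟩ := h'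
  rfl

theorem mem_WF {k l n : ℕ} {S T : Code} : (∃ p ∈ WF k l n, Code.wed p.2.1 p.2.2 = Code.wed S T) ↔
    S.ok ∧ T.ok ∧ S.m = k ∧ T.m = l ∧ S.n + T.n = n := by
  constructor
  · rintro ⟨⟨⟨a, b⟩, S', T'⟩, h, e⟩
    simp only [Code.wed.injEq] at e
    obtain ⟨rfl, rfl⟩ := e
    simp only [WF, Finset.mem_sigma, Finset.mem_product, mem_CF, Finset.HasAntidiagonal.mem_antidiagonal] at h
    obtain ⟨h0, ⟨h1, h2, h3⟩, h4, h5, h6⟩ := h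
    exact ⟨h1, h4, h2, h5, by omega⟩
  · rintro ⟨h1, h2, h3, h4, h5⟩
    refine ⟨⟨(S.n, T.n), S, T⟩, ?_, rfl⟩
    simp only [WF, Finset.mem_sigma, Finset.mem_product, mem_CF, Finset.HasAntidiagonal.mem_antidiagonal]
    exact ⟨h5, ⟨h1, h3, trivial⟩, h2, h4, trivial⟩

theorem card_ZF_zero (k l : ℕ) : (ZF k (k + l + 1) 0).card =
    ∑ p ∈ Finset.HasAntidiagonal.antidiagonal 0, (CF k p.1).card * (CF l p.2).card := by
  classical
  rw [← card_WF, ← Finset.card_image_of_injOn (WF_inj k l 0)]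
  congr 1
  ext c
  rw [mem_ZF, Finset.mem_image]
  cases c with
  | edge => simp
  | wed S T =>
    rw [mem_WF]
    simp only [Code.ok, Code.m, Code.n, Code.k]
    constructor
    · rintro ⟨⟨h1, h2⟩, h3, h4, -, h5⟩
      exact ⟨h1, h2, h5, by omega, h4⟩
    · rintro ⟨h1, h2, h3, h4, h5⟩
      exact ⟨⟨h1, h2⟩, by omega, h5, by simp, h3⟩
  | add T => simp [Code.n]

theorem card_ZF_succ (k l n : ℕ) : (ZF k (k + l + 1) (n + 1)).card =
    ∑ p ∈ Finset.HasAntidiagonal.antidiagonal (n + 1), (CF k p.1).card * (CF l p.2).card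
      + (ZF (k + 1) (k + l + 2) n).card := by
  classical
  rw [← card_WF, ← Finset.card_image_of_injOn (WF_inj k l (n + 1)),
    ← Finset.card_image_of_injective (ZF (k + 1) (k + l + 2) n) (f := Code.add) (fun a b h => by injection h),
    ← Finset.card_union_of_disjoint]
  · congr 1
    ext c
    rw [mem_ZF, Finset.mem_union, Finset.mem_image, Finset.mem_image]
    cases c with
    | edge => simp
    | wed S T =>
      rw [mem_WF]
      simp only [Code.ok, Code.m, Code.n, Code.k]
      constructor
      · rintro ⟨⟨h1, h2⟩, h3, h4, -, h5⟩
        exact Or.inl ⟨h1, h2, h5, by omega, h4⟩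
      · rintro (⟨h1, h2, h3, h4, h5⟩ | ⟨_, _, h⟩)
        · exact ⟨⟨h1, h2⟩, by omega, h5, by simp, h3⟩
        · cases h
    | add T =>
      simp only [Code.ok, Code.m, Code.n, Code.k]
      constructor
      · rintro ⟨⟨h1, h2⟩, h3, h4, -, h5⟩
        have := add_m h1 h2
        exact Or.inr ⟨T, mem_ZF.2 ⟨h1, by omega, by omega, this.2, by omega⟩, rfl⟩
      · rintro (⟨_, _, h⟩ | ⟨T', h, e⟩)
        · cases h
        · injection e with e
          subst e
          obtain ⟨h1, h2, h3, h4, h5⟩ := mem_ZF.1 h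
          exact ⟨⟨h1, by omega⟩, by omega, by omega, by simp, by omega⟩
  · rw [Finset.disjoint_left]
    intro c h1 h2
    obtain ⟨_, _, rfl⟩ := Finset.mem_image.1 h1
    obtain ⟨_, _, h⟩ := Finset.mem_image.1 h2
    cases h

open PowerSeries

noncomputable def Ts (m : ℕ) : PowerSeries ℚ := PowerSeries.mk fun n => ((CF m n).card : ℚ)
noncomputable def Zs (k m : ℕ) : PowerSeries ℚ := PowerSeries.mk fun n => ((ZF k m n).card : ℚ)

theorem Ts_zero : Ts 0 = 1 := by
  ext n
  rcases n with _ | n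
  · simp [Ts, CF_zero_zero]
  · simp [Ts, CF_zero_succ, coeff_one]

theorem Zs_rec (k l : ℕ) : Zs k (k + l + 1) = Ts k * Ts l + X * Zs (k + 1) (k + l + 2) := by
  ext n
  rw [_root_.map_add, coeff_mul]
  rcases n with _ | n
  · simp only [Zs, Ts, coeff_mk, card_ZF_zero]
    simp
  · rw [coeff_succ_X_mul]
    simp only [Zs, Ts, coeff_mk, card_ZF_succ]
    push_cast; rfl

theorem Ts_sum (m : ℕ) (hm : 1 ≤ m) : Ts m = ∑ k ∈ Finset.range m, Zs k m := by
  ext n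
  rw [map_sum]
  simp only [Ts, Zs, coeff_mk, card_CF m n hm]
  push_cast; rfl

theorem Zs_mul (k l : ℕ) : Zs k (k + l + 1) = Zs k (k + 1) * Ts l := by
  have key : ∀ n k, coeff n (Zs k (k + l + 1) - Zs k (k + 1) * Ts l) = 0 := by
    have e : ∀ k, Zs k (k + l + 1) - Zs k (k + 1) * Ts l =
        X * (Zs (k + 1) (k + 1 + l + 1) - Zs (k + 1) (k + 1 + 1) * Ts l) := by
      intro k
      have h1 := Zs_rec k l
      have h2 := Zs_rec k 0
      rw [Ts_zero] at h2
      rw [h1, show k + 1 = k + 0 + 1 from rfl, h2, show k + 0 + 1 + l + 1 = k + l + 2 by ring]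
      ring
    intro n
    induction n with
    | zero => intro k; rw [e]; simp
    | succ n ih => intro k; rw [e, coeff_succ_X_mul]; exact ih _
  have : Zs k (k + l + 1) - Zs k (k + 1) * Ts l = 0 := by ext n; simpa using key n k
  exact sub_eq_zero.1 this

theorem Ts_rec (m : ℕ) : Ts (m + 1) = ∑ p ∈ Finset.HasAntidiagonal.antidiagonal m, Ts p.1 * Ts p.2
    + X * Ts (m + 2) - X * Ts 1 * Ts (m + 1) := by
  have h1 : Ts 1 = Zs 0 1 := by rw [Ts_sum 1 le_rfl]; simp
  have h2 : Zs 0 (m + 2) = Ts 1 * Ts (m + 1) := by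
    rw [h1]
    have := Zs_mul 0 (m + 1)
    rw [show 0 + (m + 1) + 1 = m + 2 by ring] at this
    exact this
  have h3 := Ts_sum (m + 2) (by omega)
  rw [Finset.sum_range_succ', h2] at h3
  rw [Ts_sum (m + 1) (by omega), Finset.Nat.sum_antidiagonal_eq_sum_range_succ_mk]
  rw [← Ts_sum (m + 1) (by omega), mul_assoc, ← mul_assoc X, mul_assoc X, add_sub_assoc, ← mul_sub, h3, add_sub_cancel_right, Finset.mul_sum,
    ← Finset.sum_add_distrib, Ts_sum (m + 1) (by omega)]
  refine Finset.sum_congr rfl fun k hk => ?_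
  have hk := Finset.mem_range.1 hk
  have := Zs_rec k (m - k)
  rw [show k + (m - k) + 1 = m + 1 by omega, show k + (m - k) + 2 = m + 2 by omega] at this
  exact this

theorem rec_unique {S T : ℕ → PowerSeries ℚ} (hS0 : S 0 = 1) (hT0 : T 0 = 1)
    (hS : ∀ m, S (m + 1) = ∑ p ∈ Finset.HasAntidiagonal.antidiagonal m, S p.1 * S p.2
      + X * S (m + 2) - X * (S 1 * S (m + 1)))
    (hT : ∀ m, T (m + 1) = ∑ p ∈ Finset.HasAntidiagonal.antidiagonal m, T p.1 * T p.2
      + X * T (m + 2) - X * (T 1 * T (m + 1))) :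
    ∀ t m n, 2 * n + m ≤ t → coeff n (S m) = coeff n (T m) := by
  intro t
  induction t with
  | zero =>
    intro m n h
    obtain ⟨rfl, rfl⟩ : m = 0 ∧ n = 0 := by omega
    rw [hS0, hT0]
  | succ t ih =>
    intro m n h
    rcases m with _ | m
    · rw [hS0, hT0]
    rw [hS, hT, map_sub, _root_.map_add, map_sub, _root_.map_add, map_sum, map_sum]
    have e1 : ∑ p ∈ Finset.HasAntidiagonal.antidiagonal m, coeff n (S p.1 * S p.2) =
        ∑ p ∈ Finset.HasAntidiagonal.antidiagonal m, coeff n (T p.1 * T p.2) := by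
      refine Finset.sum_congr rfl fun p hp => ?_
      have hp := Finset.HasAntidiagonal.mem_antidiagonal.1 hp
      rw [coeff_mul, coeff_mul]
      refine Finset.sum_congr rfl fun q hq => ?_
      have hq := Finset.HasAntidiagonal.mem_antidiagonal.1 hq
      rw [ih _ _ (by omega), ih _ _ (by omega)]
    rw [e1]
    rcases n with _ | n
    · simp
    · rw [coeff_succ_X_mul, coeff_succ_X_mul, coeff_succ_X_mul, coeff_succ_X_mul, ih _ _ (by omega),
        coeff_mul, coeff_mul]
      congr 1
      refine Finset.sum_congr rfl fun q hq => ?_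
      have hq := Finset.HasAntidiagonal.mem_antidiagonal.1 hq
      rw [ih _ _ (by omega), ih _ _ (by omega)]
end count
end Brown

set_option linter.unusedSectionVars false
namespace Brown
section alg
open PowerSeries

def h : ℕ → ℕ → ℚ
  | 0, n => if n = 0 then 1 else 0
  | r + 1, n => (r + 1) * (Nat.factorial (4 * n + r) : ℚ) / (Nat.factorial n * Nat.factorial (3 * n + r + 1))

theorem h_zero (r : ℕ) : h r 0 = 1 := by
  rcases r with _ | r
  · simp [h]
  · simp only [h, mul_zero, zero_add, Nat.factorial_zero, Nat.cast_one, one_mul]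
    rw [Nat.factorial_succ]
    have : (Nat.factorial r : ℚ) ≠ 0 := by positivity
    push_cast
    field_simp

theorem h_succ (r n : ℕ) : h (r + 1) (n + 1) = h r (n + 1) + h (r + 4) n := by
  rcases r with _ | q
  · simp only [h]
    rw [show 4 * (n + 1) + 0 = (4 * n + 3) + 1 by ring, show 3 * (n + 1) + 0 + 1 = 3 * n + 3 + 1 by ring,
      Nat.factorial_succ (4 * n + 3), Nat.factorial_succ n]
    have h1 : (Nat.factorial n : ℚ) ≠ 0 := by positivity
    have h2 : (Nat.factorial (3 * n + 3 + 1) : ℚ) ≠ 0 := by positivity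
    push_cast
    field_simp
    norm_num
    ring
  · simp only [h]
    rw [show 4 * (n + 1) + (q + 1) = (4 * n + q + 4) + 1 by ring, show 3 * (n + 1) + (q + 1) + 1 = (3 * n + q + 4) + 1 by ring,
      show 4 * (n + 1) + q = 4 * n + q + 4 by ring, show 3 * (n + 1) + q + 1 = 3 * n + q + 4 by ring,
      show 4 * n + (q + 1 + 3) = 4 * n + q + 4 by ring, show 3 * n + (q + 1 + 3) + 1 = (3 * n + q + 4) + 1 by ring,
      Nat.factorial_succ (4 * n + q + 4), Nat.factorial_succ n, Nat.factorial_succ (3 * n + q + 4)]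
    have h1 : (Nat.factorial n : ℚ) ≠ 0 := by positivity
    have h2 : (Nat.factorial (3 * n + q + 4) : ℚ) ≠ 0 := by positivity
    push_cast
    field_simp
    ring

noncomputable def H (r : ℕ) : PowerSeries ℚ := PowerSeries.mk (h r)

theorem H_zero : H 0 = 1 := by
  ext n; simp [H, h, coeff_one]

theorem H_succ (r : ℕ) : H (r + 1) = H r + X * H (r + 4) := by
  ext n
  rw [_root_.map_add]
  rcases n with _ | n
  · simp [H, h_zero]
  · rw [coeff_succ_X_mul]; simp only [H, coeff_mk]; exact h_succ r n

theorem H_mul (r s : ℕ) : H r * H s = H (r + s) := by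
  have key : ∀ n r, coeff n (H r * H s - H (r + s)) = 0 := by
    have e : ∀ r, H (r + 1) * H s - H (r + 1 + s) = (H r * H s - H (r + s)) +
        X * (H (r + 4) * H s - H (r + 4 + s)) := by
      intro r
      rw [H_succ r, show r + 1 + s = (r + s) + 1 by ring, H_succ (r + s), show r + 4 + s = r + s + 4 by ring]
      ring
    intro n
    induction n with
    | zero =>
      intro r
      induction r with
      | zero => simp [H_zero]
      | succ r ihr => rw [e, _root_.map_add, ihr]; simp
    | succ n ih =>
      intro r
      induction r with
      | zero => simp [H_zero]
      | succ r ihr => rw [e, _root_.map_add, ihr, coeff_succ_X_mul, ih]; simp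
  have : H r * H s - H (r + s) = 0 := by ext n; simpa using key n r
  exact sub_eq_zero.1 this

theorem H_pow (r : ℕ) : H r = H 1 ^ r := by
  induction r with
  | zero => rw [H_zero, pow_zero]
  | succ r ih => rw [← H_mul, ih, pow_succ]

theorem B_eq : X * H 1 ^ 4 = H 1 - 1 := by
  have := H_succ 0
  rw [zero_add, H_zero, zero_add, H_pow 4] at this
  linear_combination - this

theorem B_ne : H 1 ≠ 0 := by
  intro h0
  have := congrArg (coeff 0) h0
  simp [H, h_zero] at this

noncomputable def Cs (m : ℕ) : PowerSeries ℚ := ((catalan m : ℕ) : PowerSeries ℚ)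

theorem cat1 (m : ℕ) : ∑ p ∈ Finset.HasAntidiagonal.antidiagonal m, Cs p.1 * Cs p.2 = Cs (m + 1) := by
  unfold Cs
  rw [catalan_succ']
  push_cast; rfl
theorem Cs0 : Cs 0 = 1 := by simp [Cs]
theorem Cs1 : Cs 1 = 1 := by simp [Cs]
theorem Cs2 : Cs 2 = 2 := by simp [Cs, catalan_two]
theorem cat2 (m : ℕ) : ∑ p ∈ Finset.HasAntidiagonal.antidiagonal m, Cs (p.1 + 1) * Cs p.2 = Cs (m + 2) - Cs (m + 1) := by
  have := cat1 (m + 1)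
  rw [Finset.Nat.sum_antidiagonal_succ] at this
  simp only [Cs0, one_mul] at this
  rw [← this]; ring
theorem cat2' (m : ℕ) : ∑ p ∈ Finset.HasAntidiagonal.antidiagonal m, Cs p.1 * Cs (p.2 + 1) = Cs (m + 2) - Cs (m + 1) := by
  have := cat1 (m + 1)
  rw [Finset.Nat.sum_antidiagonal_succ'] at this
  simp only [Cs0, mul_one] at this
  rw [← this]; ring
theorem cat3 (m : ℕ) : ∑ p ∈ Finset.HasAntidiagonal.antidiagonal m, Cs (p.1 + 1) * Cs (p.2 + 1) = Cs (m + 3) - 2 * Cs (m + 2) := by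
  have := cat2 (m + 1)
  rw [Finset.Nat.sum_antidiagonal_succ'] at this
  simp only [Cs0, mul_one] at this
  linear_combination this

noncomputable def Sol (m : ℕ) : PowerSeries ℚ :=
  H 1 ^ (2 * m) * (Cs (m + 1) - (Cs (m + 1) - Cs m) * H 1)

theorem Sol_zero : Sol 0 = 1 := by simp [Sol, Cs0, Cs1]

theorem Sol_conv (m : ℕ) : ∑ p ∈ Finset.HasAntidiagonal.antidiagonal m, Sol p.1 * Sol p.2 =
    H 1 ^ (2 * m) * ((1 - H 1) ^ 2 * (Cs (m + 3) - 2 * Cs (m + 2)) + 2 * H 1 * (1 - H 1) * (Cs (m + 2) - Cs (m + 1))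
      + H 1 ^ 2 * Cs (m + 1)) := by
  have : ∀ p ∈ Finset.HasAntidiagonal.antidiagonal m, Sol p.1 * Sol p.2 = H 1 ^ (2 * m) * ((1 - H 1) ^ 2 * (Cs (p.1 + 1) * Cs (p.2 + 1))
      + H 1 * (1 - H 1) * (Cs (p.1 + 1) * Cs p.2) + H 1 * (1 - H 1) * (Cs p.1 * Cs (p.2 + 1))
      + H 1 ^ 2 * (Cs p.1 * Cs p.2)) := by
    intro p hp
    have hp := Finset.HasAntidiagonal.mem_antidiagonal.1 hp
    rw [← hp]
    unfold Sol
    ring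
  rw [Finset.sum_congr rfl this, ← Finset.mul_sum, Finset.sum_add_distrib, Finset.sum_add_distrib, Finset.sum_add_distrib,
    ← Finset.mul_sum, ← Finset.mul_sum, ← Finset.mul_sum, ← Finset.mul_sum, cat1, cat2, cat2', cat3]
  ring

theorem Sol_rec (m : ℕ) : Sol (m + 1) = ∑ p ∈ Finset.HasAntidiagonal.antidiagonal m, Sol p.1 * Sol p.2
    + X * Sol (m + 2) - X * (Sol 1 * Sol (m + 1)) := by
  rw [Sol_conv]
  have e : H 1 ^ 2 ≠ 0 := pow_ne_zero _ B_ne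
  apply mul_left_cancel₀ e
  have e1 : H 1 ^ 2 * (X * Sol (m + 2)) = (H 1 - 1) * H 1 ^ (2 * m + 2) * (Cs (m + 3) - (Cs (m + 3) - Cs (m + 2)) * H 1) := by
    rw [← B_eq]; unfold Sol; ring
  have e2 : H 1 ^ 2 * (X * (Sol 1 * Sol (m + 1))) = (H 1 - 1) * (2 - H 1) * Sol (m + 1) := by
    rw [← B_eq]; unfold Sol; rw [Cs1, Cs2]; ring
  rw [mul_sub, mul_add, e1, e2]
  unfold Sol
  ring

theorem card_eq (m n : ℕ) : ((CF m n).card : ℚ) = (catalan (m + 1) : ℚ) * h (2 * m) n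
    - ((catalan (m + 1) : ℚ) - catalan m) * h (2 * m + 1) n := by
  have h1 := rec_unique Ts_zero Sol_zero (fun m => by rw [← mul_assoc]; exact Ts_rec m) Sol_rec _ m n le_rfl
  have h2 : Sol m = PowerSeries.C (catalan (m + 1) : ℚ) * H (2 * m)
      - PowerSeries.C ((catalan (m + 1) : ℚ) - catalan m) * H (2 * m + 1) := by
    rw [H_pow (2 * m), H_pow (2 * m + 1)]
    unfold Sol Cs
    rw [map_sub, map_natCast, map_natCast]
    ring
  rw [h2, map_sub, coeff_C_mul, coeff_C_mul] at h1
  simpa [Ts, H] using h1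

theorem cat_form (m : ℕ) : (catalan m : ℚ) = (Nat.factorial (2 * m) : ℚ) / (Nat.factorial m * Nat.factorial (m + 1)) := by
  have h1 := succ_mul_catalan_eq_centralBinom m
  have h2 : (Nat.centralBinom m : ℚ) = (Nat.factorial (2 * m) : ℚ) / (Nat.factorial m * Nat.factorial m) := by
    rw [Nat.centralBinom_eq_two_mul_choose, Nat.cast_choose ℚ (by omega)]
    rw [show 2 * m - m = m by omega]
  have h3 : ((m : ℚ) + 1) * catalan m = Nat.centralBinom m := by exact_mod_cast h1
  rw [h2] at h3
  rw [Nat.factorial_succ]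
  have : (Nat.factorial m : ℚ) ≠ 0 := by positivity
  have : (m : ℚ) + 1 ≠ 0 := by positivity
  push_cast
  field_simp at h3 ⊢
  linear_combination h3

theorem final (m n : ℕ) (hm : 1 ≤ m) : ((CF m n).card : ℚ) * ((Nat.factorial (m - 1) : ℚ) * (Nat.factorial (m + 1)) * (Nat.factorial n) *
          (Nat.factorial (3 * n + 2 * m + 1)))
    = 2 * (Nat.factorial (2 * m + 1) : ℚ) * (Nat.factorial (4 * n + 2 * m - 1)) := by
  obtain ⟨q, rfl⟩ : ∃ q, m = q + 1 := ⟨m - 1, by omega⟩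
  rw [card_eq, cat_form, cat_form, show 2 * (q + 1) + 1 = (2 * q + 2) + 1 by ring, show 2 * (q + 1) = (2 * q + 1) + 1 by ring]
  simp only [h]
  rw [show 2 * (q + 1 + 1) = 2 * q + 1 + 1 + 1 + 1 by ring, show q + 1 - 1 = q by omega,
    show 4 * n + (2 * q + 1 + 1) - 1 = 4 * n + 2 * q + 1 by omega,
    show 4 * n + (2 * q + 2) = 4 * n + 2 * q + 1 + 1 by ring,
    show 3 * n + (2 * q + 2) + 1 = 3 * n + 2 * q + 1 + 1 + 1 by ring,
    show 3 * n + (2 * q + 1) + 1 = 3 * n + 2 * q + 1 + 1 by ring,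
    show (2 * q + 2 + 1).factorial = (2 * q + 1 + 1 + 1).factorial from rfl,
    show 4 * n + (2 * q + 1) = 4 * n + 2 * q + 1 by ring]
  simp only [Nat.factorial_succ (4 * n + 2 * q + 1), Nat.factorial_succ (3 * n + 2 * q + 1 + 1),
    Nat.factorial_succ (q + 1 + 1), Nat.factorial_succ (q + 1), Nat.factorial_succ q,
    Nat.factorial_succ (2 * q + 1 + 1 + 1), Nat.factorial_succ (2 * q + 1 + 1)]
  have h1 : (Nat.factorial q : ℚ) ≠ 0 := by positivity
  have h2 : (Nat.factorial n : ℚ) ≠ 0 := by positivity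
  have h3 : (Nat.factorial (3 * n + 2 * q + 1 + 1) : ℚ) ≠ 0 := by positivity
  have h4 : (3 * n + 2 * q + 1 + 1 + 1 : ℚ) ≠ 0 := by positivity
  have h5 : (q + 1 + 1 + 1 : ℚ) ≠ 0 := by positivity
  push_cast
  field_simp
  ring
end alg
end Brown

theorem stmt_3 (m n : ℕ) (hm : 1 ≤ m) :
    (Nat.card (Quot fun T T' : {T : RootedMapData m n // IsRootedTriangulation T} =>
        MapIso T.1 T'.1) : ℚ)
      * ((Nat.factorial (m - 1) : ℚ) * (Nat.factorial (m + 1)) * (Nat.factorial n) *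
          (Nat.factorial (3 * n + 2 * m + 1)))
    = 2 * (Nat.factorial (2 * m + 1) : ℚ) * (Nat.factorial (4 * n + 2 * m - 1)) := by
  rw [Brown.card_quot]
  have h : (Brown.Codes m n).ncard = (Brown.CF m n).card :=
    Set.ncard_eq_toFinset_card _ (Brown.codes_finite m n)
  rw [h]
  exact Brown.final m n hm
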